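/- There exist constants C > 0 and Θ₀ ∈ (0,π), depending only on d and α, such that for every Θ ∈ (0,Θ₀) the following holds. Whenever β ∈ (0,α), κ ≥ 1, and M : ℝ^d → ℝ is continuous, nonnegative, M = 0 on ℝ^d∖Γ_Θ, M is twice continuously differentiable on Γ_Θ, M(rx) = r^β·M(x) for all r > 0 and x ∈ ℝ^d∖{0}, the fractional Laplacian Δ^{α/2}M(x) exists and equals 0 for every x ∈ Γ_Θ, and κ^{-1}·dist(θ, ℝ^d∖Γ_Θ)^{α/2} ≤ M(θ) ≤ κ·dist(θ, ℝ^d∖Γ_Θ)^{α/2} for all θ ∈ S^{d-1}, then |β - α + B_{d,α}·Θ^{d-1+α}| ≤ C·Θ^{d-1+α}·ω(Θ). -/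

import Mathlib

open MeasureTheory Metric Real Set Filter RealInnerProductSpace
open scoped ENNReal

noncomputable section

/-- Euclidean space ℝ^d. -/
abbrev Ed (d : ℕ) := EuclideanSpace ℝ (Fin d)

/-- The constant `A_{d,α}`. -/
noncomputable def fracConst (d : ℕ) (α : ℝ) : ℝ :=
  α * 2 ^ (α - 1) * π ^ (-(d : ℝ) / 2) * Real.Gamma (((d : ℝ) + α) / 2) / Real.Gamma (1 - α / 2)

/-- The fractional Laplacian `Δ^{α/2} Φ (x)` exists and equals `L`. -/
def fracLapAt (d : ℕ) (α : ℝ) (Φ : Ed d → ℝ) (x : Ed d) (L : ℝ) : Prop :=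
  Filter.Tendsto
    (fun ε : ℝ => fracConst d α *
      ∫ y in {y : Ed d | ε < ‖y - x‖}, (Φ y - Φ x) * ‖y - x‖ ^ (-(d : ℝ) - α))
    (nhdsWithin 0 (Set.Ioi 0)) (nhds L)

/-- The last coordinate of a vector in ℝ^d. -/
def lastCoord (d : ℕ) (x : Ed d) : ℝ :=
  if h : 0 < d then x ⟨d - 1, Nat.sub_lt h Nat.one_pos⟩ else 0

/-- The unit vector `e_d = (0,…,0,1)`. -/
def eLast (d : ℕ) : Ed d :=
  if h : 0 < d then EuclideanSpace.single ⟨d - 1, Nat.sub_lt h Nat.one_pos⟩ (1 : ℝ) else 0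

/-- The right circular cone `Γ_Θ` of angle `Θ`. -/
def cone (d : ℕ) (Θ : ℝ) : Set (Ed d) := {x | ‖x‖ * Real.cos Θ < lastCoord d x}

/-- The unit sphere `S^{d-1}` in ℝ^d. -/
def unitSphere (d : ℕ) : Set (Ed d) := Metric.sphere (0 : Ed d) 1

/-- The spherical cap `B_Θ`. -/
def capB (d : ℕ) (Θ : ℝ) : Set (Ed d) := {θ | θ ∈ unitSphere d ∧ Real.cos Θ < lastCoord d θ}

/-- The surface measure `σ`: the (d-1)-dimensional Hausdorff measure. -/
noncomputable def sphMeasure (d : ℕ) : Measure (Ed d) := μH[(d : ℝ) - 1]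

/-- The kernel `u_λ(t)`. -/
noncomputable def uKernel (d : ℕ) (α lam t : ℝ) : ℝ :=
  ∫ r in Set.Ioi (0 : ℝ), r ^ ((d : ℝ) + lam - 1) * (r ^ 2 - 2 * r * t + 1) ^ (-((d : ℝ) + α) / 2)

/-- The kernel `u_λ(t)` as a value in `[0,∞]`. -/
noncomputable def uKernelE (d : ℕ) (α lam t : ℝ) : ℝ≥0∞ :=
  ∫⁻ r in Set.Ioi (0 : ℝ),
    ENNReal.ofReal (r ^ ((d : ℝ) + lam - 1) * (r ^ 2 - 2 * r * t + 1) ^ (-((d : ℝ) + α) / 2))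

/-- The spherical fractional Laplacian `Δ_S^{α/2} φ (η)` exists and equals `L`. -/
def sphFracLapAt (d : ℕ) (α : ℝ) (φ : Ed d → ℝ) (η : Ed d) (L : ℝ) : Prop :=
  Filter.Tendsto
    (fun ε : ℝ => fracConst d α *
      ∫ θ in {θ : Ed d | θ ∈ unitSphere d ∧ ⟪θ, η⟫ ≤ Real.cos ε},
        (φ θ - φ η) * uKernel d α 0 ⟪θ, η⟫ ∂(sphMeasure d))
    (nhdsWithin 0 (Set.Ioi 0)) (nhds L)

/-- The integrand of the radial operator `R_λ`. -/
noncomputable def RopIntegrand (d : ℕ) (α lam : ℝ) (φ : Ed d → ℝ) (η θ : Ed d) : ℝ :=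
  φ θ * (uKernel d α lam ⟪θ, η⟫ - uKernel d α 0 ⟪θ, η⟫)

/-- The radial operator `R_λ φ (η)`. -/
noncomputable def Rop (d : ℕ) (α lam : ℝ) (φ : Ed d → ℝ) (η : Ed d) : ℝ :=
  fracConst d α * ∫ θ in unitSphere d, RopIntegrand d α lam φ η θ ∂(sphMeasure d)

/-- The modulus `ω`. -/
noncomputable def omegaFn (α Θ : ℝ) : ℝ :=
  if α < 1 then Θ ^ α else if α = 1 then Θ * |Real.log Θ| else Θ

/-- The Euler beta function. -/
noncomputable def eulerBeta (a b : ℝ) : ℝ := Real.Gamma a * Real.Gamma b / Real.Gamma (a + b)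

/-- The constant `B_{d,α}`. -/
noncomputable def Bconst (d : ℕ) (α : ℝ) : ℝ :=
  Real.Gamma (((d : ℝ) + α) / 2) / (π ^ ((3 : ℝ) / 2) * Real.Gamma (((d : ℝ) - 1 + α) / 2)) *
    Real.sin (π * α / 2) * eulerBeta (1 + α / 2) (((d : ℝ) - 1) / 2)

/-- The constant `C_{d-1,α}`. -/
noncomputable def Cexit (d : ℕ) (α : ℝ) : ℝ :=
  Real.Gamma (((d : ℝ) - 1) / 2) /
    (2 ^ α * Real.Gamma (((d : ℝ) - 1 + α) / 2) * Real.Gamma (1 + α / 2))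

/-- The constant `C̃_{d,α}`. -/
noncomputable def Ctilde (d : ℕ) (α : ℝ) : ℝ :=
  π ^ (((d : ℝ) - 1) / 2) / Real.Gamma (((d : ℝ) - 1) / 2) * Cexit d α *
    eulerBeta (1 + α / 2) (((d : ℝ) - 1) / 2)

/-- The norm `|ỹ|` of the first `d-1` coordinates of `y`. -/
noncomputable def tnorm (d : ℕ) (y : Ed d) : ℝ :=
  Real.sqrt (∑ i : Fin d, if (i : ℕ) < d - 1 then (y i) ^ 2 else 0)

/-- The function `s_ε`. -/
noncomputable def sExit (d : ℕ) (α ε : ℝ) (y : Ed d) : ℝ :=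
  Cexit d α * (max (ε ^ 2 - tnorm d y ^ 2) 0) ^ (α / 2)

/-- The cylinder `Π_ε`. -/
def cylPi (d : ℕ) (ε : ℝ) : Set (Ed d) := {y | tnorm d y < ε}

/-- The hyperplane `F = {y : y_d = 1}`. -/
def hyperF (d : ℕ) : Set (Ed d) := {y | lastCoord d y = 1}

/-- The Riesz kernel `h(y) = |y|^{α-d}`. -/
noncomputable def rieszH (d : ℕ) (α : ℝ) (y : Ed d) : ℝ := ‖y‖ ^ (α - (d : ℝ))

/-- The inversion `T x = x/|x|²`. -/
noncomputable def inversion (d : ℕ) (x : Ed d) : Ed d := (‖x‖ ^ 2)⁻¹ • x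

/-- The shifted cone `V_Θ = Γ_Θ + e_d/2`. -/
def Vcone (d : ℕ) (Θ : ℝ) : Set (Ed d) := {y | y - (1 / 2 : ℝ) • eLast d ∈ cone d Θ}

/-- The spindle `L_ε = T(V_Θ)` with `ε = tan(Θ/2)`, i.e. `Θ = 2 arctan ε`. -/
def Lspindle (d : ℕ) (ε : ℝ) : Set (Ed d) := inversion d '' Vcone d (2 * Real.arctan ε)

/-- The curvilinear projection `y* = T(e_d/2 + (Ty - e_d/2)/(2|Ty - e_d/2|))`. -/
noncomputable def ystar (d : ℕ) (y : Ed d) : Ed d :=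
  inversion d ((1 / 2 : ℝ) • eLast d +
    (2 * ‖inversion d y - (1 / 2 : ℝ) • eLast d‖)⁻¹ • (inversion d y - (1 / 2 : ℝ) • eLast d))

open scoped Classical in
/-- The function `s*_ε`. -/
noncomputable def sStar (d : ℕ) (α ε : ℝ) (y : Ed d) : ℝ :=
  if y ∈ Lspindle d ε then Cexit d α * (max (ε ^ 2 - tnorm d (ystar d y) ^ 2) 0) ^ (α / 2)
  else 0

open scoped Classical in
/-- The function `u = K(h s*_ε)`, i.e. `u(y) = s*_ε(Ty)`, `u(0) = 0`. -/
noncomputable def uFn (d : ℕ) (α ε : ℝ) (y : Ed d) : ℝ :=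
  if y = 0 then 0 else sStar d α ε (inversion d y)

/-- The spherical profile `φ_Θ`. -/
noncomputable def profileFn (d : ℕ) (α Θ : ℝ) (θ : Ed d) : ℝ :=
  2 ^ α * Cexit d α *
    (max (Real.tan (Θ / 2) ^ 2 - ‖eLast d - θ‖ ^ 2 / ‖eLast d + θ‖ ^ 2) 0) ^ (α / 2)

/-- Laplacian on ℝ^d as the sum of pure second partial derivatives. -/
noncomputable def lapE (d : ℕ) (u : Ed d → ℝ) (x : Ed d) : ℝ :=
  ∑ i : Fin d,
    iteratedFDeriv ℝ 2 u x ![EuclideanSpace.single i (1 : ℝ), EuclideanSpace.single i (1 : ℝ)]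

/-- Laplacian on ℝ^d × ℝ as the sum of the d+1 pure second partial derivatives. -/
noncomputable def lapProd (d : ℕ) (U : Ed d × ℝ → ℝ) (p : Ed d × ℝ) : ℝ :=
  (∑ i : Fin d, iteratedFDeriv ℝ 2 U p
      ![(EuclideanSpace.single i (1 : ℝ), (0 : ℝ)), (EuclideanSpace.single i (1 : ℝ), (0 : ℝ))]) +
    iteratedFDeriv ℝ 2 U p ![((0 : Ed d), (1 : ℝ)), ((0 : Ed d), (1 : ℝ))]

/-- The Poisson kernel `P_t(x)` for the upper half-space. -/
noncomputable def poissonK (d : ℕ) (t : ℝ) (x : Ed d) : ℝ :=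
  Real.Gamma (((d : ℝ) + 1) / 2) / π ^ (((d : ℝ) + 1) / 2) * t *
    (‖x‖ ^ 2 + t ^ 2) ^ (-((d : ℝ) + 1) / 2)

end

namespace NarrowCone

open scoped Topology

section BetaIntegrals

/-- The beta integral over `(0,1)`. -/
lemma beta_integral_Ioo {a b : ℝ} (ha : 0 < a) (hb : 0 < b) :
    IntegrableOn (fun x : ℝ => x ^ (a - 1) * (1 - x) ^ (b - 1)) (Ioo 0 1) ∧
      ∫ x in Ioo (0 : ℝ) 1, x ^ (a - 1) * (1 - x) ^ (b - 1) = eulerBeta a b := by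
  have hconv := Complex.betaIntegral_convergent (u := (a : ℂ)) (v := (b : ℂ))
    (by simpa using ha) (by simpa using hb)
  have hval := Complex.betaIntegral_eq_Gamma_mul_div (a : ℂ) (b : ℂ)
    (by simpa using ha) (by simpa using hb)
  have hcongr : ∀ x ∈ Ioo (0 : ℝ) 1,
      (x : ℂ) ^ ((a : ℂ) - 1) * (1 - (x : ℂ)) ^ ((b : ℂ) - 1) =
        ((x ^ (a - 1) * (1 - x) ^ (b - 1) : ℝ) : ℂ) := by
    intro x hx
    rw [Complex.ofReal_mul, Complex.ofReal_cpow hx.1.le, Complex.ofReal_cpow (by linarith [hx.2])]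
    push_cast
    rfl
  rw [intervalIntegrable_iff_integrableOn_Ioo_of_le zero_le_one] at hconv
  have hInt := (hconv.congr_fun hcongr measurableSet_Ioo)
  have hintR : IntegrableOn (fun x : ℝ => x ^ (a - 1) * (1 - x) ^ (b - 1)) (Ioo 0 1) := by
    simpa [IntegrableOn] using hInt.re
  refine ⟨hintR, ?_⟩
  rw [Complex.betaIntegral, intervalIntegral.integral_of_le zero_le_one,
    integral_Ioc_eq_integral_Ioo, setIntegral_congr_fun measurableSet_Ioo hcongr,
    integral_complex_ofReal] at hval
  rw [eulerBeta]
  have : ((a : ℂ) + b) = ((a + b : ℝ) : ℂ) := by push_cast; rfl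
  rw [this, Complex.Gamma_ofReal, Complex.Gamma_ofReal, Complex.Gamma_ofReal] at hval
  exact_mod_cast hval

/-- The beta integral over `(0,∞)`. -/
lemma beta_integral_Ioi {a b : ℝ} (ha : 0 < a) (hb : 0 < b) :
    IntegrableOn (fun y : ℝ => y ^ (a - 1) * (1 + y) ^ (-(a + b))) (Ioi 0) ∧
      ∫ y in Ioi (0 : ℝ), y ^ (a - 1) * (1 + y) ^ (-(a + b)) = eulerBeta a b := by
  have himg : (fun x : ℝ => x / (1 - x)) '' Ioo 0 1 = Ioi 0 := by
    ext y
    constructor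
    · rintro ⟨x, hx, rfl⟩
      exact div_pos hx.1 (by linarith [hx.2])
    · intro hy
      have hy : 0 < y := hy
      refine ⟨y / (1 + y), ⟨by positivity, ?_⟩, ?_⟩
      · rw [div_lt_one (by positivity)]; linarith
      · field_simp; ring
  have hder : ∀ x ∈ Ioo (0 : ℝ) 1,
      HasDerivWithinAt (fun x : ℝ => x / (1 - x)) (1 / (1 - x) ^ 2) (Ioo 0 1) x := by
    intro x hx
    have h1 : (1 - x) ≠ 0 := by linarith [hx.2]
    have := ((hasDerivAt_id x).div ((hasDerivAt_id x).const_sub 1) h1).hasDerivWithinAt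
      (s := Ioo (0 : ℝ) 1)
    refine this.congr_deriv ?_
    simp
  have hinj : InjOn (fun x : ℝ => x / (1 - x)) (Ioo 0 1) := by
    intro x hx y hy hxy
    have h1 : (1 - x) ≠ 0 := by linarith [hx.2]
    have h2 : (1 - y) ≠ 0 := by linarith [hy.2]
    simp only at hxy
    rw [div_eq_div_iff h1 h2] at hxy
    linarith
  have hcongr : ∀ x ∈ Ioo (0 : ℝ) 1, x ^ (a - 1) * (1 - x) ^ (b - 1) =
      |1 / (1 - x) ^ 2| • ((x / (1 - x)) ^ (a - 1) * (1 + x / (1 - x)) ^ (-(a + b))) := by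
    intro x hx
    have h1 : 0 < 1 - x := by linarith [hx.2]
    have h2 : 1 + x / (1 - x) = (1 - x)⁻¹ := by field_simp; ring
    rw [h2, abs_of_pos (by positivity), smul_eq_mul, div_rpow hx.1.le h1.le, inv_rpow h1.le,
      ← rpow_neg h1.le, neg_neg]
    have h3 : (1 - x) ^ (a + b) = (1 - x) ^ (a - 1) * (1 - x) ^ (b - 1) * (1 - x) ^ 2 := by
      rw [← rpow_natCast (1 - x) 2, ← rpow_add h1, ← rpow_add h1]
      congr 1; push_cast; ring
    rw [h3]
    have : (1 - x) ^ (a - 1) ≠ 0 := (rpow_pos_of_pos h1 _).ne'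
    field_simp
  obtain ⟨hi, hv⟩ := beta_integral_Ioo ha hb
  constructor
  · rw [← himg, integrableOn_image_iff_integrableOn_abs_deriv_smul measurableSet_Ioo hder hinj]
    exact hi.congr_fun hcongr measurableSet_Ioo
  · rw [← himg, integral_image_eq_integral_abs_deriv_smul measurableSet_Ioo hder hinj, ← hv]
    exact (setIntegral_congr_fun measurableSet_Ioo hcongr).symm

lemma eulerBeta_pos {a b : ℝ} (ha : 0 < a) (hb : 0 < b) : 0 < eulerBeta a b := by
  unfold eulerBeta
  exact div_pos (mul_pos (Gamma_pos_of_pos ha) (Gamma_pos_of_pos hb))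
    (Gamma_pos_of_pos (by linarith))

lemma integral_rpow_div_add {p a : ℝ} (hp : 0 < p) (hp1 : p < 1) (ha : 0 < a) :
    IntegrableOn (fun y : ℝ => y ^ (p - 1) / (y + a)) (Ioi 0) ∧
      ∫ y in Ioi (0 : ℝ), y ^ (p - 1) / (y + a) = a ^ (p - 1) * (π / sin (π * p)) := by
  obtain ⟨hi, hv⟩ := beta_integral_Ioi hp (sub_pos.2 hp1)
  have hb : eulerBeta p (1 - p) = π / sin (π * p) := by
    rw [eulerBeta, add_sub_cancel, Gamma_one, div_one, Gamma_mul_Gamma_one_sub]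
  rw [hb] at hv
  have hcongr : ∀ y ∈ Ioi (0 : ℝ), a ^ (p - 1) * (y ^ (p - 1) * (1 + y) ^ (-(p + (1 - p)))) =
      a * ((a * y) ^ (p - 1) / (a * y + a)) := by
    intro y hy
    have hy : 0 < y := hy
    rw [mul_rpow ha.le hy.le, add_sub_cancel, rpow_neg_one]
    have : a * y + a = a * (1 + y) := by ring
    rw [this]
    field_simp
  have key := integrableOn_Ioi_comp_mul_left_iff (fun y : ℝ => y ^ (p - 1) / (y + a)) 0 ha
  have key2 := integral_comp_mul_left_Ioi (fun y : ℝ => y ^ (p - 1) / (y + a)) 0 ha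
  rw [mul_zero] at key key2
  have hi2 := (hi.const_mul (a ^ (p - 1)))
  have hi3 := IntegrableOn.congr_fun hi2 hcongr measurableSet_Ioi
  constructor
  · rw [← key]
    have := Integrable.const_mul hi3 a⁻¹
    refine IntegrableOn.congr_fun this (fun y _ => ?_) measurableSet_Ioi
    field_simp
  · rw [smul_eq_mul] at key2
    have := setIntegral_congr_fun (μ := volume) measurableSet_Ioi hcongr
    rw [integral_const_mul, integral_const_mul, hv, key2] at this
    rw [this]
    field_simp

end BetaIntegrals

section PrincipalValue

lemma rpow_le_sixteen {y c : ℝ} (hy : 1 / 2 ≤ y) (hy2 : y ≤ 3 / 2) (hc : |c| ≤ 4) :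
    y ^ c ≤ 16 := by
  have hy0 : 0 < y := by linarith
  rcases le_total 0 c with h | h
  · calc y ^ c ≤ 2 ^ c := rpow_le_rpow hy0.le (by linarith) h
      _ ≤ 2 ^ (4 : ℝ) := rpow_le_rpow_of_exponent_le (by norm_num) (abs_le.1 hc).2
      _ = 16 := by norm_num
  · calc y ^ c ≤ (1 / 2) ^ c := rpow_le_rpow_of_nonpos (by norm_num) hy h
      _ = 2 ^ (-c) := by rw [one_div, inv_rpow (by norm_num), rpow_neg (by norm_num)]
      _ ≤ 2 ^ (4 : ℝ) := rpow_le_rpow_of_exponent_le (by norm_num) (by linarith [(abs_le.1 hc).1])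
      _ = 16 := by norm_num

lemma abs_one_add_rpow_sub_one_le {x c : ℝ} (hx : |x| ≤ 1 / 2) (hc : |c| ≤ 3) :
    |(1 + x) ^ c - 1| ≤ 48 * |x| := by
  have hsub : ∀ y ∈ Icc (-(1 / 2) : ℝ) (1 / 2), HasDerivWithinAt (fun y : ℝ => (1 + y) ^ c)
      (1 * c * (1 + y) ^ (c - 1)) (Icc (-(1 / 2)) (1 / 2)) y := by
    intro y hy
    exact (((hasDerivAt_id y).const_add 1).rpow_const
      (Or.inl (by simp only [id]; linarith [hy.1]))).hasDerivWithinAt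
  have hbd : ∀ y ∈ Icc (-(1 / 2) : ℝ) (1 / 2), ‖1 * c * (1 + y) ^ (c - 1)‖ ≤ 48 := by
    intro y hy
    have h0 : 0 ≤ (1 + y) ^ (c - 1) := rpow_nonneg (by linarith [hy.1]) _
    rw [one_mul, norm_mul, Real.norm_eq_abs, Real.norm_eq_abs, abs_of_nonneg h0]
    have := rpow_le_sixteen (y := 1 + y) (c := c - 1) (by linarith [hy.1]) (by linarith [hy.2])
      ((abs_sub _ _).trans (by simp; linarith))
    nlinarith [abs_nonneg c]
  have := (convex_Icc (-(1 / 2) : ℝ) (1 / 2)).norm_image_sub_le_of_norm_hasDerivWithin_le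
    hsub hbd (x := 0) (y := x) (by norm_num) (abs_le.1 hx)
  simpa using this

lemma abs_one_add_rpow_sub_linear_le {x c : ℝ} (hx : |x| ≤ 1 / 2) (hc : |c| ≤ 2) :
    |(1 + x) ^ c - 1 - c * x| ≤ 96 * x ^ 2 := by
  have hmem : ∀ y ∈ Icc (-|x|) |x|, |y| ≤ |x| := fun y hy => abs_le.2 hy
  have hsub : ∀ y ∈ Icc (-|x|) |x|, HasDerivWithinAt (fun y : ℝ => (1 + y) ^ c - 1 - c * y)
      (1 * c * (1 + y) ^ (c - 1) - c * 1) (Icc (-|x|) |x|) y := by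
    intro y hy
    have hy' := abs_le.1 ((hmem y hy).trans hx)
    exact (((((hasDerivAt_id y).const_add 1).rpow_const
      (Or.inl (by simp only [id]; linarith [hy'.1]))).sub_const 1).sub
      ((hasDerivAt_id y).const_mul c)).hasDerivWithinAt
  have hbd : ∀ y ∈ Icc (-|x|) |x|, ‖1 * c * (1 + y) ^ (c - 1) - c * 1‖ ≤ 96 * |x| := by
    intro y hy
    have h1 := abs_one_add_rpow_sub_one_le (c := c - 1) ((hmem y hy).trans hx)
      ((abs_sub _ _).trans (by simp; linarith))
    have : 1 * c * (1 + y) ^ (c - 1) - c * 1 = c * ((1 + y) ^ (c - 1) - 1) := by ring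
    rw [this, norm_mul, Real.norm_eq_abs, Real.norm_eq_abs]
    have h2 := hmem y hy
    calc |c| * |(1 + y) ^ (c - 1) - 1| ≤ 2 * (48 * |x|) := by gcongr; linarith
      _ = 96 * |x| := by ring
  have := (convex_Icc (-|x|) |x|).norm_image_sub_le_of_norm_hasDerivWithin_le
    hsub hbd (x := 0) (y := x) (by simp) (abs_le.1 le_rfl)
  simp only [add_zero, one_rpow, sub_self, mul_zero, sub_zero, Real.norm_eq_abs] at this
  calc _ ≤ _ := this
    _ = 96 * x ^ 2 := by rw [mul_assoc, abs_mul_abs_self]; ring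

lemma tendsto_integral_window {Q : ℝ → ℝ} (h : Tendsto Q atTop (𝓝 0)) (k : ℝ) :
    Tendsto (fun R => ∫ r in R..R + k, Q r) atTop (𝓝 0) := by
  rw [Metric.tendsto_atTop]
  intro ε hε
  have hk : 0 < |k| + 1 := by positivity
  obtain ⟨N, hN⟩ := (Metric.tendsto_atTop.1 h) (ε / (|k| + 1)) (by positivity)
  refine ⟨N + |k|, fun R hR => ?_⟩
  have hb : ∀ x ∈ uIoc R (R + k), ‖Q x‖ ≤ ε / (|k| + 1) := by
    intro x hx
    have hx' := hx.1
    have : N ≤ x := by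
      rcases le_total 0 k with h0 | h0
      · rw [min_eq_left (by linarith)] at hx'
        linarith [abs_nonneg k]
      · rw [min_eq_right (by linarith), ← sub_neg_eq_add, ← abs_of_nonpos h0] at hx'
        linarith
    simpa using (hN x this).le
  have := intervalIntegral.norm_integral_le_of_norm_le_const hb
  rw [dist_zero_right]
  refine this.trans_lt ?_
  rw [add_sub_cancel_left, div_mul_eq_mul_div, div_lt_iff₀ hk]
  nlinarith

/-- Principal values at infinity are invariant under translation. -/
lemma tendsto_integral_shift_sub {Q : ℝ → ℝ} (hQ : ∀ a b, IntervalIntegrable Q volume a b)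
    (h1 : Tendsto Q atTop (𝓝 0)) (h2 : Tendsto Q atBot (𝓝 0)) (k : ℝ) :
    Tendsto (fun R => (∫ r in -R..R, Q (r + k)) - ∫ r in -R..R, Q r) atTop (𝓝 0) := by
  have e : (fun R => (∫ r in -R..R, Q (r + k)) - ∫ r in -R..R, Q r) =
      fun R => (∫ r in R..R + k, Q r) + ∫ r in R..R + -k, Q (-r) := by
    ext R
    rw [intervalIntegral.integral_comp_add_right (fun r => Q r),
      intervalIntegral.integral_comp_neg (fun r => Q r)]
    have e1 := intervalIntegral.integral_add_adjacent_intervals (hQ (-R + k) (-R)) (hQ (-R) R)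
    have e2 := intervalIntegral.integral_add_adjacent_intervals (hQ (-R + k) R) (hQ R (R + k))
    rw [show -(R + -k) = -R + k by ring, ← e2, ← e1]
    ring
  rw [e]
  have := (tendsto_integral_window h1 k).add
    (tendsto_integral_window (h2.comp tendsto_neg_atTop_atBot) (-k))
  simpa using this

lemma intervalIntegrable_abs_rpow {c : ℝ} (hc : -1 < c) (a b : ℝ) :
    IntervalIntegrable (fun x : ℝ => |x| ^ c) volume a b := by
  have h0 : ∀ b : ℝ, 0 ≤ b → IntervalIntegrable (fun x : ℝ => |x| ^ c) volume 0 b := by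
    intro b hb
    refine (intervalIntegral.intervalIntegrable_rpow' hc (a := 0) (b := b)).congr ?_
    intro x hx
    rw [uIoc_of_le hb] at hx
    beta_reduce
    rw [abs_of_pos hx.1]
  have h1 : ∀ b : ℝ, IntervalIntegrable (fun x : ℝ => |x| ^ c) volume 0 b := by
    intro b
    rcases le_total 0 b with hb | hb
    · exact h0 b hb
    · have := (IntervalIntegrable.iff_comp_neg).1 (h0 (-b) (by linarith))
      simpa using this
  exact (h1 a).symm.trans (h1 b)

lemma integral_abs_rpow_symm {c b R : ℝ} (hc : 0 < c) (hR : |b| ≤ R) :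
    ∫ x in -R..R, |x - b| ^ (c - 1) = ((R - b) ^ c + (R + b) ^ c) / c := by
  have hb := abs_le.1 hR
  have h0 : ∀ B : ℝ, 0 ≤ B → ∫ x in (0 : ℝ)..B, |x| ^ (c - 1) = B ^ c / c := by
    intro B hB
    have : ∫ x in (0 : ℝ)..B, |x| ^ (c - 1) = ∫ x in (0 : ℝ)..B, x ^ (c - 1) := by
      refine intervalIntegral.integral_congr fun x hx => ?_
      rw [uIcc_of_le hB] at hx
      rw [abs_of_nonneg hx.1]
    rw [this, integral_rpow (Or.inl (by linarith))]
    simp [hc.ne']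
  rw [intervalIntegral.integral_comp_sub_right (fun x => |x| ^ (c - 1)),
    ← intervalIntegral.integral_add_adjacent_intervals
      (intervalIntegrable_abs_rpow (by linarith) (-R - b) 0)
      (intervalIntegrable_abs_rpow (by linarith) 0 (R - b)), h0 _ (by linarith)]
  have : ∫ x in (-R - b)..0, |x| ^ (c - 1) = ∫ x in (0 : ℝ)..(R + b), |x| ^ (c - 1) := by
    have := intervalIntegral.integral_comp_neg (a := 0) (b := R + b) (fun x : ℝ => |x| ^ (c - 1))
    simp only [abs_neg, neg_zero] at this
    rw [this]
    congr 1; ring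
  rw [this, h0 _ (by linarith)]
  ring

lemma tendsto_power_defect {p : ℝ} (hp : 0 < p) (hp1 : p < 1) (A b : ℝ) :
    Tendsto (fun R : ℝ => 2 * (R ^ 2 - A) ^ p - ((R - b) ^ (2 * p) + (R + b) ^ (2 * p)))
      atTop (𝓝 0) := by
  have hlim : Tendsto (fun R : ℝ => (96 * |A| + 192 * b ^ 2) * R ^ (2 * p - 2)) atTop (𝓝 0) := by
    have := (tendsto_rpow_neg_atTop (y := 2 - 2 * p) (by linarith)).const_mul
      (96 * |A| + 192 * b ^ 2)
    simpa using this
  refine squeeze_zero_norm' ?_ hlim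
  filter_upwards [eventually_ge_atTop (2 * |A| + 2 * |b| + 1)] with R hR
  have hA := abs_nonneg A
  have hb := abs_nonneg b
  have hR0 : 0 < R := by linarith
  have hR1 : 1 ≤ R := by linarith
  have x1 : |(-A / R ^ 2)| ≤ 1 / 2 := by
    rw [abs_div, abs_neg, abs_of_pos (by positivity : (0 : ℝ) < R ^ 2),
      div_le_iff₀ (by positivity)]
    nlinarith
  have x2 : |b / R| ≤ 1 / 2 := by
    rw [abs_div, abs_of_pos hR0, div_le_iff₀ hR0]; linarith
  have x3 : |-(b / R)| ≤ 1 / 2 := by rwa [abs_neg]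
  have e1 : (R ^ 2 - A) ^ p = R ^ (2 * p) * (1 + -A / R ^ 2) ^ p := by
    have : R ^ (2 * p) = (R ^ 2) ^ p := by rw [rpow_mul hR0.le]; norm_num
    rw [this, ← mul_rpow (by positivity) (by linarith [(abs_le.1 x1).1])]
    congr 1; field_simp; ring
  have e2 : (R + b) ^ (2 * p) = R ^ (2 * p) * (1 + b / R) ^ (2 * p) := by
    rw [← mul_rpow (by positivity) (by linarith [(abs_le.1 x2).1])]
    congr 1; field_simp
  have e3 : (R - b) ^ (2 * p) = R ^ (2 * p) * (1 + -(b / R)) ^ (2 * p) := by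
    rw [← mul_rpow (by positivity) (by linarith [(abs_le.1 x3).1])]
    congr 1; field_simp; ring
  have b1 := abs_one_add_rpow_sub_one_le x1 (c := p) (by rw [abs_of_pos hp]; linarith)
  have b2 := abs_one_add_rpow_sub_linear_le x2 (c := 2 * p)
    (by rw [abs_of_pos (by linarith)]; linarith)
  have b3 := abs_one_add_rpow_sub_linear_le x3 (c := 2 * p)
    (by rw [abs_of_pos (by linarith)]; linarith)
  rw [e1, e2, e3]
  set u := (1 + -A / R ^ 2) ^ p
  set v := (1 + b / R) ^ (2 * p)
  set w := (1 + -(b / R)) ^ (2 * p)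
  have e4 : R ^ (2 * p - 2) = R ^ (2 * p) / R ^ 2 := by
    rw [rpow_sub hR0]; norm_num
  have hRp : 0 < R ^ (2 * p) := rpow_pos_of_pos hR0 _
  have e5 : 2 * (R ^ (2 * p) * u) - (R ^ (2 * p) * w + R ^ (2 * p) * v) =
      R ^ (2 * p) * (2 * (u - 1) - ((v - 1 - 2 * p * (b / R)) + (w - 1 - 2 * p * -(b / R)))) := by
    ring
  rw [e5, e4, norm_mul, Real.norm_of_nonneg hRp.le, Real.norm_eq_abs]
  have e6 : |2 * (u - 1) - ((v - 1 - 2 * p * (b / R)) + (w - 1 - 2 * p * -(b / R)))| ≤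
      (96 * |A| + 192 * b ^ 2) / R ^ 2 := by
    have hA' : |(-A / R ^ 2)| = |A| / R ^ 2 := by
      rw [abs_div, abs_neg, abs_of_pos (by positivity : (0 : ℝ) < R ^ 2)]
    rw [hA'] at b1
    have e7 : (96 * |A| + 192 * b ^ 2) / R ^ 2 = 2 * (48 * (|A| / R ^ 2)) +
        (96 * (b / R) ^ 2 + 96 * (-(b / R)) ^ 2) := by
      rw [neg_sq, div_pow]; ring
    rw [e7]
    rw [abs_le] at *
    constructor <;> linarith
  calc _ ≤ R ^ (2 * p) * ((96 * |A| + 192 * b ^ 2) / R ^ 2) := by gcongr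
    _ = _ := by ring

/-- Kernel of the principal value computing the one-dimensional fractional Laplacian of a power
of a quadratic polynomial, in the variable `r = 1/t`. -/
noncomputable def quadKernel (p a b r : ℝ) : ℝ :=
  (max (r ^ 2 + 2 * b * r - a) 0) ^ p / |r| - |r| ^ (2 * p - 1)

lemma continuous_quad_div_abs {p a b : ℝ} (hp : 0 < p) (ha : 0 < a) :
    Continuous (fun r : ℝ => (max (r ^ 2 + 2 * b * r - a) 0) ^ p / |r|) := by
  rw [continuous_iff_continuousAt]
  intro r
  by_cases hr : r = 0
  · subst hr
    have : ∀ᶠ r : ℝ in 𝓝 0, r ^ 2 + 2 * b * r - a < 0 := by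
      have hc : Continuous fun r : ℝ => r ^ 2 + 2 * b * r - a := by fun_prop
      exact hc.continuousAt.eventually_lt continuousAt_const (by simpa using ha)
    have e : (fun r : ℝ => (max (r ^ 2 + 2 * b * r - a) 0) ^ p / |r|) =ᶠ[𝓝 0] fun _ => 0 := by
      filter_upwards [this] with r hr
      rw [max_eq_right hr.le, zero_rpow hp.ne', zero_div]
    exact continuousAt_const.congr e.symm
  · refine ContinuousAt.div ?_ continuous_abs.continuousAt (by simpa using hr)
    have : Continuous (fun r : ℝ => (max (r ^ 2 + 2 * b * r - a) 0) ^ p) :=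
      (Continuous.max (by fun_prop) continuous_const).rpow_const (fun _ => Or.inr hp.le)
    exact this.continuousAt

lemma intervalIntegrable_quadKernel {p a b : ℝ} (hp : 0 < p) (ha : 0 < a) (x y : ℝ) :
    IntervalIntegrable (quadKernel p a b) volume x y :=
  ((continuous_quad_div_abs hp ha).intervalIntegrable x y).sub
    (intervalIntegrable_abs_rpow (by linarith) x y)

lemma abs_quadKernel_le {p a b : ℝ} (hp : 0 < p) (hp1 : p < 1) :
    ∀ᶠ r : ℝ in atTop, |quadKernel p a b r| ≤ (48 * (2 * |b| + |a|)) * r ^ (2 * p - 2) := by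
  filter_upwards [eventually_ge_atTop (4 * |a| + 4 * |b| + 1)] with r hr
  have hA := abs_nonneg a
  have hb := abs_nonneg b
  have hr0 : 0 < r := by linarith
  have hr1 : 1 ≤ r := by linarith
  have hx' : |(2 * b * r - a) / r ^ 2| ≤ (2 * |b| + |a|) / r := by
    rw [abs_div, abs_of_pos (by positivity : (0 : ℝ) < r ^ 2), div_le_div_iff₀ (by positivity) hr0]
    have h1 : |2 * b * r - a| ≤ 2 * |b| * r + |a| := by
      refine (abs_sub _ _).trans ?_
      rw [abs_mul, abs_mul, abs_two, abs_of_pos hr0]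
    nlinarith [mul_le_mul_of_nonneg_right h1 hr0.le,
      mul_nonneg hA (mul_nonneg hr0.le (sub_nonneg.2 hr1))]
  have hx : |(2 * b * r - a) / r ^ 2| ≤ 1 / 2 := by
    refine hx'.trans ?_
    rw [div_le_iff₀ hr0]; linarith
  have hpos : 0 ≤ 1 + (2 * b * r - a) / r ^ 2 := by linarith [(abs_le.1 hx).1]
  have e : r ^ 2 + 2 * b * r - a = r ^ 2 * (1 + (2 * b * r - a) / r ^ 2) := by field_simp; ring
  have b1 := abs_one_add_rpow_sub_one_le hx (c := p) (by rw [abs_of_pos hp]; linarith)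
  have e2 : quadKernel p a b r =
      r ^ (2 * p - 1) * ((1 + (2 * b * r - a) / r ^ 2) ^ p - 1) := by
    rw [quadKernel, abs_of_pos hr0, e, max_eq_left (by positivity), mul_rpow (by positivity) hpos,
      rpow_sub_one hr0.ne']
    have : (r ^ 2) ^ p = r ^ (2 * p) := by rw [rpow_mul hr0.le]; norm_num
    rw [this]
    ring
  have e3 : r ^ (2 * p - 2) = r ^ (2 * p - 1) / r := by
    rw [← rpow_sub_one hr0.ne']; congr 1; ring
  have hrp : 0 < r ^ (2 * p - 1) := rpow_pos_of_pos hr0 _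
  rw [e2, abs_mul, abs_of_pos hrp, e3]
  calc _ ≤ r ^ (2 * p - 1) * (48 * ((2 * |b| + |a|) / r)) := by gcongr; linarith
    _ = _ := by ring

lemma tendsto_quadKernel_atTop {p a b : ℝ} (hp : 0 < p) (hp1 : p < 1) :
    Tendsto (quadKernel p a b) atTop (𝓝 0) := by
  have hlim : Tendsto (fun R : ℝ => (48 * (2 * |b| + |a|)) * R ^ (2 * p - 2)) atTop (𝓝 0) := by
    have := (tendsto_rpow_neg_atTop (y := 2 - 2 * p) (by linarith)).const_mul
      (48 * (2 * |b| + |a|))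
    simpa using this
  exact squeeze_zero_norm' (by simpa using abs_quadKernel_le hp hp1) hlim

lemma quadKernel_neg (p a b r : ℝ) : quadKernel p a b (-r) = quadKernel p a (-b) r := by
  simp only [quadKernel, abs_neg]
  congr 4; ring

lemma tendsto_quadKernel_atBot {p a b : ℝ} (hp : 0 < p) (hp1 : p < 1) :
    Tendsto (quadKernel p a b) atBot (𝓝 0) := by
  have h := (tendsto_quadKernel_atTop (a := a) (b := -b) hp hp1).comp tendsto_neg_atBot_atTop
  refine h.congr fun r => ?_
  simp [← quadKernel_neg]

lemma integral_max_rpow_div {p a Y : ℝ} (hp : 0 < p) (ha : 0 < a) (hY : 0 ≤ Y) :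
    ∫ y in (0 : ℝ)..Y, (max y 0) ^ p / (max y 0 + a) =
      Y ^ p / p - a * ∫ y in (0 : ℝ)..Y, y ^ (p - 1) / (y + a) := by
  have hi1 : IntervalIntegrable (fun y : ℝ => y ^ (p - 1)) volume 0 Y :=
    intervalIntegral.intervalIntegrable_rpow' (by linarith)
  have hi2 : IntervalIntegrable (fun y : ℝ => y ^ (p - 1) / (y + a)) volume 0 Y := by
    simp_rw [div_eq_mul_inv]
    refine hi1.mul_continuousOn ?_
    rw [uIcc_of_le hY]
    exact ContinuousOn.inv₀ (by fun_prop) (fun y hy => by linarith [hy.1])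
  have e : ∫ y in (0 : ℝ)..Y, (max y 0) ^ p / (max y 0 + a) =
      ∫ y in (0 : ℝ)..Y, (y ^ (p - 1) - a * (y ^ (p - 1) / (y + a))) := by
    refine intervalIntegral.integral_congr_ae (Eventually.of_forall fun y hy => ?_)
    rw [uIoc_of_le hY] at hy
    have hy0 := hy.1
    rw [max_eq_left hy0.le, rpow_sub_one hy0.ne']
    field_simp
    ring
  rw [e, intervalIntegral.integral_sub hi1 (hi2.const_mul a), intervalIntegral.integral_const_mul,
    integral_rpow (Or.inl (by linarith))]
  simp [hp.ne']

lemma integral_quad_div_abs {p a b R : ℝ} (hp : 0 < p) (ha : 0 < a)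
    (hR0 : 0 ≤ R) :
    ∫ r in -R..R, (max ((r - b) ^ 2 + 2 * b * (r - b) - a) 0) ^ p / |r - b| =
      ∫ y in (0 : ℝ)..(R ^ 2 - (a + b ^ 2)), (max y 0) ^ p / (max y 0 + a) := by
  set g : ℝ → ℝ := fun r => (max ((r - b) ^ 2 + 2 * b * (r - b) - a) 0) ^ p / |r - b| with hg
  have hgc : Continuous g := (continuous_quad_div_abs (b := b) hp ha).comp
    (continuous_id.sub continuous_const)
  set h : ℝ → ℝ := fun y => (max y 0) ^ p / (max y 0 + a) with hh
  have hhc : Continuous h := by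
    refine Continuous.div ?_ (by fun_prop) (fun y => by positivity)
    exact (continuous_id.max continuous_const).rpow_const (fun _ => Or.inr hp.le)
  have hneg : ∫ r in -R..0, g r = ∫ r in (0 : ℝ)..R, g (-r) := by
    rw [intervalIntegral.integral_comp_neg]; simp
  have hgn : IntervalIntegrable (fun r => g (-r)) volume 0 R :=
    (hgc.comp continuous_neg).intervalIntegrable _ _
  rw [← intervalIntegral.integral_add_adjacent_intervals (hgc.intervalIntegrable (-R) 0)
    (hgc.intervalIntegrable 0 R), hneg,
    ← intervalIntegral.integral_add hgn (hgc.intervalIntegrable 0 R)]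
  have e : ∫ r in (0 : ℝ)..R, (g (-r) + g r) =
      ∫ r in (0 : ℝ)..R, (h ∘ fun r => r ^ 2 - (a + b ^ 2)) r * (2 * r) := by
    refine intervalIntegral.integral_congr fun r hr => ?_
    rw [uIcc_of_le hR0] at hr
    have q1 : (-r - b) ^ 2 + 2 * b * (-r - b) - a = r ^ 2 - (a + b ^ 2) := by ring
    have q2 : (r - b) ^ 2 + 2 * b * (r - b) - a = r ^ 2 - (a + b ^ 2) := by ring
    simp only [hg, hh, Function.comp, q1, q2]
    rcases le_total (r ^ 2 - (a + b ^ 2)) 0 with hc | hc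
    · rw [max_eq_right hc, zero_rpow hp.ne']; simp
    · have hbr : |b| < r := by
        refine abs_lt_of_sq_lt_sq (by linarith) hr.1
      obtain ⟨h1, h2⟩ := abs_lt.1 hbr
      rw [max_eq_left hc, abs_of_neg (by linarith : -r - b < 0), abs_of_pos (by linarith)]
      have n1 : r + b ≠ 0 := by linarith
      have n2 : r - b ≠ 0 := by linarith
      rw [show -(-r - b) = r + b by ring,
        show r ^ 2 - (a + b ^ 2) + a = (r + b) * (r - b) by ring]
      field_simp
      ring
  rw [e, intervalIntegral.integral_comp_mul_deriv (fun r _ => ?_) (by fun_prop) hhc]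
  · rw [← intervalIntegral.integral_add_adjacent_intervals (hhc.intervalIntegrable _ 0)
      (hhc.intervalIntegrable 0 _)]
    have : ∫ y in ((0 : ℝ) ^ 2 - (a + b ^ 2))..0, h y = 0 := by
      rw [intervalIntegral.integral_congr (g := fun _ => (0 : ℝ))]
      · simp
      · intro y hy
        rw [uIcc_of_le (by nlinarith)] at hy
        simp only [hh]
        rw [max_eq_right hy.2, zero_rpow hp.ne', zero_div]
    rw [this, zero_add]
  · have := (hasDerivAt_pow 2 r).sub_const (a + b ^ 2)
    simpa using this

/-- The principal value of `quadKernel` does not depend on `b`. -/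
lemma tendsto_integral_quadKernel {p a : ℝ} (b : ℝ) (hp : 0 < p) (hp1 : p < 1) (ha : 0 < a) :
    Tendsto (fun R => ∫ r in -R..R, quadKernel p a b r) atTop
      (𝓝 (-(π / sin (π * p)) * a ^ p)) := by
  have hs := tendsto_integral_shift_sub (intervalIntegrable_quadKernel (b := b) hp ha)
    (tendsto_quadKernel_atTop hp hp1) (tendsto_quadKernel_atBot hp hp1) (-b)
  suffices h : Tendsto (fun R => ∫ r in -R..R, quadKernel p a b (r + -b)) atTop
      (𝓝 (-(π / sin (π * p)) * a ^ p)) by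
    have := h.sub hs
    simpa using this
  set A := a + b ^ 2 with hA
  have hY : Tendsto (fun R : ℝ => R ^ 2 - A) atTop atTop :=
    tendsto_atTop_add_const_right _ _ (tendsto_pow_atTop two_ne_zero)
  obtain ⟨hi, hv⟩ := integral_rpow_div_add hp hp1 ha
  have hlim := (intervalIntegral_tendsto_integral_Ioi 0 hi hY).const_mul a
  rw [hv] at hlim
  have hdef := (tendsto_power_defect hp hp1 A b).const_mul (1 / (2 * p))
  have htot := hdef.sub hlim
  have e0 : 1 / (2 * p) * 0 - a * (a ^ (p - 1) * (π / sin (π * p))) =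
      -(π / sin (π * p)) * a ^ p := by
    rw [rpow_sub_one ha.ne']; field_simp; ring
  rw [e0] at htot
  refine htot.congr' ?_
  filter_upwards [eventually_ge_atTop (A + |b| + 1)] with R hR
  have hA0 : 0 < A := by positivity
  have hR1 : 1 ≤ R := by linarith [abs_nonneg b]
  have hRA : A ≤ R ^ 2 := by nlinarith [abs_nonneg b]
  have hgi : IntervalIntegrable (fun r : ℝ => (max ((r - b) ^ 2 + 2 * b * (r - b) - a) 0) ^ p /
      |r - b|) volume (-R) R := ((continuous_quad_div_abs (b := b) hp ha).comp
    (continuous_id.sub continuous_const)).intervalIntegrable _ _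
  have hai : IntervalIntegrable (fun r : ℝ => |r - b| ^ (2 * p - 1)) volume (-R) R := by
    have := (intervalIntegrable_abs_rpow (c := 2 * p - 1) (by linarith) (-R - b)
      (R - b)).comp_sub_right b
    simpa using this
  simp only [quadKernel, ← sub_eq_add_neg]
  rw [intervalIntegral.integral_sub hgi hai, integral_quad_div_abs hp ha (by linarith),
    integral_abs_rpow_symm (c := 2 * p) (by linarith) (by linarith [abs_nonneg b]),
    integral_max_rpow_div hp ha (by linarith)]
  field_simp
  ring

end PrincipalValue

section LineKernel

/-- The profile along a line of a power of a truncated quadratic function. -/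
noncomputable def quadProfile (p q b A v : ℝ) : ℝ := (max (q + 2 * b * v - A * v ^ 2) 0) ^ p

lemma continuous_quadProfile {p q b A : ℝ} (hp : 0 < p) : Continuous (quadProfile p q b A) := by
  unfold quadProfile
  exact Continuous.rpow_const (by fun_prop) (fun _ => Or.inr hp.le)

lemma quadProfile_zero {p q b A : ℝ} (hq : 0 < q) : quadProfile p q b A 0 = q ^ p := by
  simp [quadProfile, hq.le]

lemma mul_quadProfile_inv_sub {p q b A ρ : ℝ} (hq : 0 < q) (hρ : ρ ≠ 0) :
    |ρ| ^ (2 * p - 1) * (quadProfile p q b A ρ⁻¹ - quadProfile p q b A 0) =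
      q ^ p * quadKernel p (A / q) (b / q) ρ := by
  have hρ' : 0 < |ρ| := abs_pos.2 hρ
  have h2 : 0 < |ρ| ^ 2 := by positivity
  have e1 : max (q + 2 * b * ρ⁻¹ - A * ρ⁻¹ ^ 2) 0 =
      q * max (ρ ^ 2 + 2 * (b / q) * ρ - A / q) 0 / |ρ| ^ 2 := by
    rw [mul_max_of_nonneg _ _ hq.le, ← max_div_div_right h2.le, mul_zero, zero_div, sq_abs]
    congr 1
    field_simp
  have e2 : (|ρ| ^ 2) ^ p = |ρ| ^ (2 * p - 1) * |ρ| := by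
    rw [← rpow_natCast, ← rpow_mul hρ'.le, ← rpow_add_one hρ'.ne']
    congr 1; push_cast; ring
  rw [quadProfile_zero hq, quadProfile, quadKernel, e1, div_rpow (by positivity) h2.le,
    mul_rpow hq.le (le_max_right _ _), e2]
  have : |ρ| ^ (2 * p - 1) ≠ 0 := (rpow_pos_of_pos hρ' _).ne'
  field_simp

lemma ae_mul_quadProfile_inv_sub {p q b A : ℝ} (hq : 0 < q) :
    (fun ρ : ℝ => |ρ| ^ (2 * p - 1) * (quadProfile p q b A ρ⁻¹ - quadProfile p q b A 0)) =ᵐ[volume]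
      fun ρ => q ^ p * quadKernel p (A / q) (b / q) ρ := by
  filter_upwards [compl_mem_ae_iff.2 (measure_singleton (0 : ℝ))] with ρ hρ
  exact mul_quadProfile_inv_sub hq hρ

/-- The kernel of the operator along a line, in the coordinate `ρ = 1 + 1 / σ`. -/
noncomputable def lineKernel (α δ : ℝ) (P : ℝ → ℝ) (ρ : ℝ) : ℝ :=
  (if ρ ∈ Icc (0 : ℝ) 1 then 0 else |ρ - 1| ^ (δ - 1) * |ρ| ^ (α - δ) * P ρ⁻¹) -
    |ρ - 1| ^ (α - 1) * P 0

/-- The kernel of the unperturbed operator along a line. -/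
noncomputable def lineKernelZero (α : ℝ) (P : ℝ → ℝ) (ρ : ℝ) : ℝ :=
  |ρ| ^ (α - 1) * (P ρ⁻¹ - P 0)

lemma intervalIntegrable_abs_sub_rpow {c : ℝ} (hc : -1 < c) (k a b : ℝ) :
    IntervalIntegrable (fun x : ℝ => |x - k| ^ c) volume a b := by
  simpa using (intervalIntegrable_abs_rpow hc (a - k) (b - k)).comp_sub_right k

lemma intervalIntegrable_mul_of_bound {f g : ℝ → ℝ} {a b K : ℝ}
    (hf : IntervalIntegrable f volume a b) (hg : Measurable g)
    (hK : ∀ x ∈ uIcc a b, |g x| ≤ K) : IntervalIntegrable (fun x => f x * g x) volume a b := by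
  rw [intervalIntegrable_iff] at hf ⊢
  refine hf.mul_bdd (c := K) hg.aestronglyMeasurable ?_
  filter_upwards [ae_restrict_mem measurableSet_uIoc] with x hx
  exact hK x (uIoc_subset_uIcc hx)

section

variable {α δ K : ℝ} {P : ℝ → ℝ}

lemma intervalIntegrable_lineKernelZero (hα : 0 < α) (hP : Continuous P)
    (hP0 : ∀ v, 0 ≤ P v) (hPK : ∀ v, P v ≤ K) (a b : ℝ) :
    IntervalIntegrable (lineKernelZero α P) volume a b := by
  refine intervalIntegrable_mul_of_bound (K := K) (intervalIntegrable_abs_rpow (by linarith) a b)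
    ((hP.measurable.comp measurable_inv).sub_const _) fun x _ => ?_
  rw [abs_le]
  constructor <;> linarith [hP0 x⁻¹, hP0 0, hPK x⁻¹, hPK 0]

lemma intervalIntegrable_lineKernel_aux (hδ : 0 < δ) (hδα : δ < α) (hP : Continuous P)
    (hP0 : ∀ v, 0 ≤ P v) (hPK : ∀ v, P v ≤ K) (a b : ℝ) :
    IntervalIntegrable (fun ρ => |ρ - 1| ^ (δ - 1) * (|ρ| ^ (α - δ) * P ρ⁻¹)) volume a b := by
  refine intervalIntegrable_mul_of_bound (K := (|a| + |b|) ^ (α - δ) * K)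
    (intervalIntegrable_abs_sub_rpow (by linarith) 1 a b)
    ((continuous_abs.measurable.pow_const _).mul (hP.measurable.comp measurable_inv))
    fun x hx => ?_
  rw [abs_mul, abs_of_nonneg (hP0 _), abs_of_nonneg (rpow_nonneg (abs_nonneg x) _)]
  have hxab : |x| ≤ |a| + |b| := by
    have h1 := hx.1
    have h2 := hx.2
    rw [abs_le]
    constructor
    · rcases min_choice a b with h | h <;> rw [h] at h1 <;>
        linarith [neg_abs_le a, neg_abs_le b, abs_nonneg a, abs_nonneg b]
    · rcases max_choice a b with h | h <;> rw [h] at h2 <;>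
        linarith [le_abs_self a, le_abs_self b, abs_nonneg a, abs_nonneg b]
  exact mul_le_mul (rpow_le_rpow (abs_nonneg _) hxab (by linarith)) (hPK _) (hP0 _) (by positivity)

lemma intervalIntegrable_lineKernel (hδ : 0 < δ) (hδα : δ < α) (hP : Continuous P)
    (hP0 : ∀ v, 0 ≤ P v) (hPK : ∀ v, P v ≤ K) (a b : ℝ) :
    IntervalIntegrable (lineKernel α δ P) volume a b := by
  refine IntervalIntegrable.sub ?_
    ((intervalIntegrable_abs_sub_rpow (by linarith) 1 a b).mul_const _)
  have h := intervalIntegrable_lineKernel_aux hδ hδα hP hP0 hPK a b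
  rw [intervalIntegrable_iff] at h ⊢
  refine (h.indicator (measurableSet_Icc (a := (0 : ℝ)) (b := 1)).compl).congr ?_
  refine Eventually.of_forall fun x => ?_
  by_cases hx : x ∈ Icc (0 : ℝ) 1
  · simp [indicator, hx]
  · simp only [indicator, mem_compl_iff, hx, not_false_eq_true, if_true, if_false, mul_assoc]

lemma lineKernel_sub_lineKernelZero {ρ : ℝ} (hρ : 2 ≤ |ρ|) :
    lineKernel α δ P ρ - lineKernelZero α P ρ =
      |ρ| ^ (α - 1) * (((1 + -ρ⁻¹) ^ (δ - 1) - 1) * (P ρ⁻¹ - P 0) +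
        P 0 * ((1 + -ρ⁻¹) ^ (δ - 1) - (1 + -ρ⁻¹) ^ (α - 1))) := by
  have h0 : 0 < |ρ| := by linarith
  have hne : ρ ≠ 0 := abs_pos.1 h0
  have hn : ρ ∉ Icc (0 : ℝ) 1 := fun h => by
    rw [abs_of_nonneg h.1] at hρ; linarith [h.2]
  have hinv : |ρ⁻¹| ≤ 1 / 2 := by
    rw [abs_inv, inv_le_comm₀ h0 (by norm_num)]; linarith
  have hpos : 0 ≤ 1 + -ρ⁻¹ := by linarith [(abs_le.1 hinv).2]
  have e : |ρ - 1| = |ρ| * (1 + -ρ⁻¹) := by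
    rw [← abs_of_nonneg hpos, ← abs_mul]; congr 1; field_simp; ring
  have e3 : |ρ| ^ (δ - 1) * |ρ| ^ (α - δ) = |ρ| ^ (α - 1) := by
    rw [← rpow_add h0]; congr 1; ring
  rw [lineKernel, lineKernelZero, if_neg hn, e, mul_rpow h0.le hpos, mul_rpow h0.le hpos, ← e3]
  ring

lemma abs_lineKernel_sub_le (hδ : 0 < δ) (hδα : δ < α) (hα : α < 2)
    (hP0 : ∀ v, 0 ≤ P v) (hPK : ∀ v, P v ≤ K) {ρ : ℝ} (hρ : 2 ≤ |ρ|) :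
    |lineKernel α δ P ρ - lineKernelZero α P ρ| ≤ 144 * K * |ρ| ^ (α - 2) := by
  have h0 : 0 < |ρ| := by linarith
  have hinv : |-ρ⁻¹| ≤ 1 / 2 := by
    rw [abs_neg, abs_inv, inv_le_comm₀ h0 (by norm_num)]; linarith
  have b1 := abs_one_add_rpow_sub_one_le hinv (c := δ - 1)
    (by rw [abs_le]; constructor <;> linarith)
  have b2 := abs_one_add_rpow_sub_one_le hinv (c := α - 1)
    (by rw [abs_le]; constructor <;> linarith)
  have bP : |P ρ⁻¹ - P 0| ≤ K := by
    rw [abs_le]; constructor <;> linarith [hP0 ρ⁻¹, hP0 0, hPK ρ⁻¹, hPK 0]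
  rw [lineKernel_sub_lineKernelZero hρ, abs_mul, abs_of_nonneg (rpow_nonneg h0.le _)]
  set X := (1 + -ρ⁻¹) ^ (δ - 1)
  set Y := (1 + -ρ⁻¹) ^ (α - 1)
  have t1 : |(X - 1) * (P ρ⁻¹ - P 0)| ≤ 48 * |-ρ⁻¹| * K := by
    rw [abs_mul]; exact mul_le_mul b1 bP (abs_nonneg _) (by positivity)
  have t2 : |P 0 * (X - Y)| ≤ K * (96 * |-ρ⁻¹|) := by
    rw [abs_mul, abs_of_nonneg (hP0 0)]
    refine mul_le_mul (hPK 0) ?_ (abs_nonneg _) ((hP0 0).trans (hPK 0))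
    have := abs_sub (X - 1) (Y - 1)
    rw [sub_sub_sub_cancel_right] at this
    linarith
  have t3 := abs_add_le ((X - 1) * (P ρ⁻¹ - P 0)) (P 0 * (X - Y))
  rw [abs_neg, abs_inv] at t1 t2
  have e : |ρ| ^ (α - 2) = |ρ| ^ (α - 1) * |ρ|⁻¹ := by
    rw [← rpow_neg_one |ρ|, ← rpow_add h0]; congr 1; ring
  rw [e]
  have := mul_le_mul_of_nonneg_left (t3.trans (add_le_add t1 t2)) (rpow_nonneg h0.le (α - 1))
  linarith

lemma abs_lineKernel_sub_symm_le (hδ : 0 < δ) (hδα : δ < α) (hα : α < 2)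
    (hP0 : ∀ v, 0 ≤ P v) (hPK : ∀ v, P v ≤ K) {ρ m : ℝ} (hρ : 2 ≤ ρ)
    (h1 : |P ρ⁻¹ - P 0| ≤ m) (h2 : |P (-ρ⁻¹) - P 0| ≤ m) :
    |(lineKernel α δ P ρ - lineKernelZero α P ρ) +
      (lineKernel α δ P (-ρ) - lineKernelZero α P (-ρ))| ≤
      96 * (ρ ^ (α - 2) * m) + 384 * K * ρ ^ (α - 3) := by
  have h0 : 0 < ρ := by linarith
  have hm : 0 ≤ m := (abs_nonneg _).trans h1
  have hi0 : 0 < ρ⁻¹ := by positivity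
  have hinv : |ρ⁻¹| ≤ 1 / 2 := by
    rw [abs_of_pos hi0, inv_le_comm₀ h0 (by norm_num)]; linarith
  have hinv' : |-ρ⁻¹| ≤ 1 / 2 := by rwa [abs_neg]
  have hc1 : |δ - 1| ≤ 2 := by rw [abs_le]; constructor <;> linarith
  have hc2 : |α - 1| ≤ 2 := by rw [abs_le]; constructor <;> linarith
  have a1 := abs_one_add_rpow_sub_one_le hinv (c := δ - 1) (by linarith)
  have a2 := abs_one_add_rpow_sub_one_le hinv' (c := δ - 1) (by linarith)
  have l1 := abs_one_add_rpow_sub_linear_le hinv hc1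
  have l2 := abs_one_add_rpow_sub_linear_le hinv' hc1
  have l3 := abs_one_add_rpow_sub_linear_le hinv hc2
  have l4 := abs_one_add_rpow_sub_linear_le hinv' hc2
  rw [lineKernel_sub_lineKernelZero (by rwa [abs_of_pos h0]),
    lineKernel_sub_lineKernelZero (by rwa [abs_neg, abs_of_pos h0]), abs_neg, abs_of_pos h0,
    inv_neg, neg_neg, ← mul_add, abs_mul, abs_of_pos (rpow_pos_of_pos h0 _)]
  rw [abs_neg, abs_of_pos hi0] at a2
  rw [abs_of_pos hi0] at a1
  set X := (1 + -ρ⁻¹) ^ (δ - 1)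
  set Y := (1 + -ρ⁻¹) ^ (α - 1)
  set X' := (1 + ρ⁻¹) ^ (δ - 1)
  set Y' := (1 + ρ⁻¹) ^ (α - 1)
  have t1 : |(X - 1) * (P ρ⁻¹ - P 0)| ≤ 48 * ρ⁻¹ * m := by
    rw [abs_mul]; exact mul_le_mul a2 h1 (abs_nonneg _) (by positivity)
  have t2 : |(X' - 1) * (P (-ρ⁻¹) - P 0)| ≤ 48 * ρ⁻¹ * m := by
    rw [abs_mul]; exact mul_le_mul a1 h2 (abs_nonneg _) (by positivity)
  have t3 : |P 0 * (X - Y + (X' - Y'))| ≤ K * (384 * ρ⁻¹ ^ 2) := by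
    rw [abs_mul, abs_of_nonneg (hP0 0)]
    refine mul_le_mul (hPK 0) ?_ (abs_nonneg _) ((hP0 0).trans (hPK 0))
    rw [neg_sq] at l2 l4
    rw [abs_le] at *
    constructor <;> linarith
  have t : |(X - 1) * (P ρ⁻¹ - P 0) + P 0 * (X - Y) +
      ((X' - 1) * (P (-ρ⁻¹) - P 0) + P 0 * (X' - Y'))| ≤
      96 * ρ⁻¹ * m + K * (384 * ρ⁻¹ ^ 2) := by
    rw [mul_add] at t3
    rw [abs_le] at t1 t2 t3 ⊢
    constructor <;> linarith
  have e : ρ ^ (α - 2) = ρ ^ (α - 1) * ρ⁻¹ := by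
    rw [← rpow_neg_one ρ, ← rpow_add h0]; congr 1; ring
  have e' : ρ ^ (α - 3) = ρ ^ (α - 1) * ρ⁻¹ ^ 2 := by
    rw [← rpow_neg_one ρ, ← rpow_natCast, ← rpow_mul h0.le, ← rpow_add h0]
    congr 1; push_cast; ring
  rw [e, e']
  have := mul_le_mul_of_nonneg_left t (rpow_nonneg h0.le (α - 1))
  linarith

end

end LineKernel

section LineEstimate

section

variable {α δ K : ℝ} {P : ℝ → ℝ}

/-- The singular part of the line integral. -/
noncomputable def lineMain (α δ : ℝ) (P : ℝ → ℝ) : ℝ :=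
  ∫ ρ in (1 : ℝ)..2, (ρ - 1) ^ (δ - 1) * ρ ^ (α - δ) * P ρ⁻¹

lemma abs_integral_lineKernel_near_le (hδ : 0 < δ) (hδα : δ < α) (hα : α < 2) (hP : Continuous P)
    (hP0 : ∀ v, 0 ≤ P v) (hPK : ∀ v, P v ≤ K) :
    |(∫ ρ in (-2 : ℝ)..2, (lineKernel α δ P ρ - lineKernelZero α P ρ)) - lineMain α δ P| ≤
      (72 + 18 / α) * K := by
  have hα0 : 0 < α := hδ.trans hδα
  have hK : 0 ≤ K := (hP0 0).trans (hPK 0)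
  have hInt := intervalIntegrable_lineKernel_aux hδ hδα hP hP0 hPK
  have hJ := intervalIntegrable_lineKernel hδ hδα hP hP0 hPK
  have hQ := intervalIntegrable_lineKernelZero hα0 hP hP0 hPK
  have habs := intervalIntegrable_abs_sub_rpow (c := α - 1) (by linarith) 1
  set F : ℝ → ℝ := fun ρ =>
    if ρ ∈ Icc (0 : ℝ) 1 then 0 else |ρ - 1| ^ (δ - 1) * |ρ| ^ (α - δ) * P ρ⁻¹ with hF
  have hFint : ∀ a b, IntervalIntegrable F volume a b := fun a b => by
    have := (hJ a b).add ((habs a b).mul_const (P 0))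
    refine this.congr (fun x _ => ?_)
    simp [lineKernel, hF]
  have e1 : ∫ ρ in (-2 : ℝ)..2, (lineKernel α δ P ρ - lineKernelZero α P ρ) =
      (∫ ρ in (-2 : ℝ)..2, F ρ) - (∫ ρ in (-2 : ℝ)..2, |ρ - 1| ^ (α - 1)) * P 0 -
        ∫ ρ in (-2 : ℝ)..2, lineKernelZero α P ρ := by
    rw [intervalIntegral.integral_sub (hJ _ _) (hQ _ _), ← intervalIntegral.integral_mul_const,
      ← intervalIntegral.integral_sub (hFint _ _) ((habs _ _).mul_const _)]
    rfl
  have e2 : ∫ ρ in (-2 : ℝ)..2, F ρ = (∫ ρ in (-2 : ℝ)..0, F ρ) + lineMain α δ P := by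
    rw [← intervalIntegral.integral_add_adjacent_intervals (hFint (-2) 0) (hFint 0 2),
      ← intervalIntegral.integral_add_adjacent_intervals (hFint 0 1) (hFint 1 2)]
    have z : ∫ ρ in (0 : ℝ)..1, F ρ = 0 := by
      rw [intervalIntegral.integral_congr (g := fun _ => (0 : ℝ))]
      · simp
      · intro y hy
        rw [uIcc_of_le zero_le_one] at hy
        simp only [hF, if_pos hy]
    have m : ∫ ρ in (1 : ℝ)..2, F ρ = lineMain α δ P := by
      refine intervalIntegral.integral_congr_ae (Eventually.of_forall fun y hy => ?_)
      rw [uIoc_of_le one_le_two] at hy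
      have hn : y ∉ Icc (0 : ℝ) 1 := fun h => by linarith [h.2, hy.1]
      simp only [hF, if_neg hn]
      rw [abs_of_pos (by linarith [hy.1]), abs_of_pos (by linarith [hy.1])]
    rw [z, m, zero_add]
  have b1 : |∫ ρ in (-2 : ℝ)..0, F ρ| ≤ 72 * K := by
    have := intervalIntegral.norm_integral_le_of_norm_le_const (a := (-2 : ℝ)) (b := 0) (f := F)
      (C := 36 * K) (fun x hx => ?_)
    · rw [norm_eq_abs] at this
      refine this.trans ?_
      rw [abs_of_pos (by norm_num)]; linarith
    · rw [uIoc_of_le (by norm_num)] at hx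
      rw [norm_eq_abs]
      simp only [hF]
      split_ifs with h
      · simpa using hK
      · have hx1 : |x - 1| = 1 - x := by rw [abs_of_nonpos (by linarith [hx.2])]; ring
        have hx2 : |x| ≤ 2 := by rw [abs_of_nonpos hx.2]; linarith [hx.1]
        have c1 : |x - 1| ^ (δ - 1) ≤ 9 := by
          rw [hx1]
          calc (1 - x) ^ (δ - 1) ≤ (1 - x) ^ (2 : ℝ) :=
                rpow_le_rpow_of_exponent_le (by linarith [hx.2]) (by linarith)
            _ ≤ 3 ^ (2 : ℝ) := rpow_le_rpow (by linarith [hx.2]) (by linarith [hx.1]) (by norm_num)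
            _ = 9 := by norm_num
        have c2 : |x| ^ (α - δ) ≤ 4 := by
          calc |x| ^ (α - δ) ≤ 2 ^ (α - δ) := rpow_le_rpow (abs_nonneg _) hx2 (by linarith)
            _ ≤ 2 ^ (2 : ℝ) := rpow_le_rpow_of_exponent_le (by norm_num) (by linarith)
            _ = 4 := by norm_num
        rw [abs_mul, abs_mul, abs_of_nonneg (hP0 _), abs_of_nonneg (rpow_nonneg (abs_nonneg _) _),
          abs_of_nonneg (rpow_nonneg (abs_nonneg _) _)]
        calc |x - 1| ^ (δ - 1) * |x| ^ (α - δ) * P x⁻¹ ≤ 9 * 4 * K := by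
              gcongr
              · exact hP0 _
              · exact hPK _
          _ = 36 * K := by ring
  have b2 : |(∫ ρ in (-2 : ℝ)..2, |ρ - 1| ^ (α - 1)) * P 0| ≤ 10 / α * K := by
    rw [integral_abs_rpow_symm hα0 (by norm_num), abs_mul, abs_of_nonneg (hP0 0)]
    refine mul_le_mul ?_ (hPK 0) (hP0 0) (by positivity)
    have : (2 + 1 : ℝ) ^ α ≤ 9 := by
      calc (2 + 1 : ℝ) ^ α ≤ (2 + 1) ^ (2 : ℝ) :=
            rpow_le_rpow_of_exponent_le (by norm_num) hα.le
        _ = 9 := by norm_num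
    rw [abs_of_nonneg (by positivity), show (2 - 1 : ℝ) = 1 by norm_num, one_rpow]
    gcongr
    linarith
  have b3 : |∫ ρ in (-2 : ℝ)..2, lineKernelZero α P ρ| ≤ 8 / α * K := by
    have hi := (intervalIntegrable_abs_rpow (c := α - 1) (by linarith) (-2) 2).mul_const K
    have := intervalIntegral.norm_integral_le_of_norm_le (μ := volume) (a := (-2 : ℝ)) (b := 2)
      (f := lineKernelZero α P) (by norm_num) (Eventually.of_forall fun t _ => ?_) hi
    · rw [norm_eq_abs] at this
      refine this.trans ?_
      have e := integral_abs_rpow_symm (b := 0) (R := 2) hα0 (by norm_num)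
      simp only [sub_zero, add_zero] at e
      rw [intervalIntegral.integral_mul_const, e]
      have : (2 : ℝ) ^ α ≤ 4 := by
        calc (2 : ℝ) ^ α ≤ 2 ^ (2 : ℝ) := rpow_le_rpow_of_exponent_le (by norm_num) hα.le
          _ = 4 := by norm_num
      gcongr
      linarith
    · rw [norm_eq_abs, lineKernelZero, abs_mul, abs_of_nonneg (rpow_nonneg (abs_nonneg _) _)]
      refine mul_le_mul_of_nonneg_left ?_ (rpow_nonneg (abs_nonneg _) _)
      rw [abs_le]; constructor <;> linarith [hP0 t⁻¹, hP0 0, hPK t⁻¹, hPK 0]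
  rw [e1, e2]
  have e3 : (72 + 18 / α) * K = 72 * K + 10 / α * K + 8 / α * K := by ring
  rw [e3]
  rw [abs_le] at b1 b2 b3 ⊢
  constructor <;> linarith

lemma integral_rpow_le {c A B : ℝ} (hc : c < -1) (hA : 0 < A) (hAB : A ≤ B) :
    ∫ ρ in A..B, ρ ^ c ≤ A ^ (c + 1) / (-(c + 1)) := by
  rw [integral_rpow (Or.inr ⟨by linarith, fun h => ?_⟩)]
  · have : 0 ≤ B ^ (c + 1) := rpow_nonneg (by linarith) _
    rw [div_neg, ← neg_div, div_le_div_right_of_neg (by linarith)]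
    linarith
  · rw [uIcc_of_le hAB] at h; linarith [h.1]

lemma abs_integral_lineKernel_far_le {p τ L R : ℝ} (hp : p < 1) (hp0 : 0 < p)
    (hδ : 0 < δ) (hδα : δ < 2 * p)
    (hP : Continuous P) (hP0 : ∀ v, 0 ≤ P v) (hPK : ∀ v, P v ≤ K)
    (hL : ∀ v, |P v - P 0| ≤ L * |v| ^ p) (hτ : 0 < τ) (hτ2 : τ ≤ 1 / 2) (hR : τ⁻¹ ≤ R) :
    |∫ ρ in (2 : ℝ)..R, ((lineKernel (2 * p) δ P ρ - lineKernelZero (2 * p) P ρ) +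
      (lineKernel (2 * p) δ P (-ρ) - lineKernelZero (2 * p) P (-ρ)))| ≤
      96 * K * (∫ ρ in (2 : ℝ)..τ⁻¹, ρ ^ (2 * p - 2)) + 96 * L * (τ ^ (1 - p) / (1 - p)) +
        384 / (2 - 2 * p) * K := by
  have hτi : 2 ≤ τ⁻¹ := by rw [le_inv_comm₀ (by norm_num) hτ]; linarith
  have hK : 0 ≤ K := (hP0 0).trans (hPK 0)
  have hL0 : 0 ≤ L := by
    have := (abs_nonneg _).trans (hL 1); simpa using this
  have hJ := intervalIntegrable_lineKernel hδ hδα hP hP0 hPK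
  have hQ := intervalIntegrable_lineKernelZero (α := 2 * p) (by linarith) hP hP0 hPK
  set D : ℝ → ℝ := fun ρ => lineKernel (2 * p) δ P ρ - lineKernelZero (2 * p) P ρ with hD
  have hDi : ∀ a b, IntervalIntegrable D volume a b := fun a b => (hJ a b).sub (hQ a b)
  have hSi : ∀ a b, IntervalIntegrable (fun ρ => D ρ + D (-ρ)) volume a b := fun a b =>
    (hDi a b).add (by simpa using (IntervalIntegrable.iff_comp_neg).1 (hDi (-a) (-b)))
  have hr : ∀ c a b : ℝ, 0 < a → a ≤ b → IntervalIntegrable (fun ρ : ℝ => ρ ^ c) volume a b :=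
    fun c a b ha hab => intervalIntegral.intervalIntegrable_rpow
      (Or.inr fun h => by rw [uIcc_of_le hab] at h; linarith [h.1])
  have bK : ∀ v, |P v - P 0| ≤ K := fun v => by
    rw [abs_le]; constructor <;> linarith [hP0 v, hP0 0, hPK v, hPK 0]
  have n1 : |∫ ρ in (2 : ℝ)..τ⁻¹, (D ρ + D (-ρ))| ≤
      ∫ ρ in (2 : ℝ)..τ⁻¹, (96 * K * ρ ^ (2 * p - 2) + 384 * K * ρ ^ (2 * p - 3)) := by
    rw [← norm_eq_abs]
    refine intervalIntegral.norm_integral_le_of_norm_le hτi (Eventually.of_forall fun t ht => ?_)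
      (((hr _ _ _ two_pos hτi).const_mul _).add ((hr _ _ _ two_pos hτi).const_mul _))
    refine (abs_lineKernel_sub_symm_le hδ hδα (by linarith) hP0 hPK ht.1.le (bK _)
      (bK _)).trans_eq ?_
    ring
  have n2 : |∫ ρ in τ⁻¹..R, (D ρ + D (-ρ))| ≤
      ∫ ρ in τ⁻¹..R, (96 * L * ρ ^ (p - 2) + 384 * K * ρ ^ (2 * p - 3)) := by
    have h0 : 0 < τ⁻¹ := by positivity
    rw [← norm_eq_abs]
    refine intervalIntegral.norm_integral_le_of_norm_le hR (Eventually.of_forall fun t ht => ?_)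
      (((hr _ _ _ h0 hR).const_mul _).add ((hr _ _ _ h0 hR).const_mul _))
    have ht0 : 0 < t := h0.trans ht.1
    refine (abs_lineKernel_sub_symm_le hδ hδα (by linarith) hP0 hPK (hτi.trans ht.1.le) (hL _)
      (by simpa using hL (-t⁻¹))).trans_eq ?_
    have : t ^ (p - 2) = t ^ (2 * p - 2) * |t⁻¹| ^ p := by
      rw [abs_of_pos (by positivity), inv_rpow ht0.le, ← rpow_neg ht0.le, ← rpow_add ht0]
      congr 1; ring
    rw [this]; ring
  rw [intervalIntegral.integral_add ((hr _ _ _ two_pos hτi).const_mul _)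
    ((hr _ _ _ two_pos hτi).const_mul _), intervalIntegral.integral_const_mul,
    intervalIntegral.integral_const_mul] at n1
  rw [intervalIntegral.integral_add ((hr _ _ _ (by positivity) hR).const_mul _)
    ((hr _ _ _ (by positivity) hR).const_mul _), intervalIntegral.integral_const_mul,
    intervalIntegral.integral_const_mul] at n2
  rw [← intervalIntegral.integral_add_adjacent_intervals (hSi 2 τ⁻¹) (hSi τ⁻¹ R)]
  have i1 : ∫ ρ in τ⁻¹..R, ρ ^ (p - 2) ≤ τ ^ (1 - p) / (1 - p) := by
    refine (integral_rpow_le (by linarith) (by positivity) hR).trans_eq ?_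
    rw [inv_rpow hτ.le, ← rpow_neg hτ.le]
    congr 2 <;> ring
  have i2 : (∫ ρ in (2 : ℝ)..τ⁻¹, ρ ^ (2 * p - 3)) + ∫ ρ in τ⁻¹..R, ρ ^ (2 * p - 3) ≤
      1 / (2 - 2 * p) := by
    rw [intervalIntegral.integral_add_adjacent_intervals (hr _ _ _ two_pos hτi)
      (hr _ _ _ (by positivity) hR)]
    refine (integral_rpow_le (by linarith) two_pos (hτi.trans hR)).trans ?_
    rw [show -(2 * p - 3 + 1) = 2 - 2 * p by ring]
    have : (0 : ℝ) < 2 - 2 * p := by linarith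
    gcongr
    exact rpow_le_one_of_one_le_of_nonpos one_le_two (by linarith)
  have i3 := mul_le_mul_of_nonneg_left i1 (by positivity : 0 ≤ 96 * L)
  have i4 := mul_le_mul_of_nonneg_left i2 (by positivity : 0 ≤ 384 * K)
  have i5 : 384 * K * (1 / (2 - 2 * p)) = 384 / (2 - 2 * p) * K := by ring
  refine (abs_add_le _ _).trans ?_
  linarith

/-- The error of the line integral, uniformly in the truncation. -/
lemma abs_integral_lineKernel_sub_le {p τ L R : ℝ} (hp : p < 1) (hp0 : 0 < p)
    (hδ : 0 < δ) (hδα : δ < 2 * p)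
    (hP : Continuous P) (hP0 : ∀ v, 0 ≤ P v) (hPK : ∀ v, P v ≤ K)
    (hL : ∀ v, |P v - P 0| ≤ L * |v| ^ p) (hτ : 0 < τ) (hτ2 : τ ≤ 1 / 2) (hR : τ⁻¹ ≤ R) :
    |(∫ ρ in -R..R, (lineKernel (2 * p) δ P ρ - lineKernelZero (2 * p) P ρ)) -
      lineMain (2 * p) δ P| ≤
      (72 + 18 / (2 * p) + 384 / (2 - 2 * p)) * K +
        96 * K * (∫ ρ in (2 : ℝ)..τ⁻¹, ρ ^ (2 * p - 2)) +
        96 * L * (τ ^ (1 - p) / (1 - p)) := by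
  have hJ := intervalIntegrable_lineKernel hδ hδα hP hP0 hPK
  have hQ := intervalIntegrable_lineKernelZero (α := 2 * p) (by linarith) hP hP0 hPK
  have n1 := abs_integral_lineKernel_near_le hδ hδα (by linarith) hP hP0 hPK
  have n2 := abs_integral_lineKernel_far_le hp hp0 hδ hδα hP hP0 hPK hL hτ hτ2 hR
  set D : ℝ → ℝ := fun ρ => lineKernel (2 * p) δ P ρ - lineKernelZero (2 * p) P ρ with hD
  have hDi : ∀ a b, IntervalIntegrable D volume a b := fun a b => (hJ a b).sub (hQ a b)
  have e1 : ∫ ρ in -R..-2, D ρ = ∫ ρ in (2 : ℝ)..R, D (-ρ) := by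
    rw [intervalIntegral.integral_comp_neg]
  have e2 : ∫ ρ in -R..R, D ρ =
      (∫ ρ in (-2 : ℝ)..2, D ρ) + ∫ ρ in (2 : ℝ)..R, (D ρ + D (-ρ)) := by
    rw [intervalIntegral.integral_add (hDi _ _)
      (by simpa using (IntervalIntegrable.iff_comp_neg).1 (hDi (-2) (-R))), ← e1,
      ← intervalIntegral.integral_add_adjacent_intervals (hDi (-R) (-2)) (hDi (-2) R),
      ← intervalIntegral.integral_add_adjacent_intervals (hDi (-2) 2) (hDi 2 R)]
    ring
  rw [e2]
  rw [abs_le] at n1 n2 ⊢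
  constructor <;> linarith

end

end LineEstimate

section LineSingularIntegral

/-- Restriction to a line of a function homogeneous of degree `β` supported in a cone. -/
noncomputable def lineFun (β : ℝ) (P : ℝ → ℝ) (σ : ℝ) : ℝ :=
  if 0 < 1 + σ then (1 + σ) ^ β * P (σ / (1 + σ)) else 0

lemma lineFun_zero (β : ℝ) (P : ℝ → ℝ) : lineFun β P 0 = P 0 := by simp [lineFun]

section

variable {α δ K : ℝ} {P : ℝ → ℝ}

lemma lineFun_inv_mul {r : ℝ} (hr : 0 < r) :
    (lineFun (α - δ) P r⁻¹ - P 0) * r ^ (α - 1) = lineKernel α δ P (r + 1) := by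
  have hn : r + 1 ∉ Icc (0 : ℝ) 1 := fun h => by linarith [h.2]
  have h1 : 0 < 1 + r⁻¹ := by positivity
  have e1 : 1 + r⁻¹ = (r + 1) / r := by field_simp
  have e2 : r⁻¹ / (1 + r⁻¹) = (r + 1)⁻¹ := by field_simp
  have e3 : r ^ (α - 1) = r ^ (α - δ) * r ^ (δ - 1) := by rw [← rpow_add hr]; congr 1; ring
  have e4 : r ^ (α - δ) ≠ 0 := (rpow_pos_of_pos hr _).ne'
  rw [lineFun, if_pos h1, lineKernel, if_neg hn, e2, e1, div_rpow (by positivity) hr.le,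
    add_sub_cancel_right, abs_of_pos hr, abs_of_pos (by linarith), sub_mul]
  congr 1
  · rw [e3]; field_simp
  · ring

lemma lineFun_neg_inv_mul {r : ℝ} (hr : 0 < r) :
    (lineFun (α - δ) P (-r⁻¹) - P 0) * r ^ (α - 1) = lineKernel α δ P (-r + 1) := by
  have ea : |-r + 1 - 1| = r := by rw [add_sub_cancel_right, abs_neg, abs_of_pos hr]
  rcases le_or_gt r 1 with h | h
  · have hn : -r + 1 ∈ Icc (0 : ℝ) 1 := ⟨by linarith, by linarith⟩
    have h1 : ¬ 0 < 1 + -r⁻¹ := by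
      have := (one_le_inv₀ hr).2 h; linarith
    rw [lineFun, if_neg h1, lineKernel, if_pos hn, ea]
    ring
  have hn : -r + 1 ∉ Icc (0 : ℝ) 1 := fun h' => by linarith [h'.1]
  have h1 : 0 < 1 + -r⁻¹ := by
    have := inv_lt_one_of_one_lt₀ h; linarith
  have hr1 : 0 < r - 1 := by linarith
  have e1 : 1 + -r⁻¹ = (r - 1) / r := by field_simp; ring
  have e2 : -r⁻¹ / (1 + -r⁻¹) = (-r + 1)⁻¹ := by
    rw [e1, show -r + 1 = -(r - 1) by ring, inv_neg]; field_simp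
  have e3 : r ^ (α - 1) = r ^ (α - δ) * r ^ (δ - 1) := by rw [← rpow_add hr]; congr 1; ring
  have e4 : r ^ (α - δ) ≠ 0 := (rpow_pos_of_pos hr _).ne'
  have e5 : |-r + 1| = r - 1 := by rw [abs_of_neg (by linarith)]; ring
  rw [lineFun, if_pos h1, lineKernel, if_neg hn, e2, e1, div_rpow hr1.le hr.le, ea, e5, sub_mul]
  congr 1
  · rw [e3]; field_simp
  · ring

lemma tendsto_lineKernel {p q b A : ℝ} (hp : p < 1) (hδ : 0 < δ)
    (hδα : δ < 2 * p) (hq : 0 < q) {K : ℝ}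
    (hPK : ∀ v, quadProfile p q b A v ≤ K) {l : Filter ℝ} (hl : Tendsto (fun ρ : ℝ => |ρ|) l atTop)
    (hk : Tendsto (quadKernel p (A / q) (b / q)) l (𝓝 0)) :
    Tendsto (lineKernel (2 * p) δ (quadProfile p q b A)) l (𝓝 0) := by
  have hP0 : ∀ v, 0 ≤ quadProfile p q b A v := fun v => rpow_nonneg (le_max_right _ _) _
  have h1 : Tendsto (fun ρ => lineKernel (2 * p) δ (quadProfile p q b A) ρ -
      lineKernelZero (2 * p) (quadProfile p q b A) ρ) l (𝓝 0) := by
    have hz : Tendsto (fun ρ : ℝ => 144 * K * |ρ| ^ (2 * p - 2)) l (𝓝 0) := by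
      have := ((tendsto_rpow_neg_atTop (y := 2 - 2 * p) (by linarith)).comp hl).const_mul (144 * K)
      simpa [Function.comp_def, neg_sub] using this
    refine squeeze_zero_norm' ?_ hz
    filter_upwards [hl.eventually_ge_atTop 2] with ρ hρ
    exact abs_lineKernel_sub_le hδ hδα (by linarith) hP0 hPK hρ
  have h2 : Tendsto (lineKernelZero (2 * p) (quadProfile p q b A)) l (𝓝 0) := by
    have := hk.const_mul (q ^ p)
    rw [mul_zero] at this
    refine this.congr' ?_
    filter_upwards [hl.eventually_gt_atTop 0] with ρ hρ
    exact (mul_quadProfile_inv_sub hq (abs_pos.1 hρ)).symm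
  simpa using h1.add h2

/-- The singular integral of the restriction of a homogeneous function to a line. -/
lemma abs_integral_lineFun_add_le {p q b A τ L : ℝ} (hp0 : 0 < p) (hp : p < 1) (hδ : 0 < δ)
    (hδα : δ < 2 * p) (hq : 0 < q) (hA : 0 < A) {K : ℝ}
    (hPK : ∀ v, quadProfile p q b A v ≤ K)
    (hL : ∀ v, |quadProfile p q b A v - quadProfile p q b A 0| ≤ L * |v| ^ p)
    (hτ : 0 < τ) (hτ2 : τ ≤ 1 / 2)
    (hInt : IntegrableOn (fun σ => (lineFun (2 * p - δ) (quadProfile p q b A) σ +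
      lineFun (2 * p - δ) (quadProfile p q b A) (-σ) -
      2 * lineFun (2 * p - δ) (quadProfile p q b A) 0) * σ ^ (-1 - 2 * p)) (Ioi 0)) :
    |(∫ σ in Ioi (0 : ℝ), (lineFun (2 * p - δ) (quadProfile p q b A) σ +
      lineFun (2 * p - δ) (quadProfile p q b A) (-σ) -
      2 * lineFun (2 * p - δ) (quadProfile p q b A) 0) * σ ^ (-1 - 2 * p)) +
      π / sin (π * p) * A ^ p - lineMain (2 * p) δ (quadProfile p q b A)| ≤
      (72 + 18 / (2 * p) + 384 / (2 - 2 * p)) * K +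
        96 * K * (∫ ρ in (2 : ℝ)..τ⁻¹, ρ ^ (2 * p - 2)) +
        96 * L * (τ ^ (1 - p) / (1 - p)) := by
  have hP0 : ∀ v, 0 ≤ quadProfile p q b A v := fun v => rpow_nonneg (le_max_right _ _) _
  have hPc : Continuous (quadProfile p q b A) := continuous_quadProfile hp0
  set P := quadProfile p q b A with hPdef
  set G : ℝ → ℝ := fun σ => (lineFun (2 * p - δ) P σ + lineFun (2 * p - δ) P (-σ) -
      2 * lineFun (2 * p - δ) P 0) * σ ^ (-1 - 2 * p) with hG
  have hJ := intervalIntegrable_lineKernel hδ hδα hPc hP0 hPK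
  have hQ := intervalIntegrable_lineKernelZero (α := 2 * p) (by linarith) hPc hP0 hPK
  have hsub : EqOn (fun r : ℝ => (|(-1 : ℝ)| * r ^ ((-1 : ℝ) - 1)) • G (r ^ (-1 : ℝ)))
      (fun r => lineKernel (2 * p) δ P (r + 1) + lineKernel (2 * p) δ P (-r + 1)) (Ioi 0) := by
    intro r hr
    have hr' : 0 < r := hr
    have e : r ^ ((-1 : ℝ) - 1) * (r⁻¹) ^ (-1 - 2 * p) = r ^ (2 * p - 1) := by
      rw [inv_rpow hr'.le, ← rpow_neg hr'.le, ← rpow_add hr']; congr 1; ring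
    simp only [hG, smul_eq_mul, abs_neg, abs_one, one_mul, rpow_neg_one]
    rw [← lineFun_inv_mul hr', ← lineFun_neg_inv_mul hr', lineFun_zero, ← e]
    ring
  have hI : IntegrableOn (fun r => lineKernel (2 * p) δ P (r + 1) + lineKernel (2 * p) δ P (-r + 1))
      (Ioi 0) := by
    rw [← integrableOn_congr_fun hsub measurableSet_Ioi]
    exact (integrableOn_Ioi_comp_rpow_iff G (by norm_num)).2 hInt
  have hIeq : ∫ σ in Ioi (0 : ℝ), G σ =
      ∫ r in Ioi (0 : ℝ), (lineKernel (2 * p) δ P (r + 1) + lineKernel (2 * p) δ P (-r + 1)) := by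
    rw [← setIntegral_congr_fun measurableSet_Ioi hsub]
    exact (integral_comp_rpow_Ioi G (by norm_num)).symm
  have lim1 : Tendsto (fun R => ∫ r in -R..R, lineKernel (2 * p) δ P (r + 1)) atTop
      (𝓝 (∫ σ in Ioi (0 : ℝ), G σ)) := by
    rw [hIeq]
    refine (intervalIntegral_tendsto_integral_Ioi 0 hI tendsto_id).congr fun R => ?_
    have hs : ∀ a c, IntervalIntegrable (fun r => lineKernel (2 * p) δ P (r + 1)) volume a c :=
      fun a c => by simpa using (hJ (a + 1) (c + 1)).comp_add_right 1
    have hs' : IntervalIntegrable (fun r => lineKernel (2 * p) δ P (-r + 1)) volume 0 R := by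
      simpa using (IntervalIntegrable.iff_comp_neg).1 (hs 0 (-R))
    have e := intervalIntegral.integral_comp_neg (a := 0) (b := R)
      (fun r => lineKernel (2 * p) δ P (r + 1))
    simp only [neg_zero] at e
    rw [id, intervalIntegral.integral_add (hs _ _) hs', e, add_comm]
    exact intervalIntegral.integral_add_adjacent_intervals (hs _ _) (hs _ _)
  have t1 := tendsto_lineKernel hp hδ hδα hq hPK tendsto_abs_atTop_atTop
    (tendsto_quadKernel_atTop hp0 hp)
  have t2 := tendsto_lineKernel hp hδ hδα hq hPK tendsto_abs_atBot_atTop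
    (tendsto_quadKernel_atBot hp0 hp)
  have lim2 := lim1.sub (tendsto_integral_shift_sub hJ t1 t2 1)
  have lim3 := (tendsto_integral_quadKernel (b / q) hp0 hp (div_pos hA hq)).const_mul (q ^ p)
  have lim4 := (lim2.sub lim3).sub_const (lineMain (2 * p) δ P)
  have eA : (∫ σ in Ioi (0 : ℝ), G σ) - 0 - q ^ p * (-(π / sin (π * p)) * (A / q) ^ p) =
      (∫ σ in Ioi (0 : ℝ), G σ) + π / sin (π * p) * A ^ p := by
    rw [div_rpow hA.le hq.le]
    have := (rpow_pos_of_pos hq p).ne'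
    field_simp
    ring
  rw [eA] at lim4
  refine le_of_tendsto lim4.abs ?_
  filter_upwards [eventually_ge_atTop τ⁻¹] with R hR
  refine le_trans (le_of_eq ?_)
    (abs_integral_lineKernel_sub_le hp hp0 hδ hδα hPc hP0 hPK hL hτ hτ2 hR)
  congr 2
  rw [intervalIntegral.integral_sub (hJ _ _) (hQ _ _), sub_sub_cancel]
  congr 1
  rw [← intervalIntegral.integral_const_mul]
  refine intervalIntegral.integral_congr_ae ?_
  filter_upwards [ae_mul_quadProfile_inv_sub (p := p) (b := b) (A := A) hq] with ρ hρ _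
  exact hρ.symm

end

end LineSingularIntegral

section Coordinates

variable {n : ℕ}

/-- The point with horizontal part `w` and last coordinate `s`. -/
noncomputable def pt (w : Ed n) (s : ℝ) : Ed (n + 1) :=
  WithLp.toLp 2 (Fin.snoc (α := fun _ => ℝ) w s)

/-- The horizontal part of a point. -/
noncomputable def hor (x : Ed (n + 1)) : Ed n := WithLp.toLp 2 (fun i => x i.castSucc)

@[simp] lemma pt_castSucc (w : Ed n) (s : ℝ) (i : Fin n) : pt w s i.castSucc = w i := by
  simp [pt]

@[simp] lemma pt_last (w : Ed n) (s : ℝ) : pt w s (Fin.last n) = s := by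
  simp [pt]

@[simp] lemma hor_apply (x : Ed (n + 1)) (i : Fin n) : hor x i = x i.castSucc := rfl

lemma lastCoord_eq (x : Ed (n + 1)) : lastCoord (n + 1) x = x (Fin.last n) := by
  rw [lastCoord, dif_pos (Nat.succ_pos n)]
  rfl

lemma ext_castSucc {x y : Ed (n + 1)} (h : ∀ i : Fin n, x i.castSucc = y i.castSucc)
    (hl : x (Fin.last n) = y (Fin.last n)) : x = y := by
  ext i
  exact Fin.lastCases hl h i

@[simp] lemma pt_hor (x : Ed (n + 1)) : pt (hor x) (x (Fin.last n)) = x :=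
  ext_castSucc (fun i => by simp) (by simp)

@[simp] lemma hor_pt (w : Ed n) (s : ℝ) : hor (pt w s) = w := by ext i; simp

lemma pt_add (w w' : Ed n) (s s' : ℝ) : pt w s + pt w' s' = pt (w + w') (s + s') :=
  ext_castSucc (fun i => by simp) (by simp)

lemma smul_pt (c : ℝ) (w : Ed n) (s : ℝ) : c • pt w s = pt (c • w) (c * s) :=
  ext_castSucc (fun i => by simp) (by simp)

lemma norm_pt_sq (w : Ed n) (s : ℝ) : ‖pt w s‖ ^ 2 = ‖w‖ ^ 2 + s ^ 2 := by
  rw [EuclideanSpace.norm_sq_eq, EuclideanSpace.norm_sq_eq, Fin.sum_univ_castSucc]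
  simp

lemma norm_pt (w : Ed n) (s : ℝ) : ‖pt w s‖ = √(‖w‖ ^ 2 + s ^ 2) := by
  rw [← norm_pt_sq, sqrt_sq (norm_nonneg _)]

/-- The horizontal part as a continuous linear map. -/
noncomputable def horL : Ed (n + 1) →L[ℝ] Ed n :=
  LinearMap.toContinuousLinearMap
    { toFun := hor
      map_add' := fun x y => by ext i; simp
      map_smul' := fun c x => by ext i; simp }

/-- The last coordinate as a continuous linear map. -/
noncomputable def lastL : Ed (n + 1) →L[ℝ] ℝ :=
  LinearMap.toContinuousLinearMap
    { toFun := fun x => x (Fin.last n)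
      map_add' := fun x y => by simp
      map_smul' := fun c x => by simp }

lemma continuous_hor : Continuous (hor : Ed (n + 1) → Ed n) := (horL (n := n)).continuous

lemma continuous_pt : Continuous (fun q : Ed n × ℝ => pt q.1 q.2) := by
  unfold pt
  refine (PiLp.continuous_toLp 2 _).comp (continuous_pi fun i => ?_)
  refine Fin.lastCases ?_ (fun j => ?_) i
  · simpa using continuous_snd
  · simp only [Fin.snoc_castSucc]
    fun_prop

lemma measurePreserving_pt :
    MeasurePreserving (fun q : Ed n × ℝ => pt q.1 q.2) (volume.prod volume) volume := by
  have h1 := (volume_preserving_piFinSuccAbove (fun _ : Fin (n + 1) => ℝ) (Fin.last n)).symm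
  have h2 := PiLp.volume_preserving_toLp (Fin (n + 1))
  have h3 := PiLp.volume_preserving_ofLp (Fin n)
  have h4 : MeasurePreserving (fun q : Ed n × ℝ => (q.2, WithLp.ofLp q.1))
      (volume.prod volume) (volume.prod volume) :=
    (Measure.measurePreserving_swap).comp (h3.prod (MeasurePreserving.id volume))
  have e : (fun q : Ed n × ℝ => pt q.1 q.2) = (WithLp.toLp 2 ∘
      (MeasurableEquiv.piFinSuccAbove (fun _ : Fin (n + 1) => ℝ) (Fin.last n)).symm) ∘
      fun q : Ed n × ℝ => (q.2, WithLp.ofLp q.1) := by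
    funext q
    refine ext_castSucc (fun i => ?_) ?_ <;> simp [MeasurableEquiv.piFinSuccAbove]
  rw [e]
  exact (h2.comp h1).comp h4

lemma measurableEmbedding_pt : MeasurableEmbedding (fun q : Ed n × ℝ => pt q.1 q.2) := by
  refine continuous_pt.measurableEmbedding fun q q' h => ?_
  have h1 := congrArg hor h
  have h2 := congrArg (fun x => x (Fin.last n)) h
  simp only [hor_pt, pt_last] at h1 h2
  exact Prod.ext h1 h2

lemma integral_line_decomposition {g : Ed (n + 1) → ℝ} (hm : Measurable g) (hi : Integrable g) :
    Integrable (fun q : ℝ × Ed n => |q.1| ^ n * g (pt (q.1 • q.2) q.1)) (volume.prod volume) ∧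
      ∫ x, g x = ∫ q : ℝ × Ed n, |q.1| ^ n * g (pt (q.1 • q.2) q.1) ∂(volume.prod volume) := by
  have hG : Integrable (fun q : ℝ × Ed n => g (pt q.2 q.1)) (volume.prod volume) :=
    ((measurePreserving_pt.integrable_comp_emb measurableEmbedding_pt).2 hi).swap
  have hcov : ∀ (G : Ed n → ℝ) (σ : ℝ), σ ≠ 0 →
      ∫ ζ, |σ| ^ n * G (σ • ζ) = ∫ w, G w := by
    intro G σ hσ
    rw [integral_const_mul, Measure.integral_comp_smul, finrank_euclideanSpace_fin, smul_eq_mul,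
      ← mul_assoc, abs_inv, abs_pow, mul_inv_cancel₀ (by positivity), one_mul]
  have hne : ∀ᵐ σ : ℝ, σ ≠ 0 := compl_mem_ae_iff.2 (measure_singleton (0 : ℝ))
  have hmeas : Measurable (fun q : ℝ × Ed n => |q.1| ^ n * g (pt (q.1 • q.2) q.1)) := by
    refine Measurable.mul (by fun_prop) (hm.comp ?_)
    exact continuous_pt.measurable.comp (by fun_prop :
      Measurable fun q : ℝ × Ed n => (q.1 • q.2, q.1))
  have hI : Integrable (fun q : ℝ × Ed n => |q.1| ^ n * g (pt (q.1 • q.2) q.1))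
      (volume.prod volume) := by
    rw [integrable_prod_iff hmeas.aestronglyMeasurable]
    rw [integrable_prod_iff hG.aestronglyMeasurable] at hG
    constructor
    · filter_upwards [hG.1, hne] with σ h hσ
      exact (h.comp_smul hσ).const_mul _
    · refine hG.2.congr ?_
      filter_upwards [hne] with σ hσ
      have := hcov (fun w => ‖g (pt w σ)‖) σ hσ
      rw [← this]
      congr 1
      ext ζ
      rw [norm_mul, norm_pow, norm_eq_abs, norm_eq_abs |σ|, abs_abs]
  refine ⟨hI, ?_⟩
  rw [← measurePreserving_pt.integral_comp measurableEmbedding_pt, ← integral_prod_swap]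
  simp only [Prod.fst_swap, Prod.snd_swap]
  rw [integral_prod _ hG, integral_prod _ hI]
  refine integral_congr_ae ?_
  filter_upwards [hne] with σ hσ
  exact (hcov (fun w => g (pt w σ)) σ hσ).symm

/-- Integration of an even function against `|h| ^ (-(n + 1) - α)` along lines. -/
lemma integral_even_kernel {α : ℝ} {S : Ed (n + 1) → ℝ} (hm : Measurable S)
    (he : ∀ h, S (-h) = S h)
    (hi : Integrable (fun h => S h * ‖h‖ ^ (-((n + 1 : ℕ) : ℝ) - α))) :
    (∀ᵐ ζ : Ed n, IntegrableOn (fun σ : ℝ => S (σ • pt ζ 1) * σ ^ (-1 - α)) (Ioi 0)) ∧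
    Integrable (fun ζ : Ed n => (∫ σ in Ioi (0 : ℝ), S (σ • pt ζ 1) * σ ^ (-1 - α)) *
      (1 + ‖ζ‖ ^ 2) ^ (-((n : ℝ) + 1 + α) / 2)) ∧
    ∫ h, S h * ‖h‖ ^ (-((n + 1 : ℕ) : ℝ) - α) =
      2 * ∫ ζ : Ed n, (∫ σ in Ioi (0 : ℝ), S (σ • pt ζ 1) * σ ^ (-1 - α)) *
        (1 + ‖ζ‖ ^ 2) ^ (-((n : ℝ) + 1 + α) / 2) := by
  obtain ⟨h1, h2⟩ := integral_line_decomposition (by fun_prop) hi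
  have hw : ∀ ζ : Ed n, 0 < 1 + ‖ζ‖ ^ 2 := fun ζ => by positivity
  have hwp : ∀ ζ : Ed n, 0 < (1 + ‖ζ‖ ^ 2) ^ (-((n : ℝ) + 1 + α) / 2) := fun ζ =>
    rpow_pos_of_pos (hw ζ) _
  have hcongr : ∀ᵐ q : ℝ × Ed n ∂(volume.prod volume),
      |q.1| ^ n * (S (pt (q.1 • q.2) q.1) * ‖pt (q.1 • q.2) q.1‖ ^ (-((n + 1 : ℕ) : ℝ) - α)) =
      (S (|q.1| • pt q.2 1) * |q.1| ^ (-1 - α)) *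
        (1 + ‖q.2‖ ^ 2) ^ (-((n : ℝ) + 1 + α) / 2) := by
    have hne : ∀ᵐ q : ℝ × Ed n ∂(volume.prod volume), q.1 ≠ 0 :=
      Measure.quasiMeasurePreserving_fst.ae (compl_mem_ae_iff.2 (measure_singleton (0 : ℝ)))
    filter_upwards [hne] with q hq
    have hq' : 0 < |q.1| := abs_pos.2 hq
    have e1 : pt (q.1 • q.2) q.1 = q.1 • pt q.2 1 := by rw [smul_pt, mul_one]
    have e2 : S (q.1 • pt q.2 1) = S (|q.1| • pt q.2 1) := by
      rcases abs_choice q.1 with h | h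
      · rw [h]
      · rw [h, neg_smul, he]
    have e3 : ‖pt q.2 1‖ ^ (-((n + 1 : ℕ) : ℝ) - α) =
        (1 + ‖q.2‖ ^ 2) ^ (-((n : ℝ) + 1 + α) / 2) := by
      rw [norm_pt, sqrt_eq_rpow, ← rpow_mul (by positivity), one_pow, add_comm]
      congr 1; push_cast; ring
    have e4 : |q.1| ^ n * |q.1| ^ (-((n + 1 : ℕ) : ℝ) - α) = |q.1| ^ (-1 - α) := by
      rw [← rpow_natCast, ← rpow_add hq']; congr 1; push_cast; ring
    rw [e1, e2, norm_smul, norm_eq_abs, mul_rpow hq'.le (norm_nonneg _), e3, ← e4]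
    ring
  have h1' := (h1.congr hcongr).swap
  have hpt : ∀ ζ : Ed n, ∫ σ : ℝ, (S (|σ| • pt ζ 1) * |σ| ^ (-1 - α)) *
      (1 + ‖ζ‖ ^ 2) ^ (-((n : ℝ) + 1 + α) / 2) =
      2 * ((∫ σ in Ioi (0 : ℝ), S (σ • pt ζ 1) * σ ^ (-1 - α)) *
        (1 + ‖ζ‖ ^ 2) ^ (-((n : ℝ) + 1 + α) / 2)) := fun ζ => by
    rw [integral_mul_const, integral_comp_abs (f := fun σ => S (σ • pt ζ 1) * σ ^ (-1 - α))]
    ring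
  refine ⟨?_, ?_, ?_⟩
  · filter_upwards [h1'.prod_right_ae] with ζ hζ
    have := hζ.mul_const ((1 + ‖ζ‖ ^ 2) ^ (-((n : ℝ) + 1 + α) / 2))⁻¹
    have h3 : Integrable (fun σ : ℝ => S (|σ| • pt ζ 1) * |σ| ^ (-1 - α)) := by
      refine this.congr (Eventually.of_forall fun σ => ?_)
      simp only [Function.comp, Prod.swap]
      rw [mul_assoc, mul_inv_cancel₀ (hwp ζ).ne', mul_one]
    refine h3.integrableOn.congr_fun (fun σ hσ => ?_) measurableSet_Ioi
    have : |σ| = σ := abs_of_pos hσ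
    simp only [this]
  · have := (h1'.integral_prod_left).const_mul (1 / 2)
    refine this.congr (Eventually.of_forall fun ζ => ?_)
    simp only [Function.comp, Prod.swap]
    rw [hpt]; ring
  · rw [h2, integral_congr_ae hcongr, ← integral_prod_swap]
    rw [← Function.comp_def (fun q : ℝ × Ed n => S (|q.1| • pt q.2 1) * |q.1| ^ (-1 - α) *
      (1 + ‖q.2‖ ^ 2) ^ (-((n : ℝ) + 1 + α) / 2)) Prod.swap, integral_prod _ h1',
      ← integral_const_mul]
    refine integral_congr_ae (Eventually.of_forall fun ζ => ?_)
    simp only [Function.comp, Prod.swap]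
    exact hpt ζ

end Coordinates

section Comparison

variable {n : ℕ} {α β C : ℝ} {f : Ed (n + 1) → ℝ} {x : Ed (n + 1)}

/-- The symmetric second difference of `f` at `x`. -/
noncomputable def secondDiff (f : Ed (n + 1) → ℝ) (x h : Ed (n + 1)) : ℝ :=
  f (x + h) + f (x - h) - 2 * f x

lemma secondDiff_neg (f : Ed (n + 1) → ℝ) (x h : Ed (n + 1)) :
    secondDiff f x (-h) = secondDiff f x h := by
  simp only [secondDiff, sub_neg_eq_add, ← sub_eq_add_neg]; ring

lemma measurable_secondDiff (hf : Measurable f) : Measurable (secondDiff f x) := by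
  unfold secondDiff
  exact ((hf.comp (measurable_const_add x)).add (hf.comp (measurable_const_sub x))).sub_const _

lemma exists_secondDiff_le (hf : ContDiffAt ℝ 2 f x) :
    ∃ r > 0, ∃ L ≥ 0, ∀ h, ‖h‖ < r → |secondDiff f x h| ≤ L * ‖h‖ ^ 2 := by
  obtain ⟨L, t, ht, hL⟩ := (hf.fderiv_right (m := 1) (by norm_num)).exists_lipschitzOnWith
  have hd : ∀ᶠ y in 𝓝 x, DifferentiableAt ℝ f y :=
    (hf.eventually (by simp)).mono fun y hy => hy.differentiableAt (by simp)
  obtain ⟨r, hr, hball⟩ := Metric.eventually_nhds_iff_ball.1 (hd.and ht)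
  refine ⟨r, hr, 2 * L, by positivity, fun h hh => ?_⟩
  have hmem : ∀ k : Ed (n + 1), ‖k‖ ≤ ‖h‖ → x + k ∈ ball x r ∧ x - k ∈ ball x r := fun k hk => by
    simp only [mem_ball, dist_eq_norm, add_sub_cancel_left, sub_sub_cancel_left, norm_neg, and_self]
    linarith
  have hder : ∀ k ∈ closedBall (0 : Ed (n + 1)) ‖h‖,
      HasFDerivWithinAt (fun k => f (x + k) + f (x - k))
        (fderiv ℝ f (x + k) - fderiv ℝ f (x - k)) (closedBall 0 ‖h‖) k := by
    intro k hk
    obtain ⟨h1, h2⟩ := hmem k (by simpa using hk)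
    have d1 := (hball _ h1).1.hasFDerivAt.comp k ((hasFDerivAt_id k).const_add x)
    have d2 := (hball _ h2).1.hasFDerivAt.comp k ((hasFDerivAt_id k).const_sub x)
    have := d1.add d2
    simp only [ContinuousLinearMap.comp_id, ContinuousLinearMap.comp_neg, ← sub_eq_add_neg] at this
    exact this.hasFDerivWithinAt
  have hbd : ∀ k ∈ closedBall (0 : Ed (n + 1)) ‖h‖,
      ‖fderiv ℝ f (x + k) - fderiv ℝ f (x - k)‖ ≤ 2 * L * ‖h‖ := by
    intro k hk
    have hk' : ‖k‖ ≤ ‖h‖ := by simpa using hk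
    obtain ⟨h1, h2⟩ := hmem k hk'
    refine (hL.norm_sub_le (hball _ h1).2 (hball _ h2).2).trans ?_
    have : ‖x + k - (x - k)‖ ≤ 2 * ‖h‖ := by
      rw [add_sub_sub_cancel, ← two_smul ℝ k, norm_smul, norm_two]; linarith
    calc (L : ℝ) * ‖x + k - (x - k)‖ ≤ L * (2 * ‖h‖) := by gcongr
      _ = _ := by ring
  have := Convex.norm_image_sub_le_of_norm_hasFDerivWithin_le hder hbd (convex_closedBall _ _)
    (mem_closedBall_self (norm_nonneg h)) (by simp : h ∈ closedBall (0 : Ed (n + 1)) ‖h‖)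
  simp only [add_zero, sub_zero, norm_eq_abs (_ - _ : ℝ)] at this
  rw [secondDiff, two_mul]
  refine this.trans_eq ?_
  ring

lemma measurable_kernel : Measurable (fun h : Ed (n + 1) => ‖h‖ ^ (-((n + 1 : ℕ) : ℝ) - α)) := by
  fun_prop

lemma integrableOn_far_of_growth {g : Ed (n + 1) → ℝ} (hg : Measurable g) (hC : 0 ≤ C)
    (hβ : 0 < β) (hβα : β < α) (hgC : ∀ h, |g h| ≤ C * (1 + ‖h‖ ^ β)) {ε : ℝ} (hε : 0 < ε) :
    IntegrableOn (fun h => g h * ‖h‖ ^ (-((n + 1 : ℕ) : ℝ) - α)) {h | ε < ‖h‖} := by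
  have hs : MeasurableSet {h : Ed (n + 1) | ε < ‖h‖} := measurableSet_lt measurable_const
    measurable_norm
  have hInt : Integrable (fun h : Ed (n + 1) =>
      (C * (ε ^ (-β) + 1) * (1 + ε⁻¹) ^ ((n + 1 : ℕ) + α - β)) *
        (1 + ‖h‖) ^ (-(((n + 1 : ℕ) : ℝ) + α - β))) :=
    (integrable_one_add_norm (by rw [finrank_euclideanSpace_fin]; linarith)).const_mul _
  refine hInt.integrableOn.mono' (hg.mul measurable_kernel).aestronglyMeasurable ?_
  filter_upwards [ae_restrict_mem hs] with h hh
  have hh0 : 0 < ‖h‖ := hε.trans hh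
  rw [norm_mul, norm_eq_abs, norm_of_nonneg (rpow_nonneg hh0.le _)]
  have h1 : 1 ≤ ε ^ (-β) * ‖h‖ ^ β := by
    rw [rpow_neg hε.le, inv_mul_eq_div, one_le_div (rpow_pos_of_pos hε _)]
    exact rpow_le_rpow hε.le (le_of_lt hh) hβ.le
  have h2 : |g h| ≤ C * (ε ^ (-β) + 1) * ‖h‖ ^ β := by
    refine (hgC h).trans ?_
    rw [mul_assoc]
    gcongr
    linarith
  have h3 : ‖h‖ ^ (-(((n + 1 : ℕ) : ℝ) + α - β)) ≤
      (1 + ε⁻¹) ^ (((n + 1 : ℕ) : ℝ) + α - β) * (1 + ‖h‖) ^ (-(((n + 1 : ℕ) : ℝ) + α - β)) := by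
    have hs0 : 0 ≤ (((n + 1 : ℕ) : ℝ) + α - β) := by
      have : (0 : ℝ) ≤ ((n + 1 : ℕ) : ℝ) := by positivity
      linarith
    rw [rpow_neg hh0.le, rpow_neg (by positivity), ← div_eq_mul_inv, ← div_rpow (by positivity)
      (by positivity), ← inv_rpow hh0.le]
    refine rpow_le_rpow (by positivity) ?_ hs0
    rw [le_div_iff₀ (by positivity), mul_add, mul_one, inv_mul_cancel₀ hh0.ne']
    have : ‖h‖⁻¹ ≤ ε⁻¹ := inv_anti₀ hε (le_of_lt hh)
    linarith
  have h4 : ‖h‖ ^ β * ‖h‖ ^ (-((n + 1 : ℕ) : ℝ) - α) = ‖h‖ ^ (-(((n + 1 : ℕ) : ℝ) + α - β)) := by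
    rw [← rpow_add hh0]; congr 1; ring
  calc |g h| * ‖h‖ ^ (-((n + 1 : ℕ) : ℝ) - α)
      ≤ C * (ε ^ (-β) + 1) * ‖h‖ ^ β * ‖h‖ ^ (-((n + 1 : ℕ) : ℝ) - α) := by gcongr
    _ = C * (ε ^ (-β) + 1) * ‖h‖ ^ (-(((n + 1 : ℕ) : ℝ) + α - β)) := by rw [mul_assoc, h4]
    _ ≤ _ := by
      rw [mul_assoc (C * (ε ^ (-β) + 1))]
      gcongr

lemma norm_add_rpow_le (hβ : 0 < β) (hβ2 : β < 2) (x h : Ed (n + 1)) :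
    ‖x + h‖ ^ β ≤ 4 * (‖x‖ ^ β + ‖h‖ ^ β) := by
  have h4 : (2 : ℝ) ^ β ≤ 4 := by
    calc (2 : ℝ) ^ β ≤ 2 ^ (2 : ℝ) := rpow_le_rpow_of_exponent_le one_le_two hβ2.le
      _ = 4 := by norm_num
  have hx := rpow_nonneg (norm_nonneg x) β
  have hh := rpow_nonneg (norm_nonneg h) β
  have hm : max ‖x‖ ‖h‖ ^ β ≤ ‖x‖ ^ β + ‖h‖ ^ β := by
    rcases max_choice ‖x‖ ‖h‖ with e | e <;> rw [e] <;> linarith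
  calc ‖x + h‖ ^ β ≤ (2 * max ‖x‖ ‖h‖) ^ β := by
        refine rpow_le_rpow (norm_nonneg _) ((norm_add_le _ _).trans ?_) hβ.le
        linarith [le_max_left ‖x‖ ‖h‖, le_max_right ‖x‖ ‖h‖]
    _ = 2 ^ β * max ‖x‖ ‖h‖ ^ β := mul_rpow two_pos.le (le_max_of_le_left (norm_nonneg _))
    _ ≤ 4 * (‖x‖ ^ β + ‖h‖ ^ β) := by gcongr

lemma exists_growth_translate (hC : 0 ≤ C) (hβ : 0 < β) (hβ2 : β < 2)
    (hfC : ∀ y, |f y| ≤ C * (1 + ‖y‖ ^ β)) (x : Ed (n + 1)) :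
    ∃ C' ≥ 0, ∀ h, |f (x + h) - f x| ≤ C' * (1 + ‖h‖ ^ β) := by
  refine ⟨C * (1 + 4 * ‖x‖ ^ β + 4) + |f x|, by positivity, fun h => ?_⟩
  have h1 := (hfC (x + h)).trans (mul_le_mul_of_nonneg_left
    (add_le_add_right (norm_add_rpow_le hβ hβ2 x h) 1) hC)
  have hx := rpow_nonneg (norm_nonneg x) β
  have hh := rpow_nonneg (norm_nonneg h) β
  refine (abs_sub _ _).trans ?_
  have a1 : 0 ≤ C * (‖x‖ ^ β * ‖h‖ ^ β) := by positivity
  have a2 : 0 ≤ |f x| * ‖h‖ ^ β := by positivity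
  have a3 : 0 ≤ C * ‖h‖ ^ β := by positivity
  nlinarith

lemma setIntegral_translate (f : Ed (n + 1) → ℝ) (x : Ed (n + 1)) (ε : ℝ) :
    ∫ y in {y | ε < ‖y - x‖}, (f y - f x) * ‖y - x‖ ^ (-((n + 1 : ℕ) : ℝ) - α) =
      ∫ h in {h | ε < ‖h‖}, (f (x + h) - f x) * ‖h‖ ^ (-((n + 1 : ℕ) : ℝ) - α) := by
  have := (measurePreserving_add_left (volume : Measure (Ed (n + 1))) x).setIntegral_preimage_emb
    (measurableEmbedding_addLeft x)
    (fun y => (f y - f x) * ‖y - x‖ ^ (-((n + 1 : ℕ) : ℝ) - α)) {y | ε < ‖y - x‖}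
  rw [← this]
  simp

lemma integrableOn_ball_rpow {s r : ℝ} (hs : -((n + 1 : ℕ) : ℝ) < s) :
    IntegrableOn (fun h : Ed (n + 1) => ‖h‖ ^ s) (ball 0 r) := by
  rw [integrableOn_fun_norm_addHaar volume (f := fun y : ℝ => y ^ s), finrank_euclideanSpace_fin]
  have h : IntegrableOn (fun y : ℝ => y ^ (s + n)) (Ioo 0 r) := by
    push_cast at hs
    rcases le_or_gt r 0 with hr | hr
    · rw [Ioo_eq_empty (by linarith)]; exact integrableOn_empty
    · exact (intervalIntegral.integrableOn_Ioo_rpow_iff hr).2 (by linarith)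
  refine h.congr_fun (fun y hy => ?_) measurableSet_Ioo
  simp only [Nat.add_sub_cancel, smul_eq_mul]
  rw [rpow_add hy.1, rpow_natCast, mul_comm]

lemma integrable_secondDiff (hf : Measurable f) (hC : 0 ≤ C) (hβ : 0 < β) (hβα : β < α)
    (hα : α < 2) (hfC : ∀ y, |f y| ≤ C * (1 + ‖y‖ ^ β)) (hx : ContDiffAt ℝ 2 f x) :
    Integrable (fun h => secondDiff f x h * ‖h‖ ^ (-((n + 1 : ℕ) : ℝ) - α)) := by
  obtain ⟨r, hr, L, hL, hb⟩ := exists_secondDiff_le hx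
  obtain ⟨C', hC', hb'⟩ := exists_growth_translate hC hβ (by linarith) hfC x
  have hm := (measurable_secondDiff (x := x) hf)
  have i1 : IntegrableOn (fun h => secondDiff f x h * ‖h‖ ^ (-((n + 1 : ℕ) : ℝ) - α))
      (ball 0 r) := by
    refine ((integrableOn_ball_rpow (n := n) (s := 2 - ((n + 1 : ℕ) : ℝ) - α) (r := r)
      (by linarith)).const_mul L).mono' (hm.mul measurable_kernel).aestronglyMeasurable ?_
    filter_upwards [ae_restrict_mem measurableSet_ball] with h hh
    rcases eq_or_ne h 0 with rfl | hne
    · simp only [secondDiff, add_zero, sub_zero]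
      rw [show f x + f x - 2 * f x = 0 by ring, zero_mul, norm_zero]
      exact mul_nonneg hL (rpow_nonneg (norm_nonneg _) _)
    have hh0 : 0 < ‖h‖ := norm_pos_iff.2 hne
    rw [norm_mul, norm_eq_abs, norm_of_nonneg (rpow_nonneg hh0.le _)]
    have e : ‖h‖ ^ (2 - ((n + 1 : ℕ) : ℝ) - α) = ‖h‖ ^ 2 * ‖h‖ ^ (-((n + 1 : ℕ) : ℝ) - α) := by
      rw [← rpow_natCast, ← rpow_add hh0]; congr 1; push_cast; ring
    rw [e, ← mul_assoc]
    gcongr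
    exact hb h (by simpa using hh)
  have i2 := integrableOn_far_of_growth (g := secondDiff f x) (C := 2 * C') (α := α) hm
    (by positivity)
    hβ hβα (fun h => by
      have h1 := hb' h
      have h2 := hb' (-h)
      rw [norm_neg, ← sub_eq_add_neg] at h2
      rw [secondDiff]
      rw [abs_le] at h1 h2 ⊢
      constructor <;> linarith) (ε := r / 2) (by positivity)
  rw [← integrableOn_univ]
  refine (i1.union i2).mono_set fun h _ => ?_
  rcases lt_or_ge ‖h‖ r with h' | h'
  · exact Or.inl (by simpa using h')
  · exact Or.inr (show r / 2 < ‖h‖ by linarith)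

/-- The truncated singular integrals converge to the symmetrized integral. -/
lemma tendsto_truncated (hf : Measurable f) (hC : 0 ≤ C) (hβ : 0 < β) (hβα : β < α)
    (hα : α < 2) (hfC : ∀ y, |f y| ≤ C * (1 + ‖y‖ ^ β)) (hx : ContDiffAt ℝ 2 f x) :
    Tendsto (fun ε => ∫ h in {h | ε < ‖h‖}, (f (x + h) - f x) * ‖h‖ ^ (-((n + 1 : ℕ) : ℝ) - α))
      (𝓝[>] 0) (𝓝 (1 / 2 * ∫ h, secondDiff f x h * ‖h‖ ^ (-((n + 1 : ℕ) : ℝ) - α))) := by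
  have hInt := integrable_secondDiff hf hC hβ hβα hα hfC hx
  obtain ⟨C', hC', hb'⟩ := exists_growth_translate hC hβ (by linarith) hfC x
  have hs : ∀ ε : ℝ, MeasurableSet {h : Ed (n + 1) | ε < ‖h‖} := fun ε =>
    measurableSet_lt measurable_const measurable_norm
  have lim : Tendsto (fun ε => ∫ h in {h : Ed (n + 1) | ε < ‖h‖},
      secondDiff f x h * ‖h‖ ^ (-((n + 1 : ℕ) : ℝ) - α)) (𝓝[>] 0)
      (𝓝 (∫ h, secondDiff f x h * ‖h‖ ^ (-((n + 1 : ℕ) : ℝ) - α))) := by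
    simp only [← integral_indicator (hs _)]
    refine tendsto_integral_filter_of_dominated_convergence _
      (Eventually.of_forall fun ε => (hInt.indicator (hs ε)).aestronglyMeasurable)
      (Eventually.of_forall fun ε => Eventually.of_forall fun h => norm_indicator_le_norm_self _ _)
      hInt.norm (Eventually.of_forall fun h => ?_)
    rcases eq_or_ne h 0 with rfl | hne
    · have e : secondDiff f x 0 = 0 := by simp [secondDiff]; ring
      have : ∀ ε : ℝ, indicator {h : Ed (n + 1) | ε < ‖h‖}
          (fun h => secondDiff f x h * ‖h‖ ^ (-((n + 1 : ℕ) : ℝ) - α)) 0 = 0 := fun ε => by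
        simp [indicator, e]
      simp only [this, e, zero_mul]
      exact tendsto_const_nhds
    · refine tendsto_const_nhds.congr' ?_
      filter_upwards [Ioo_mem_nhdsGT (norm_pos_iff.2 hne)] with ε hε
      rw [indicator_of_mem (show h ∈ {h : Ed (n + 1) | ε < ‖h‖} from hε.2)]
  refine (lim.const_mul (1 / 2)).congr' ?_
  filter_upwards [self_mem_nhdsWithin] with ε hε
  have i1 := integrableOn_far_of_growth (g := fun h => f (x + h) - f x) (α := α)
    ((hf.comp (measurable_const_add x)).sub_const _) hC' hβ hβα hb' hε
  have i2 := integrableOn_far_of_growth (g := fun h => f (x - h) - f x) (α := α)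
    ((hf.comp (measurable_const_sub x)).sub_const _) hC' hβ hβα
    (fun h => by simpa [← sub_eq_add_neg] using hb' (-h)) hε
  have e1 : ∫ h in {h : Ed (n + 1) | ε < ‖h‖}, (f (x - h) - f x) * ‖h‖ ^ (-((n + 1 : ℕ) : ℝ) - α) =
      ∫ h in {h : Ed (n + 1) | ε < ‖h‖}, (f (x + h) - f x) * ‖h‖ ^ (-((n + 1 : ℕ) : ℝ) - α) := by
    rw [← integral_indicator (hs ε), ← integral_indicator (hs ε), ← integral_neg_eq_self]
    congr 1
    ext h
    simp [indicator]
  have e2 : ∫ h in {h : Ed (n + 1) | ε < ‖h‖}, secondDiff f x h * ‖h‖ ^ (-((n + 1 : ℕ) : ℝ) - α) =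
      (∫ h in {h : Ed (n + 1) | ε < ‖h‖}, (f (x + h) - f x) * ‖h‖ ^ (-((n + 1 : ℕ) : ℝ) - α)) +
      ∫ h in {h : Ed (n + 1) | ε < ‖h‖}, (f (x - h) - f x) * ‖h‖ ^ (-((n + 1 : ℕ) : ℝ) - α) := by
    rw [← integral_add i1 i2]
    congr 1
    ext h
    rw [secondDiff]; ring
  rw [e2, e1]; ring

lemma fracConst_pos {d : ℕ} (hd : 0 < d) (hα0 : 0 < α) (hα : α < 2) : 0 < fracConst d α := by
  have h1 : 0 < Real.Gamma (((d : ℝ) + α) / 2) := Real.Gamma_pos_of_pos (by positivity)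
  have h2 : 0 < Real.Gamma (1 - α / 2) := Real.Gamma_pos_of_pos (by linarith)
  unfold fracConst
  positivity

/-- Comparison at a touching point. -/
lemma integral_secondDiff_nonpos_of_le {M : Ed (n + 1) → ℝ} {c CM : ℝ}
    (hf : Measurable f) (hC : 0 ≤ C) (hβ : 0 < β) (hβα : β < α)
    (hα : α < 2) (hfC : ∀ y, |f y| ≤ C * (1 + ‖y‖ ^ β)) (hx : ContDiffAt ℝ 2 f x)
    (hM : Measurable M) (hCM : 0 ≤ CM) (hMC : ∀ y, |M y| ≤ CM * (1 + ‖y‖ ^ β))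
    (hL : fracLapAt (n + 1) α M x 0) (hle : ∀ y, f y - f x ≤ c * (M y - M x)) :
    ∫ h, secondDiff f x h * ‖h‖ ^ (-((n + 1 : ℕ) : ℝ) - α) ≤ 0 := by
  have lim := tendsto_truncated hf hC hβ hβα hα hfC hx
  have hcst := fracConst_pos (d := n + 1) (Nat.succ_pos n) (hβ.trans hβα) hα
  have limM : Tendsto (fun ε => c * ∫ h in {h | ε < ‖h‖},
      (M (x + h) - M x) * ‖h‖ ^ (-((n + 1 : ℕ) : ℝ) - α)) (𝓝[>] 0) (𝓝 0) := by
    have := (hL.const_mul (fracConst (n + 1) α)⁻¹).const_mul c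
    simp only [mul_zero, setIntegral_translate, inv_mul_cancel_left₀ hcst.ne'] at this
    exact this
  obtain ⟨C₁, hC₁, hb₁⟩ := exists_growth_translate hC hβ (by linarith) hfC x
  obtain ⟨C₂, hC₂, hb₂⟩ := exists_growth_translate hCM hβ (by linarith) hMC x
  have key := le_of_tendsto_of_tendsto lim limM ?_
  · linarith
  filter_upwards [self_mem_nhdsWithin] with ε hε
  have i1 := integrableOn_far_of_growth (g := fun h => f (x + h) - f x) (α := α)
    ((hf.comp (measurable_const_add x)).sub_const _) hC₁ hβ hβα hb₁ hε
  have i2 := integrableOn_far_of_growth (g := fun h => M (x + h) - M x) (α := α)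
    ((hM.comp (measurable_const_add x)).sub_const _) hC₂ hβ hβα hb₂ hε
  rw [← integral_const_mul]
  refine integral_mono i1 (i2.const_mul c) fun h => ?_
  simp only [← mul_assoc]
  exact mul_le_mul_of_nonneg_right (hle (x + h)) (rpow_nonneg (norm_nonneg _) _)

end Comparison

section TestFunction

variable {n : ℕ} {p β τ : ℝ}

/-- The torsion-type profile on the ball of radius `τ`. -/
noncomputable def bump (p τ : ℝ) (w : Ed n) : ℝ := (max (τ ^ 2 - ‖w‖ ^ 2) 0) ^ p

/-- The homogeneous extension of degree `β` of the profile `bump p τ` on the hyperplane of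
height one. -/
noncomputable def testFn (p β τ : ℝ) (x : Ed (n + 1)) : ℝ :=
  if 0 < x (Fin.last n) then x (Fin.last n) ^ β * bump p τ ((x (Fin.last n))⁻¹ • hor x) else 0

lemma bump_nonneg (w : Ed n) : 0 ≤ bump p τ w := rpow_nonneg (le_max_right _ _) _

lemma bump_le (hp : 0 < p) (hτ : 0 < τ) (w : Ed n) : bump p τ w ≤ τ ^ (2 * p) := by
  have : τ ^ (2 * p) = (τ ^ 2) ^ p := by rw [rpow_mul hτ.le, rpow_two]
  rw [this, bump]
  gcongr
  exact max_le (by nlinarith [sq_nonneg ‖w‖]) (sq_nonneg τ)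

lemma bump_pos {w : Ed n} (hw : ‖w‖ < τ) : 0 < bump p τ w := by
  refine rpow_pos_of_pos (lt_max_of_lt_left ?_) p
  nlinarith [norm_nonneg w]

lemma bump_eq_zero (hp : 0 < p) (hτ : 0 < τ) {w : Ed n} (hw : τ ≤ ‖w‖) : bump p τ w = 0 := by
  rw [bump, max_eq_right (by nlinarith), zero_rpow hp.ne']

lemma continuous_bump (hp : 0 < p) : Continuous (bump p τ : Ed n → ℝ) := by
  unfold bump
  exact Continuous.rpow_const (by fun_prop) fun _ => Or.inr hp.le

lemma abs_rpow_sub_rpow_le {a b : ℝ} (hp0 : 0 < p) (hp : p ≤ 1) (ha : 0 ≤ a) (hb : 0 ≤ b) :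
    |a ^ p - b ^ p| ≤ |a - b| ^ p := by
  wlog h : b ≤ a generalizing a b
  · rw [abs_sub_comm, abs_sub_comm a b]
    exact this hb ha (le_of_not_ge h)
  have h1 : b ^ p ≤ a ^ p := by gcongr
  rw [abs_of_nonneg (sub_nonneg.2 h1), abs_of_nonneg (sub_nonneg.2 h)]
  have := rpow_add_le_add_rpow hb (sub_nonneg.2 h) hp0.le hp
  rw [add_sub_cancel] at this
  linarith

lemma abs_bump_sub_le (hp0 : 0 < p) (hp : p ≤ 1) (hτ : 0 < τ) (w w' : Ed n) :
    |bump p τ w - bump p τ w'| ≤ (2 * τ * ‖w - w'‖) ^ p := by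
  have e : ∀ w : Ed n, max (τ ^ 2 - ‖w‖ ^ 2) 0 = τ ^ 2 - (min ‖w‖ τ) ^ 2 := by
    intro w
    rcases le_total ‖w‖ τ with h | h
    · rw [min_eq_left h, max_eq_left]
      nlinarith [norm_nonneg w]
    · rw [min_eq_right h, max_eq_right] <;> nlinarith
  refine (abs_rpow_sub_rpow_le hp0 hp (le_max_right _ _) (le_max_right _ _)).trans ?_
  refine rpow_le_rpow (abs_nonneg _) ?_ hp0.le
  rw [e, e]
  have h1 : |min ‖w'‖ τ - min ‖w‖ τ| ≤ ‖w - w'‖ := by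
    refine (abs_min_sub_min_le_max _ _ _ _).trans ?_
    rw [sub_self, abs_zero, max_eq_left (abs_nonneg _), norm_sub_rev]
    exact abs_norm_sub_norm_le _ _
  have h2 : |min ‖w'‖ τ + min ‖w‖ τ| ≤ 2 * τ := by
    rw [abs_of_nonneg (by positivity)]
    linarith [min_le_right ‖w'‖ τ, min_le_right ‖w‖ τ]
  calc |τ ^ 2 - min ‖w‖ τ ^ 2 - (τ ^ 2 - min ‖w'‖ τ ^ 2)|
      = |min ‖w'‖ τ + min ‖w‖ τ| * |min ‖w'‖ τ - min ‖w‖ τ| := by rw [← abs_mul]; congr 1; ring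
    _ ≤ 2 * τ * ‖w - w'‖ := by gcongr

lemma quadProfile_eq_bump (z ζ : Ed n) (v : ℝ) :
    quadProfile p (τ ^ 2 - ‖z‖ ^ 2) (-⟪z, ζ - z⟫) (‖ζ - z‖ ^ 2) v = bump p τ (z + v • (ζ - z)) := by
  rw [quadProfile, bump, norm_add_sq_real, norm_smul, mul_pow, norm_eq_abs, sq_abs,
    real_inner_smul_right]
  congr 2
  ring

lemma testFn_pt {s : ℝ} (hs : 0 < s) (w : Ed n) :
    testFn p β τ (pt w s) = s ^ β * bump p τ (s⁻¹ • w) := by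
  rw [testFn, if_pos (by simpa using hs)]
  simp

lemma testFn_pt_one (w : Ed n) : testFn p β τ (pt w 1) = bump p τ w := by
  rw [testFn_pt one_pos]; simp

lemma testFn_eq_zero {x : Ed (n + 1)} (hx : x (Fin.last n) ≤ 0) : testFn p β τ x = 0 :=
  if_neg hx.not_gt

lemma testFn_nonneg (x : Ed (n + 1)) : 0 ≤ testFn p β τ x := by
  unfold testFn
  split_ifs with h
  · exact mul_nonneg (rpow_nonneg h.le _) (bump_nonneg _)
  · exact le_rfl

lemma abs_testFn_le (hp : 0 < p) (hτ : 0 < τ) (hβ : 0 < β) (x : Ed (n + 1)) :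
    |testFn p β τ x| ≤ τ ^ (2 * p) * (1 + ‖x‖ ^ β) := by
  rw [abs_of_nonneg (testFn_nonneg x)]
  have h0 : 0 ≤ τ ^ (2 * p) := by positivity
  have h1 : 0 ≤ ‖x‖ ^ β := by positivity
  unfold testFn
  split_ifs with h
  · have h2 : x (Fin.last n) ^ β ≤ ‖x‖ ^ β := by
      refine rpow_le_rpow h.le ?_ hβ.le
      exact (le_abs_self _).trans (by simpa using PiLp.norm_apply_le x (Fin.last n))
    have h3 := bump_le hp hτ ((x (Fin.last n))⁻¹ • hor x)
    have := mul_le_mul h2 h3 (bump_nonneg _) h1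
    nlinarith
  · positivity

lemma measurable_testFn (hp : 0 < p) : Measurable (testFn p β τ : Ed (n + 1) → ℝ) := by
  have hl : Measurable (fun x : Ed (n + 1) => x (Fin.last n)) := lastL.continuous.measurable
  unfold testFn
  refine Measurable.ite (measurableSet_lt measurable_const hl) ?_ measurable_const
  refine (hl.pow_const _).mul ((continuous_bump hp).measurable.comp ?_)
  exact hl.inv.smul continuous_hor.measurable

lemma contDiffAt_testFn {z : Ed n} (hz : ‖z‖ < τ) :
    ContDiffAt ℝ 2 (testFn p β τ) (pt z 1) := by
  have hl : ContDiff ℝ 2 (fun x : Ed (n + 1) => x (Fin.last n)) := (lastL (n := n)).contDiff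
  have hh : ContDiff ℝ 2 (fun x : Ed (n + 1) => hor x) := (horL (n := n)).contDiff
  have h1 : (pt z 1) (Fin.last n) ≠ 0 := by simp
  have hin : ContDiffAt ℝ 2 (fun x : Ed (n + 1) => τ ^ 2 - ‖(x (Fin.last n))⁻¹ • hor x‖ ^ 2)
      (pt z 1) :=
    contDiffAt_const.sub (((hl.contDiffAt.inv h1).smul hh.contDiffAt).norm_sq ℝ)
  have hpos : 0 < τ ^ 2 - ‖((pt z 1) (Fin.last n))⁻¹ • hor (pt z 1)‖ ^ 2 := by
    simp only [pt_last, hor_pt, inv_one, one_smul]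
    nlinarith [norm_nonneg z]
  have hmain : ContDiffAt ℝ 2 (fun x : Ed (n + 1) => x (Fin.last n) ^ β *
      (τ ^ 2 - ‖(x (Fin.last n))⁻¹ • hor x‖ ^ 2) ^ p) (pt z 1) :=
    (hl.contDiffAt.rpow_const_of_ne h1).mul (hin.rpow_const_of_ne hpos.ne')
  refine hmain.congr_of_eventuallyEq ?_
  filter_upwards [hin.continuousAt.eventually (lt_mem_nhds hpos),
    hl.continuous.continuousAt.eventually
      (lt_mem_nhds (show (0 : ℝ) < (pt z 1) (Fin.last n) by simp))]
    with x hx hx1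
  rw [testFn, if_pos hx1, bump, max_eq_left hx.le]

lemma testFn_line (z ζ : Ed n) (σ : ℝ) :
    testFn p β τ (pt z 1 + σ • pt ζ 1) =
      lineFun β (quadProfile p (τ ^ 2 - ‖z‖ ^ 2) (-⟪z, ζ - z⟫) (‖ζ - z‖ ^ 2)) σ := by
  rw [smul_pt, pt_add, mul_one, lineFun]
  split_ifs with h
  · rw [testFn_pt h, quadProfile_eq_bump]
    congr 2
    have e1 : (1 + σ)⁻¹ = 1 - σ / (1 + σ) := by field_simp; ring
    have e2 : (1 + σ)⁻¹ • (z + σ • ζ) = (1 + σ)⁻¹ • z + (σ / (1 + σ)) • ζ := by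
      rw [smul_add, smul_smul, div_eq_inv_mul]
    rw [e2, e1]
    module
  · exact testFn_eq_zero (by simpa using h)

/-- The second difference integrated along the line through `pt z 1` in direction `pt ζ 1`. -/
noncomputable def lineInt (p β τ : ℝ) (z ζ : Ed n) : ℝ :=
  ∫ σ in Ioi (0 : ℝ), secondDiff (testFn p β τ) (pt z 1) (σ • pt ζ 1) * σ ^ (-1 - 2 * p)

/-- The singular part of `lineInt`. -/
noncomputable def bumpMain (p δ τ : ℝ) (z ζ : Ed n) : ℝ :=
  ∫ ρ in (1 : ℝ)..2, (ρ - 1) ^ (δ - 1) * ρ ^ (2 * p - δ) * bump p τ (z + ρ⁻¹ • (ζ - z))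

/-- The size of the error terms. -/
noncomputable def errSize (p τ : ℝ) : ℝ :=
  τ + τ ^ (2 * p) + τ ^ (2 * p) * ∫ ρ in (2 : ℝ)..τ⁻¹, ρ ^ (2 * p - 2)

lemma errSize_integral_nonneg (hτ : 0 < τ) (hτ2 : τ ≤ 1 / 2) :
    0 ≤ ∫ ρ in (2 : ℝ)..τ⁻¹, ρ ^ (2 * p - 2) := by
  have : (2 : ℝ) ≤ τ⁻¹ := by rw [le_inv_comm₀ two_pos hτ]; linarith
  exact intervalIntegral.integral_nonneg this fun x hx => rpow_nonneg (by linarith [hx.1]) _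

lemma errSize_nonneg (hτ : 0 < τ) (hτ2 : τ ≤ 1 / 2) : 0 ≤ errSize p τ := by
  have := errSize_integral_nonneg (p := p) hτ hτ2
  unfold errSize
  positivity

lemma abs_lineInt_add_le {δ : ℝ} (hp0 : 0 < p) (hp : p < 1) (hδ : 0 < δ) (hδα : δ < 2 * p)
    (hτ : 0 < τ) (hτ2 : τ ≤ 1 / 2) {z ζ : Ed n} (hz : ‖z‖ < τ) (hne : ζ ≠ z)
    (hInt : IntegrableOn (fun σ => secondDiff (testFn p (2 * p - δ) τ) (pt z 1) (σ • pt ζ 1) *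
      σ ^ (-1 - 2 * p)) (Ioi 0)) :
    |lineInt p (2 * p - δ) τ z ζ + π / sin (π * p) * ‖ζ - z‖ ^ (2 * p) - bumpMain p δ τ z ζ| ≤
      (72 + 18 / (2 * p) + 384 / (2 - 2 * p) + 96 + 192 / (1 - p)) * errSize p τ *
        (1 + ‖ζ - z‖ ^ p) := by
  have hq : 0 < τ ^ 2 - ‖z‖ ^ 2 := by nlinarith [norm_nonneg z]
  have hA : 0 < ‖ζ - z‖ ^ 2 := by
    have := norm_pos_iff.2 (sub_ne_zero.2 hne); positivity
  set P := quadProfile p (τ ^ 2 - ‖z‖ ^ 2) (-⟪z, ζ - z⟫) (‖ζ - z‖ ^ 2) with hP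
  have hPK : ∀ v, P v ≤ τ ^ (2 * p) := fun v => by
    rw [hP, quadProfile_eq_bump]; exact bump_le hp0 hτ _
  have hL : ∀ v, |P v - P 0| ≤ (2 * τ * ‖ζ - z‖) ^ p * |v| ^ p := fun v => by
    rw [hP, quadProfile_eq_bump, quadProfile_eq_bump,
      ← mul_rpow (by positivity) (abs_nonneg v)]
    refine (abs_bump_sub_le hp0 hp.le hτ _ _).trans_eq ?_
    rw [zero_smul, add_zero, add_sub_cancel_left, norm_smul, norm_eq_abs]
    ring_nf
  have e : ∀ σ, secondDiff (testFn p (2 * p - δ) τ) (pt z 1) (σ • pt ζ 1) =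
      lineFun (2 * p - δ) P σ + lineFun (2 * p - δ) P (-σ) - 2 * lineFun (2 * p - δ) P 0 := by
    intro σ
    have e1 := testFn_line (p := p) (β := 2 * p - δ) (τ := τ) z ζ (-σ)
    have e0 := testFn_line (p := p) (β := 2 * p - δ) (τ := τ) z ζ 0
    rw [neg_smul, ← sub_eq_add_neg] at e1
    rw [zero_smul, add_zero] at e0
    rw [secondDiff, testFn_line, e1, e0]
  simp only [e] at hInt
  have key := abs_integral_lineFun_add_le hp0 hp hδ hδα hq hA hPK hL hτ hτ2 hInt
  have em : lineMain (2 * p) δ P = bumpMain p δ τ z ζ := by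
    simp only [lineMain, bumpMain, hP, quadProfile_eq_bump]
  have ei : lineInt p (2 * p - δ) τ z ζ = ∫ σ in Ioi (0 : ℝ), (lineFun (2 * p - δ) P σ +
      lineFun (2 * p - δ) P (-σ) - 2 * lineFun (2 * p - δ) P 0) * σ ^ (-1 - 2 * p) := by
    simp only [lineInt, e]
  have eA : (‖ζ - z‖ ^ 2) ^ p = ‖ζ - z‖ ^ (2 * p) := by
    rw [rpow_mul (norm_nonneg _), rpow_two]
  rw [← ei, em, eA] at key
  refine key.trans ?_
  have hI := errSize_integral_nonneg (p := p) hτ hτ2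
  set I := ∫ ρ in (2 : ℝ)..τ⁻¹, ρ ^ (2 * p - 2) with hIdef
  have hE : errSize p τ = τ + τ ^ (2 * p) + τ ^ (2 * p) * I := rfl
  have hs : 0 ≤ ‖ζ - z‖ ^ p := by positivity
  have hk : 0 < τ ^ (2 * p) := by positivity
  have hE0 := errSize_nonneg (p := p) hτ hτ2
  have ht : (2 * τ * ‖ζ - z‖) ^ p * τ ^ (1 - p) ≤ 2 * (τ * ‖ζ - z‖ ^ p) := by
    have e2 : τ ^ p * τ ^ (1 - p) = τ := by rw [← rpow_add hτ]; simp
    have h2 : (2 : ℝ) ^ p ≤ 2 := by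
      simpa using rpow_le_rpow_of_exponent_le (x := 2) (by norm_num) hp.le
    rw [mul_rpow (by positivity) (norm_nonneg _), mul_rpow two_pos.le hτ.le]
    calc (2 : ℝ) ^ p * τ ^ p * ‖ζ - z‖ ^ p * τ ^ (1 - p)
        = 2 ^ p * (τ ^ p * τ ^ (1 - p) * ‖ζ - z‖ ^ p) := by ring
      _ ≤ 2 * (τ ^ p * τ ^ (1 - p) * ‖ζ - z‖ ^ p) := by gcongr
      _ = _ := by rw [e2]
  have h1p : 0 < 1 - p := by linarith
  have c1 : 0 ≤ 72 + 18 / (2 * p) + 384 / (2 - 2 * p) := by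
    have : 0 < 2 - 2 * p := by linarith
    positivity
  have a1 : (72 + 18 / (2 * p) + 384 / (2 - 2 * p)) * τ ^ (2 * p) ≤
      (72 + 18 / (2 * p) + 384 / (2 - 2 * p)) * (errSize p τ * (1 + ‖ζ - z‖ ^ p)) := by
    gcongr
    have : τ ^ (2 * p) ≤ errSize p τ := by rw [hE]; nlinarith [mul_nonneg hk.le hI]
    nlinarith [mul_nonneg hE0 hs]
  have a2 : 96 * τ ^ (2 * p) * I ≤ 96 * (errSize p τ * (1 + ‖ζ - z‖ ^ p)) := by
    have : τ ^ (2 * p) * I ≤ errSize p τ := by rw [hE]; nlinarith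
    nlinarith [mul_nonneg hE0 hs]
  have a3 : 96 * (2 * τ * ‖ζ - z‖) ^ p * (τ ^ (1 - p) / (1 - p)) ≤
      192 / (1 - p) * (errSize p τ * (1 + ‖ζ - z‖ ^ p)) := by
    calc 96 * (2 * τ * ‖ζ - z‖) ^ p * (τ ^ (1 - p) / (1 - p))
        = 96 / (1 - p) * ((2 * τ * ‖ζ - z‖) ^ p * τ ^ (1 - p)) := by ring
      _ ≤ 96 / (1 - p) * (2 * (τ * ‖ζ - z‖ ^ p)) := by gcongr
      _ = 192 / (1 - p) * (τ * ‖ζ - z‖ ^ p) := by ring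
      _ ≤ _ := by
        gcongr
        · rw [hE]; nlinarith [mul_nonneg hk.le hI]
        · linarith
  calc _ ≤ _ := add_le_add (add_le_add a1 a2) a3
    _ = _ := by ring

end TestFunction

section DirectionalBounds

variable {n : ℕ} {p τ δ : ℝ}

/-- The weight of the direction `pt ζ 1`. -/
noncomputable def wt (p : ℝ) (ζ : Ed n) : ℝ := (1 + ‖ζ‖ ^ 2) ^ (-((n : ℝ) + 1 + 2 * p) / 2)

lemma wt_pos (ζ : Ed n) : 0 < wt p ζ := rpow_pos_of_pos (by positivity) _

lemma wt_le_one (hp : 0 < p) (ζ : Ed n) : wt p ζ ≤ 1 :=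
  rpow_le_one_of_one_le_of_nonpos (by nlinarith [sq_nonneg ‖ζ‖]) (by
    have : (0 : ℝ) ≤ n := n.cast_nonneg
    linarith)

lemma continuous_wt : Continuous (wt p : Ed n → ℝ) := by
  unfold wt
  exact Continuous.rpow_const (by fun_prop) fun ζ => Or.inl (by positivity)

lemma le_wt (hp : 0 < p) (ζ : Ed n) : 1 - ((n : ℝ) + 1 + 2 * p) / 2 * ‖ζ‖ ^ 2 ≤ wt p ζ := by
  have h0 : 0 < 1 + ‖ζ‖ ^ 2 := by positivity
  rw [wt, rpow_def_of_pos h0]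
  have h1 := log_le_sub_one_of_pos h0
  have h2 := add_one_le_exp (log (1 + ‖ζ‖ ^ 2) * (-((n : ℝ) + 1 + 2 * p) / 2))
  have h3 : (0 : ℝ) ≤ ((n : ℝ) + 1 + 2 * p) / 2 := by positivity
  nlinarith [mul_le_mul_of_nonneg_left h1 h3]

lemma integrable_one_add_mul_wt (hp : 0 < p) :
    Integrable (fun ζ : Ed n => (1 + ‖ζ‖) * wt p ζ) := by
  have hi : Integrable (fun ζ : Ed n => 2 * (1 + ‖ζ‖ ^ 2) ^ (-((n : ℝ) + 2 * p) / 2)) :=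
    (integrable_rpow_neg_one_add_norm_sq (by rw [finrank_euclideanSpace_fin]; linarith)).const_mul 2
  refine hi.mono' ((continuous_const.add continuous_norm).mul
    continuous_wt).aestronglyMeasurable (Eventually.of_forall fun ζ => ?_)
  have h0 : 0 < 1 + ‖ζ‖ ^ 2 := by positivity
  rw [norm_of_nonneg (mul_nonneg (by positivity) (wt_pos ζ).le), wt,
    show -((n : ℝ) + 2 * p) / 2 = 1 / 2 + -((n : ℝ) + 1 + 2 * p) / 2 by ring, rpow_add h0,
    ← mul_assoc,
    ← sqrt_eq_rpow]
  gcongr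
  have : (1 + ‖ζ‖) / 2 ≤ √(1 + ‖ζ‖ ^ 2) :=
    le_sqrt_of_sq_le (by nlinarith [sq_nonneg (‖ζ‖ - 1), norm_nonneg ζ])
  linarith

lemma integrable_wt (hp : 0 < p) : Integrable (wt p : Ed n → ℝ) := by
  refine (integrable_one_add_mul_wt hp).mono' continuous_wt.aestronglyMeasurable
    (Eventually.of_forall fun ζ => ?_)
  rw [norm_of_nonneg (wt_pos ζ).le]
  nlinarith [wt_pos (p := p) ζ, norm_nonneg ζ]

lemma integrable_rpow_mul_wt (hp : 0 < p) :
    Integrable (fun ζ : Ed n => ‖ζ‖ ^ (2 * p) * wt p ζ) := by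
  have hi : Integrable (fun ζ : Ed n => (1 + ‖ζ‖ ^ 2) ^ (-((n : ℝ) + 1) / 2)) :=
    integrable_rpow_neg_one_add_norm_sq (by rw [finrank_euclideanSpace_fin]; linarith)
  refine hi.mono' ((continuous_norm.rpow_const fun _ => Or.inr (by positivity)).mul
    continuous_wt).aestronglyMeasurable (Eventually.of_forall fun ζ => ?_)
  have h0 : 0 < 1 + ‖ζ‖ ^ 2 := by positivity
  rw [norm_of_nonneg (mul_nonneg (by positivity) (wt_pos ζ).le), wt,
    show -((n : ℝ) + 1) / 2 = p + -((n : ℝ) + 1 + 2 * p) / 2 by ring, rpow_add h0,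
    rpow_mul (norm_nonneg _), rpow_two]
  gcongr
  linarith

lemma abs_rpow_sub_rpow_le_of_abs_sub_le {a b q : ℝ} (hq0 : 0 < q) (hq : q < 2) (ha : 0 ≤ a)
    (hb : 0 ≤ b) (hτ : 0 < τ) (hτ1 : τ ≤ 1) (hab : |a - b| ≤ τ) :
    |a ^ q - b ^ q| ≤ 2 * (τ + τ ^ q) * (2 + b) := by
  have ht : 0 ≤ τ ^ q := by positivity
  rcases le_or_gt q 1 with h1 | h1
  · have := (abs_rpow_sub_rpow_le hq0 h1 ha hb).trans (rpow_le_rpow (abs_nonneg _) hab hq0.le)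
    nlinarith [mul_nonneg ht hb, mul_nonneg hτ.le hb]
  · have key : ∀ x y : ℝ, 0 ≤ y → y ≤ x → x ≤ 1 + b → x - y ≤ τ →
        x ^ q - y ^ q ≤ 2 * τ * (2 + b) := by
      intro x y hy hyx hx hxy
      rcases hy.eq_or_lt.imp_right (·.trans_le hyx) with h | h
      · subst h
        rcases hyx.eq_or_lt with h | h
        · rw [← h, sub_self]; positivity
        · rw [zero_rpow hq0.ne', sub_zero]
          have : x ^ q ≤ x ^ (1 : ℝ) :=
            rpow_le_rpow_of_exponent_ge h (by linarith) h1.le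
          rw [rpow_one] at this
          nlinarith
      have hb1 := one_add_mul_self_le_rpow_one_add (s := y / x - 1) (by
        have : 0 ≤ y / x := by positivity
        linarith) h1.le
      rw [add_sub_cancel, div_rpow hy h.le] at hb1
      have hxq : 0 < x ^ q := by positivity
      have e : x ^ q - y ^ q ≤ q * (x ^ (q - 1) * (x - y)) := by
        have h5 := mul_le_mul_of_nonneg_left hb1 hxq.le
        rw [mul_div_cancel₀ _ hxq.ne'] at h5
        have : x ^ q = x ^ (q - 1) * x := by
          rw [← rpow_add_one h.ne']; ring_nf
        have h6 : x ^ q * (y / x - 1) = x ^ (q - 1) * (y - x) := by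
          rw [this]; field_simp
        nlinarith
      have h7 : x ^ (q - 1) ≤ 2 + b := by
        calc x ^ (q - 1) ≤ (1 + b) ^ (q - 1) := by gcongr
          _ ≤ (1 + b) ^ (1 : ℝ) := rpow_le_rpow_of_exponent_le (by linarith) (by linarith)
          _ ≤ 2 + b := by rw [rpow_one]; linarith
      calc x ^ q - y ^ q ≤ q * (x ^ (q - 1) * (x - y)) := e
        _ ≤ 2 * ((2 + b) * τ) := by
          have : 0 ≤ x - y := by linarith
          gcongr
        _ = _ := by ring
    have hfin : |a ^ q - b ^ q| ≤ 2 * τ * (2 + b) := by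
      rw [abs_le] at hab
      rw [abs_le]
      rcases le_total a b with h | h
      · have := key b a ha h (by linarith) (by linarith)
        have h3 : a ^ q ≤ b ^ q := by gcongr
        constructor <;> nlinarith [mul_nonneg hτ.le hb]
      · have := key a b hb h (by linarith) (by linarith)
        have h3 : b ^ q ≤ a ^ q := by gcongr
        constructor <;> nlinarith [mul_nonneg hτ.le hb]
    nlinarith [mul_nonneg ht hb]

/-- A bound for `lineInt` centered at the origin. -/
lemma exists_abs_lineInt_le (n : ℕ) (hp0 : 0 < p) (hp : p < 1) :
    ∃ C > 0, ∀ δ, 0 < δ → δ < 2 * p → ∀ τ, 0 < τ → τ ≤ 1 / 2 → ∀ z ζ : Ed n, ‖z‖ < τ → ζ ≠ z →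
      IntegrableOn (fun σ => secondDiff (testFn p (2 * p - δ) τ) (pt z 1) (σ • pt ζ 1) *
        σ ^ (-1 - 2 * p)) (Ioi 0) →
      |lineInt p (2 * p - δ) τ z ζ + π / sin (π * p) * ‖ζ‖ ^ (2 * p) - bumpMain p δ τ z ζ| ≤
        C * errSize p τ * (1 + ‖ζ‖) := by
  have hsin : 0 < sin (π * p) := sin_pos_of_pos_of_lt_pi (by positivity) (by nlinarith [pi_pos])
  have hc1 : 0 < 72 + 18 / (2 * p) + 384 / (2 - 2 * p) + 96 + 192 / (1 - p) := by
    have : 0 < 2 - 2 * p := by linarith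
    have : 0 < 1 - p := by linarith
    positivity
  set C₁ := 72 + 18 / (2 * p) + 384 / (2 - 2 * p) + 96 + 192 / (1 - p)
  set k := π / sin (π * p)
  have hk : 0 < k := by positivity
  refine ⟨3 * C₁ + 4 * k, by positivity, fun δ hδ hδα τ hτ hτ2 z ζ hz hne hInt => ?_⟩
  have h1 := abs_lineInt_add_le hp0 hp hδ hδα hτ hτ2 hz hne hInt
  have hz0 := norm_nonneg z
  have hζ0 := norm_nonneg ζ
  have hzz : ‖ζ - z‖ ≤ 1 + ‖ζ‖ := (norm_sub_le _ _).trans (by linarith)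
  have h2 : |‖ζ - z‖ ^ (2 * p) - ‖ζ‖ ^ (2 * p)| ≤ 2 * (τ + τ ^ (2 * p)) * (2 + ‖ζ‖) := by
    refine abs_rpow_sub_rpow_le_of_abs_sub_le (by positivity) (by linarith) (norm_nonneg _)
      (norm_nonneg _) hτ (by linarith) ((abs_norm_sub_norm_le _ _).trans ?_)
    rw [sub_sub_cancel_left, norm_neg]; exact hz.le
  have hE : τ + τ ^ (2 * p) ≤ errSize p τ := by
    have := errSize_integral_nonneg (p := p) hτ hτ2
    unfold errSize
    have : 0 ≤ τ ^ (2 * p) * ∫ ρ in (2 : ℝ)..τ⁻¹, ρ ^ (2 * p - 2) := by positivity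
    linarith
  have hE0 := errSize_nonneg (p := p) hτ hτ2
  have h3 : ‖ζ - z‖ ^ p ≤ 2 + ‖ζ‖ := by
    calc ‖ζ - z‖ ^ p ≤ (2 + ‖ζ‖) ^ p := by gcongr; linarith
      _ ≤ (2 + ‖ζ‖) ^ (1 : ℝ) := rpow_le_rpow_of_exponent_le (by linarith) hp.le
      _ = _ := rpow_one _
  have h4 : C₁ * errSize p τ * (1 + ‖ζ - z‖ ^ p) ≤ C₁ * errSize p τ * (3 * (1 + ‖ζ‖)) := by
    gcongr; linarith
  have h5 : k * |‖ζ - z‖ ^ (2 * p) - ‖ζ‖ ^ (2 * p)| ≤ k * (2 * errSize p τ * (2 * (1 + ‖ζ‖))) := by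
    refine mul_le_mul_of_nonneg_left (h2.trans ?_) hk.le
    gcongr
    linarith
  rw [← abs_of_pos hk, ← abs_mul, abs_of_pos hk] at h5
  have e : lineInt p (2 * p - δ) τ z ζ + k * ‖ζ‖ ^ (2 * p) - bumpMain p δ τ z ζ =
      (lineInt p (2 * p - δ) τ z ζ + k * ‖ζ - z‖ ^ (2 * p) - bumpMain p δ τ z ζ) -
        k * (‖ζ - z‖ ^ (2 * p) - ‖ζ‖ ^ (2 * p)) := by ring
  rw [e]
  refine (abs_sub _ _).trans ?_
  calc _ ≤ _ := add_le_add (h1.trans h4) h5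
    _ = _ := by ring

lemma integrable_bump (hp : 0 < p) (hτ : 0 < τ) : Integrable (bump p τ : Ed n → ℝ) := by
  refine (continuous_bump hp).integrable_of_hasCompactSupport ?_
  refine HasCompactSupport.intro (isCompact_closedBall 0 τ) fun w hw => ?_
  refine bump_eq_zero hp hτ ?_
  simp only [mem_closedBall, dist_zero_right, not_le] at hw
  exact hw.le

lemma integral_bump_scale (hτ : 0 < τ) :
    ∫ w : Ed n, bump p τ w = τ ^ ((n : ℝ) + 2 * p) * ∫ w : Ed n, bump p 1 w := by
  have e : ∀ w : Ed n, bump p τ (τ • w) = τ ^ (2 * p) * bump p 1 w := fun w => by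
    rw [bump, bump, norm_smul, norm_of_nonneg hτ.le, rpow_mul hτ.le, rpow_two,
      ← mul_rpow (sq_nonneg τ) (le_max_right _ _), mul_max_of_nonneg _ _ (sq_nonneg τ)]
    congr 2 <;> ring
  have h := Measure.integral_comp_smul (volume : Measure (Ed n)) (bump p τ) τ
  simp only [e, integral_const_mul, finrank_euclideanSpace_fin, smul_eq_mul] at h
  rw [abs_of_pos (by positivity)] at h
  rw [rpow_add hτ, rpow_natCast, mul_assoc, h]
  field_simp

lemma integral_bump_dilate {ρ : ℝ} (hρ : 0 < ρ) (z : Ed n) :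
    ∫ ζ : Ed n, bump p τ (z + ρ⁻¹ • (ζ - z)) = ρ ^ n * ∫ w : Ed n, bump p τ w := by
  rw [integral_sub_right_eq_self (fun ζ => bump p τ (z + ρ⁻¹ • ζ)) z,
    Measure.integral_comp_inv_smul volume (fun ζ : Ed n => bump p τ (z + ζ)) ρ,
    integral_add_left_eq_self, finrank_euclideanSpace_fin, abs_of_pos (by positivity), smul_eq_mul]

lemma integrable_bump_dilate (hp : 0 < p) (hτ : 0 < τ) {ρ : ℝ} (hρ : 0 < ρ) (z : Ed n) :
    Integrable (fun ζ : Ed n => bump p τ (z + ρ⁻¹ • (ζ - z))) := by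
  have h1 := (integrable_bump (n := n) hp hτ).comp_add_left z
  exact (h1.comp_smul (inv_ne_zero hρ.ne')).comp_sub_right z

lemma integrable_bump_dilate_mul_wt (hp : 0 < p) (hτ : 0 < τ) {ρ : ℝ} (hρ : 0 < ρ) (z : Ed n) :
    Integrable (fun ζ : Ed n => bump p τ (z + ρ⁻¹ • (ζ - z)) * wt p ζ) := by
  refine (integrable_bump_dilate hp hτ hρ z).mono'
    (((continuous_bump hp).comp (by fun_prop)).mul continuous_wt).aestronglyMeasurable
    (Eventually.of_forall fun ζ => ?_)
  rw [norm_of_nonneg (mul_nonneg (bump_nonneg _) (wt_pos ζ).le)]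
  exact mul_le_of_le_one_right (bump_nonneg _) (wt_le_one hp ζ)

lemma integral_bump_dilate_mul_wt_le (hp : 0 < p) (hτ : 0 < τ) {ρ : ℝ} (hρ : 0 < ρ) (z : Ed n) :
    ∫ ζ : Ed n, bump p τ (z + ρ⁻¹ • (ζ - z)) * wt p ζ ≤ ρ ^ n * ∫ w : Ed n, bump p τ w := by
  rw [← integral_bump_dilate hρ z]
  exact integral_mono (integrable_bump_dilate_mul_wt hp hτ hρ z) (integrable_bump_dilate hp hτ hρ z)
    fun ζ => mul_le_of_le_one_right (bump_nonneg _) (wt_le_one hp ζ)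

lemma le_integral_bump_dilate_mul_wt (hp : 0 < p) (hτ : 0 < τ) {ρ : ℝ} (hρ1 : 1 ≤ ρ)
    (hρ2 : ρ ≤ 2) {z : Ed n} (hz : ‖z‖ < τ) :
    (1 - ((n : ℝ) + 1 + 2 * p) / 2 * (3 * τ) ^ 2) * (ρ ^ n * ∫ w : Ed n, bump p τ w) ≤
      ∫ ζ : Ed n, bump p τ (z + ρ⁻¹ • (ζ - z)) * wt p ζ := by
  have hρ : 0 < ρ := by linarith
  rw [← integral_bump_dilate hρ z, ← integral_const_mul]
  refine integral_mono ((integrable_bump_dilate hp hτ hρ z).const_mul _)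
    (integrable_bump_dilate_mul_wt hp hτ hρ z) fun ζ => ?_
  simp only
  rcases le_or_gt τ ‖z + ρ⁻¹ • (ζ - z)‖ with h | h
  · rw [bump_eq_zero hp hτ h, mul_zero, zero_mul]
  · rw [mul_comm]
    refine mul_le_mul_of_nonneg_left ?_ (bump_nonneg _)
    have h1 : ‖ζ‖ ≤ 3 * τ := by
      have e : ζ = ρ • (z + ρ⁻¹ • (ζ - z)) + (1 - ρ) • z := by
        rw [smul_add, smul_smul, mul_inv_cancel₀ hρ.ne']; module
      rw [e]
      refine (norm_add_le _ _).trans ?_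
      rw [norm_smul, norm_smul, norm_of_nonneg hρ.le, norm_of_nonpos (by linarith)]
      have a1 : ρ * ‖z + ρ⁻¹ • (ζ - z)‖ ≤ 2 * τ := by gcongr
      have a2 : -(1 - ρ) * ‖z‖ ≤ 1 * τ := by gcongr; linarith
      linarith
    refine le_trans ?_ (le_wt hp ζ)
    have : (0 : ℝ) ≤ ((n : ℝ) + 1 + 2 * p) / 2 := by positivity
    have : ‖ζ‖ ^ 2 ≤ (3 * τ) ^ 2 := by gcongr
    nlinarith

lemma one_add_pow_le {x : ℝ} (hx : 0 ≤ x) (hx1 : x ≤ 1) (N : ℕ) : (1 + x) ^ N ≤ 1 + 2 ^ N * x := by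
  suffices (1 + x) ^ N ≤ 1 + (2 ^ N - 1) * x by nlinarith
  induction N with
  | zero => simp
  | succ N ih =>
    have h2 : (1 : ℝ) ≤ 2 ^ N := one_le_pow₀ (by norm_num)
    rw [pow_succ, pow_succ]
    nlinarith [mul_le_mul_of_nonneg_right ih (by linarith : 0 ≤ 1 + x),
      mul_nonneg (mul_nonneg (sub_nonneg.2 h2) hx) (sub_nonneg.2 hx1)]

lemma integral_sub_one_rpow {c : ℝ} (hc : -1 < c) :
    IntervalIntegrable (fun ρ : ℝ => (ρ - 1) ^ c) volume 1 2 ∧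
      ∫ ρ in (1 : ℝ)..2, (ρ - 1) ^ c = 1 / (c + 1) := by
  constructor
  · have := (intervalIntegral.intervalIntegrable_rpow' (a := 0) (b := 1) hc).comp_sub_right 1
    norm_num at this
    exact this
  · rw [intervalIntegral.integral_comp_sub_right (fun ρ => ρ ^ c), integral_rpow (Or.inl hc),
      sub_self, zero_rpow (by linarith), show (2 : ℝ) - 1 = 1 by norm_num, one_rpow, sub_zero]

lemma integrable_bumpMain_prod (hp0 : 0 < p) (hp : p < 1) (hδ : 0 < δ) (hδα : δ < 2 * p)
    (hτ : 0 < τ) (z : Ed n) :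
    Integrable (fun q : ℝ × Ed n => (q.1 - 1) ^ (δ - 1) * q.1 ^ (2 * p - δ) *
      bump p τ (z + q.1⁻¹ • (q.2 - z)) * wt p q.2)
      ((volume.restrict (Ioc (1 : ℝ) 2)).prod volume) := by
  have hi : Integrable (fun q : ℝ × Ed n => (4 * τ ^ (2 * p) * (q.1 - 1) ^ (δ - 1)) * wt p q.2)
      ((volume.restrict (Ioc (1 : ℝ) 2)).prod volume) := by
    refine Integrable.mul_prod (f := fun ρ => 4 * τ ^ (2 * p) * (ρ - 1) ^ (δ - 1))
      (Integrable.const_mul ?_ _) (integrable_wt hp0)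
    exact (intervalIntegrable_iff_integrableOn_Ioc_of_le (by norm_num)).1
      (integral_sub_one_rpow (by linarith)).1
  have hae : ∀ᵐ q : ℝ × Ed n ∂((volume.restrict (Ioc (1 : ℝ) 2)).prod volume),
      q.1 ∈ Ioc (1 : ℝ) 2 :=
    Measure.quasiMeasurePreserving_fst.ae (ae_restrict_mem measurableSet_Ioc)
  refine hi.mono' ?_ ?_
  · refine Measurable.aestronglyMeasurable ?_
    have hb : Measurable (bump p τ : Ed n → ℝ) := (continuous_bump hp0).measurable
    have hw : Measurable (wt p : Ed n → ℝ) := continuous_wt.measurable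
    fun_prop
  · filter_upwards [hae] with q hq
    have h1 : 0 ≤ (q.1 - 1) ^ (δ - 1) := rpow_nonneg (by linarith [hq.1]) _
    have h2 : 0 ≤ q.1 ^ (2 * p - δ) := rpow_nonneg (by linarith [hq.1]) _
    have h3 : q.1 ^ (2 * p - δ) ≤ 4 := by
      calc q.1 ^ (2 * p - δ) ≤ (2 : ℝ) ^ (2 * p - δ) :=
            rpow_le_rpow (by linarith [hq.1]) hq.2 (by linarith)
        _ ≤ (2 : ℝ) ^ (2 : ℝ) := rpow_le_rpow_of_exponent_le (by norm_num) (by linarith)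
        _ = 4 := by norm_num
    have h4 := bump_nonneg (p := p) (τ := τ) (z + q.1⁻¹ • (q.2 - z))
    have hw := (wt_pos (p := p) q.2).le
    rw [norm_of_nonneg (by positivity)]
    refine mul_le_mul_of_nonneg_right ?_ hw
    calc (q.1 - 1) ^ (δ - 1) * q.1 ^ (2 * p - δ) * bump p τ (z + q.1⁻¹ • (q.2 - z))
        ≤ (q.1 - 1) ^ (δ - 1) * 4 * τ ^ (2 * p) := by
          gcongr
          exact bump_le hp0 hτ _
      _ = _ := by ring

lemma integrable_bumpMain_mul_wt (hp0 : 0 < p) (hp : p < 1) (hδ : 0 < δ) (hδα : δ < 2 * p)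
    (hτ : 0 < τ) (z : Ed n) : Integrable (fun ζ => bumpMain p δ τ z ζ * wt p ζ) := by
  refine (integrable_bumpMain_prod hp0 hp hδ hδα hτ z).integral_prod_right.congr
    (Eventually.of_forall fun ζ => ?_)
  simp only [integral_mul_const, bumpMain, intervalIntegral.integral_of_le one_le_two]

/-- Two-sided bounds for the integral of the singular part. -/
lemma integral_bumpMain_mul_wt_bounds (hp0 : 0 < p) (hp : p < 1) (hδ : 0 < δ) (hδα : δ < 2 * p)
    (hτ : 0 < τ) {z : Ed n} (hz : ‖z‖ < τ)
    (hsmall : 0 ≤ 1 - ((n : ℝ) + 1 + 2 * p) / 2 * (3 * τ) ^ 2) :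
    (1 - ((n : ℝ) + 1 + 2 * p) / 2 * (3 * τ) ^ 2) * (∫ w : Ed n, bump p τ w) / δ ≤
        ∫ ζ, bumpMain p δ τ z ζ * wt p ζ ∧
      ∫ ζ, bumpMain p δ τ z ζ * wt p ζ ≤ (∫ w : Ed n, bump p τ w) * (1 / δ + 2 ^ (n + 2)) := by
  set D := ∫ w : Ed n, bump p τ w
  have hD : 0 ≤ D := integral_nonneg fun w => bump_nonneg w
  have hprod := integrable_bumpMain_prod hp0 hp hδ hδα hτ z
  have e : ∫ ζ, bumpMain p δ τ z ζ * wt p ζ = ∫ ρ in (1 : ℝ)..2, (ρ - 1) ^ (δ - 1) *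
      ρ ^ (2 * p - δ) * ∫ ζ : Ed n, bump p τ (z + ρ⁻¹ • (ζ - z)) * wt p ζ := by
    rw [intervalIntegral.integral_of_le one_le_two]
    have h := integral_integral_swap (f := fun (ρ : ℝ) (ζ : Ed n) => (ρ - 1) ^ (δ - 1) *
      ρ ^ (2 * p - δ) * bump p τ (z + ρ⁻¹ • (ζ - z)) * wt p ζ) hprod
    simp only [mul_assoc, integral_const_mul] at h ⊢
    rw [h]
    simp only [bumpMain, intervalIntegral.integral_of_le one_le_two, mul_assoc,
      ← integral_mul_const]
  have hi : IntervalIntegrable (fun ρ : ℝ => (ρ - 1) ^ (δ - 1) * ρ ^ (2 * p - δ) *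
      ∫ ζ : Ed n, bump p τ (z + ρ⁻¹ • (ζ - z)) * wt p ζ) volume 1 2 := by
    rw [intervalIntegrable_iff_integrableOn_Ioc_of_le one_le_two]
    refine hprod.integral_prod_left.congr (Eventually.of_forall fun ρ => ?_)
    simp only [mul_assoc, integral_const_mul]
  obtain ⟨i1, v1⟩ := integral_sub_one_rpow (c := δ - 1) (by linarith)
  obtain ⟨i2, v2⟩ := integral_sub_one_rpow (c := δ) (by linarith)
  rw [sub_add_cancel] at v1
  rw [e]
  constructor
  · rw [div_eq_mul_one_div, ← v1, ← intervalIntegral.integral_const_mul]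
    refine intervalIntegral.integral_mono_on one_le_two (i1.const_mul _) hi fun ρ hρ => ?_
    have h1 : 0 ≤ (ρ - 1) ^ (δ - 1) := rpow_nonneg (by linarith [hρ.1]) _
    have h2 : 1 ≤ ρ ^ (2 * p - δ) := one_le_rpow hρ.1 (by linarith)
    have h3 : 1 ≤ ρ ^ n := one_le_pow₀ hρ.1
    have h4 := le_integral_bump_dilate_mul_wt hp0 hτ hρ.1 hρ.2 hz
    have h5 : (1 - ((n : ℝ) + 1 + 2 * p) / 2 * (3 * τ) ^ 2) * D ≤
        ∫ ζ : Ed n, bump p τ (z + ρ⁻¹ • (ζ - z)) * wt p ζ := by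
      refine le_trans ?_ h4
      gcongr
      exact le_mul_of_one_le_left hD h3
    rw [mul_comm, mul_assoc]
    refine mul_le_mul_of_nonneg_left ?_ h1
    have h6 : 0 ≤ (1 - ((n : ℝ) + 1 + 2 * p) / 2 * (3 * τ) ^ 2) * D := mul_nonneg hsmall hD
    nlinarith
  · have hc : D * (1 / δ + 2 ^ (n + 2)) ≥
        ∫ ρ in (1 : ℝ)..2, (D * (ρ - 1) ^ (δ - 1) + D * 2 ^ (n + 2) * (ρ - 1) ^ δ) := by
      rw [intervalIntegral.integral_add (i1.const_mul _) (i2.const_mul _),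
        intervalIntegral.integral_const_mul, intervalIntegral.integral_const_mul, v1, v2, mul_add]
      have : 1 / (δ + 1) ≤ 1 := by rw [div_le_one (by linarith)]; linarith
      have h0 : 0 ≤ D * 2 ^ (n + 2) := by positivity
      nlinarith [mul_le_mul_of_nonneg_left this h0]
    refine le_trans ?_ hc
    refine intervalIntegral.integral_mono_on_of_le_Ioo one_le_two hi
      ((i1.const_mul _).add (i2.const_mul _)) fun ρ hρ => ?_
    have hρ0 : 0 < ρ - 1 := by linarith [hρ.1]
    have h1 : 0 ≤ (ρ - 1) ^ (δ - 1) := rpow_nonneg hρ0.le _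
    have h2 : ρ ^ (2 * p - δ) ≤ ρ ^ 2 := by
      rw [← rpow_two]; exact rpow_le_rpow_of_exponent_le hρ.1.le (by linarith)
    have h4 := integral_bump_dilate_mul_wt_le (τ := τ) hp0 hτ (by linarith : 0 < ρ) z
    have h5 : 0 ≤ ∫ ζ : Ed n, bump p τ (z + ρ⁻¹ • (ζ - z)) * wt p ζ :=
      integral_nonneg fun ζ => mul_nonneg (bump_nonneg _) (wt_pos ζ).le
    have h6 : ρ ^ (n + 2) ≤ 1 + 2 ^ (n + 2) * (ρ - 1) := by
      have := one_add_pow_le hρ0.le (by linarith [hρ.2]) (n + 2)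
      rwa [add_sub_cancel] at this
    have h7 : (ρ - 1) ^ δ = (ρ - 1) ^ (δ - 1) * (ρ - 1) := by
      rw [← rpow_add_one hρ0.ne', sub_add_cancel]
    calc (ρ - 1) ^ (δ - 1) * ρ ^ (2 * p - δ) * ∫ ζ : Ed n, bump p τ (z + ρ⁻¹ • (ζ - z)) * wt p ζ
        ≤ (ρ - 1) ^ (δ - 1) * ρ ^ 2 * (ρ ^ n * D) := by gcongr
      _ = (ρ - 1) ^ (δ - 1) * ρ ^ (n + 2) * D := by ring
      _ ≤ (ρ - 1) ^ (δ - 1) * (1 + 2 ^ (n + 2) * (ρ - 1)) * D := by gcongr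
      _ = _ := by rw [h7]; ring

end DirectionalBounds

section ConeHarmonic

variable {n : ℕ} {p τ δ α β Θ : ℝ}

/-- The total mass of the normalized profile. -/
noncomputable def massConst (n : ℕ) (p : ℝ) : ℝ := ∫ w : Ed n, bump p 1 w

/-- The limiting value of the diffusion part of the operator. -/
noncomputable def diffConst (n : ℕ) (p : ℝ) : ℝ :=
  π / sin (π * p) * ∫ ζ : Ed n, ‖ζ‖ ^ (2 * p) * wt p ζ

/-- The symmetrized nonlocal operator applied to the test function at height one. -/
noncomputable def testOp (p β τ : ℝ) (z : Ed n) : ℝ :=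
  ∫ h, secondDiff (testFn p β τ) (pt z 1) h * ‖h‖ ^ (-((n + 1 : ℕ) : ℝ) - 2 * p)

lemma massConst_nonneg : 0 ≤ massConst n p := integral_nonneg fun w => bump_nonneg w

/-- Two-sided asymptotic bounds for the operator on the test functions. -/
lemma exists_testOp_bounds (hn : 1 ≤ n) (hp0 : 0 < p) (hp : p < 1) :
    ∃ C > 0, ∀ δ, 0 < δ → δ < 2 * p → ∀ τ, 0 < τ → τ ≤ 1 / 2 → C * τ ≤ 1 → ∀ z : Ed n, ‖z‖ < τ →
      testOp p (2 * p - δ) τ z ≤ 2 * (-diffConst n p + C * errSize p τ +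
        massConst n p * τ ^ ((n : ℝ) + 2 * p) / δ) ∧
      2 * (-diffConst n p - C * errSize p τ +
        (1 - C * τ) * (massConst n p * τ ^ ((n : ℝ) + 2 * p)) / δ) ≤ testOp p (2 * p - δ) τ z := by
  obtain ⟨C₁, hC₁, hline⟩ := exists_abs_lineInt_le n hp0 hp
  have : Nonempty (Fin n) := ⟨⟨0, hn⟩⟩
  set W := ∫ ζ : Ed n, (1 + ‖ζ‖) * wt p ζ with hW
  have hW0 : 0 ≤ W := integral_nonneg fun ζ => mul_nonneg (by positivity) (wt_pos ζ).le
  have hD1 := massConst_nonneg (n := n) (p := p)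
  refine ⟨C₁ * W + massConst n p * 2 ^ (n + 2) + ((n : ℝ) + 1 + 2 * p) / 2 * 9, by positivity,
    fun δ hδ hδα τ hτ hτ2 hCτ z hz => ?_⟩
  set C := C₁ * W + massConst n p * 2 ^ (n + 2) + ((n : ℝ) + 1 + 2 * p) / 2 * 9 with hC
  have hInt := integrable_secondDiff (measurable_testFn hp0)
    (by positivity : 0 ≤ τ ^ (2 * p)) (by linarith : 0 < 2 * p - δ)
    (by linarith : 2 * p - δ < 2 * p)
    (by linarith) (abs_testFn_le hp0 hτ (by linarith))
    (contDiffAt_testFn (p := p) (β := 2 * p - δ) hz)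
  obtain ⟨k1, k2, k3⟩ := integral_even_kernel (measurable_secondDiff (measurable_testFn hp0))
    (secondDiff_neg _ _) hInt
  have ib := integrable_bumpMain_mul_wt (n := n) hp0 hp hδ hδα hτ z
  have ir := (integrable_rpow_mul_wt (n := n) hp0).const_mul (π / sin (π * p))
  have iw := (integrable_one_add_mul_wt (n := n) hp0).const_mul (C₁ * errSize p τ)
  have hne : ∀ᵐ ζ : Ed n, ζ ≠ z := compl_mem_ae_iff.2 (measure_singleton z)
  have hJ : testOp p (2 * p - δ) τ z = 2 * ∫ ζ : Ed n, lineInt p (2 * p - δ) τ z ζ * wt p ζ := k3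
  have il : Integrable (fun ζ : Ed n => lineInt p (2 * p - δ) τ z ζ * wt p ζ) := k2
  have hbd : |(∫ ζ : Ed n, lineInt p (2 * p - δ) τ z ζ * wt p ζ) + diffConst n p -
      ∫ ζ, bumpMain p δ τ z ζ * wt p ζ| ≤ C₁ * errSize p τ * W := by
    rw [diffConst, hW, ← integral_const_mul, ← integral_const_mul, ← integral_add il ir,
      ← integral_sub (by exact il.add ir) ib, ← norm_eq_abs]
    refine norm_integral_le_of_norm_le iw ?_
    filter_upwards [k1, hne] with ζ h1 h2
    have h3 := hline δ hδ hδα τ hτ hτ2 z ζ hz h2 h1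
    have h4 := mul_le_mul_of_nonneg_right h3 (wt_pos (p := p) ζ).le
    rw [← abs_of_pos (wt_pos (p := p) ζ), ← abs_mul, abs_of_pos (wt_pos ζ)] at h4
    rw [norm_eq_abs]
    refine le_of_eq_of_le (congrArg abs ?_) (h4.trans_eq ?_) <;> ring
  have hττ : τ ^ 2 ≤ τ := by nlinarith
  have hE0 := errSize_nonneg (p := p) hτ hτ2
  have hn0 : (0 : ℝ) ≤ ((n : ℝ) + 1 + 2 * p) / 2 := by positivity
  have hsm : 1 - C * τ ≤ 1 - ((n : ℝ) + 1 + 2 * p) / 2 * (3 * τ) ^ 2 := by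
    have a1 : 0 ≤ C₁ * W * τ := by positivity
    have a2 : 0 ≤ massConst n p * 2 ^ (n + 2) * τ := by positivity
    have a3 := mul_le_mul_of_nonneg_left hττ hn0
    rw [hC]
    nlinarith
  obtain ⟨b1, b2⟩ := integral_bumpMain_mul_wt_bounds hp0 hp hδ hδα hτ hz (by linarith)
  have hDs : ∫ w : Ed n, bump p τ w = massConst n p * τ ^ ((n : ℝ) + 2 * p) := by
    rw [integral_bump_scale hτ, mul_comm]; rfl
  rw [hDs] at b1 b2
  have hDE : massConst n p * τ ^ ((n : ℝ) + 2 * p) ≤ massConst n p * errSize p τ := by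
    gcongr
    have h1 : τ ^ ((n : ℝ) + 2 * p) ≤ τ ^ (2 * p) :=
      rpow_le_rpow_of_exponent_ge hτ (by linarith) (by
        have : (0 : ℝ) ≤ n := n.cast_nonneg
        linarith)
    have h2 := errSize_integral_nonneg (p := p) hτ hτ2
    have h3 : 0 ≤ τ ^ (2 * p) * ∫ ρ in (2 : ℝ)..τ⁻¹, ρ ^ (2 * p - 2) := by positivity
    unfold errSize
    linarith
  rw [abs_le] at hbd
  rw [hJ]
  have c1 : 0 ≤ massConst n p * 2 ^ (n + 2) * errSize p τ := by positivity
  have c2 : 0 ≤ ((n : ℝ) + 1 + 2 * p) / 2 * 9 * errSize p τ := by positivity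
  have c3 : C * errSize p τ = C₁ * errSize p τ * W + massConst n p * 2 ^ (n + 2) * errSize p τ +
      ((n : ℝ) + 1 + 2 * p) / 2 * 9 * errSize p τ := by rw [hC]; ring
  constructor
  · have c4 : massConst n p * τ ^ ((n : ℝ) + 2 * p) * 2 ^ (n + 2) ≤
        massConst n p * errSize p τ * 2 ^ (n + 2) := by gcongr
    rw [mul_add, mul_one_div] at b2
    nlinarith [hbd.1, hbd.2]
  · have c5 : (1 - C * τ) * (massConst n p * τ ^ ((n : ℝ) + 2 * p)) / δ ≤
        (1 - ((n : ℝ) + 1 + 2 * p) / 2 * (3 * τ) ^ 2) *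
          (massConst n p * τ ^ ((n : ℝ) + 2 * p)) / δ := by gcongr
    nlinarith [hbd.1, hbd.2]

lemma mem_cone_iff (hΘ0 : 0 < Θ) (hΘ : Θ < π / 2) (w : Ed n) (s : ℝ) :
    pt w s ∈ cone (n + 1) Θ ↔ 0 < s ∧ ‖w‖ < s * tan Θ := by
  have hc : 0 < cos Θ := cos_pos_of_mem_Ioo ⟨by linarith, hΘ⟩
  have hs : 0 < sin Θ := sin_pos_of_pos_of_lt_pi hΘ0 (by linarith)
  have hsc := sin_sq_add_cos_sq Θ
  have h1 := norm_nonneg (pt w s)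
  have h2 := norm_pt_sq w s
  have hw := norm_nonneg w
  rw [cone, mem_ofPred_eq, lastCoord_eq, pt_last, tan_eq_sin_div_cos, ← mul_div_assoc,
    lt_div_iff₀ hc]
  constructor
  · intro h
    have hs0 : 0 < s := lt_of_le_of_lt (by positivity) h
    refine ⟨hs0, lt_of_pow_lt_pow_left₀ 2 (by positivity) ?_⟩
    have h3 : (‖pt w s‖ * cos Θ) ^ 2 < s ^ 2 := by gcongr
    rw [mul_pow, h2] at h3
    nlinarith
  · rintro ⟨hs0, h⟩
    refine lt_of_pow_lt_pow_left₀ 2 hs0.le ?_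
    have h3 : (‖w‖ * cos Θ) ^ 2 < (s * sin Θ) ^ 2 := by gcongr
    rw [mul_pow, h2]
    nlinarith

lemma pt_one_ne_zero (w : Ed n) : pt w 1 ≠ 0 := fun h => by
  have := congrArg (fun x => x (Fin.last n)) h
  simp at this

lemma homogeneous_pt {M : Ed (n + 1) → ℝ}
    (hh : ∀ r : ℝ, 0 < r → ∀ x, x ≠ 0 → M (r • x) = r ^ β * M x) {s : ℝ} (hs : 0 < s) (w : Ed n) :
    M (pt w s) = s ^ β * M (pt (s⁻¹ • w) 1) := by
  rw [← hh s hs _ (pt_one_ne_zero _), smul_pt, smul_smul, mul_inv_cancel₀ hs.ne', one_smul, mul_one]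

lemma exists_growth_of_homogeneous {M : Ed (n + 1) → ℝ} (hM : Continuous M)
    (hh : ∀ r : ℝ, 0 < r → ∀ x, x ≠ 0 → M (r • x) = r ^ β * M x) (h0 : M 0 = 0) :
    ∃ C ≥ 0, ∀ y, |M y| ≤ C * (1 + ‖y‖ ^ β) := by
  obtain ⟨C, hC⟩ := (isCompact_sphere (0 : Ed (n + 1)) 1).exists_bound_of_continuousOn
    hM.continuousOn
  refine ⟨max C 0, le_max_right _ _, fun y => ?_⟩
  rcases eq_or_ne y 0 with rfl | hy
  · rw [h0, abs_zero]; positivity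
  have hy' : 0 < ‖y‖ := norm_pos_iff.2 hy
  have hu : ‖‖y‖⁻¹ • y‖ = 1 := by
    rw [norm_smul, norm_inv, norm_norm, inv_mul_cancel₀ hy'.ne']
  have e : M y = ‖y‖ ^ β * M (‖y‖⁻¹ • y) := by
    rw [← hh _ hy' _ (fun h => by rw [h, norm_zero] at hu; exact zero_ne_one hu), smul_smul,
      mul_inv_cancel₀ hy'.ne', one_smul]
  rw [e, abs_mul, abs_of_nonneg (by positivity), mul_comm]
  have h1 : |M (‖y‖⁻¹ • y)| ≤ max C 0 :=
    (hC _ (by simpa using hu)).trans (le_max_left _ _)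
  calc |M (‖y‖⁻¹ • y)| * ‖y‖ ^ β ≤ max C 0 * ‖y‖ ^ β := by gcongr
    _ ≤ _ := by gcongr; linarith

lemma continuous_pt_one : Continuous (fun w : Ed n => pt w 1) :=
  continuous_pt.comp (continuous_id.prodMk continuous_const)

/-- A positive homogeneous `2 * p`-harmonic function of degree `β` on the cone of angle `Θ`. -/
structure IsConeHarmonic (p β Θ : ℝ) (M : Ed (n + 1) → ℝ) : Prop where
  continuous : Continuous M
  eq_zero : ∀ x, x ∉ cone (n + 1) Θ → M x = 0
  pos : ∀ x ∈ cone (n + 1) Θ, 0 < M x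
  homogeneous : ∀ r : ℝ, 0 < r → ∀ x, x ≠ 0 → M (r • x) = r ^ β * M x
  harmonic : ∀ x ∈ cone (n + 1) Θ, fracLapAt (n + 1) (2 * p) M x 0

lemma IsConeHarmonic.nonneg {M : Ed (n + 1) → ℝ} (hM : IsConeHarmonic p β Θ M) (x : Ed (n + 1)) :
    0 ≤ M x := by
  by_cases hx : x ∈ cone (n + 1) Θ
  · exact (hM.pos x hx).le
  · exact (hM.eq_zero x hx).ge

/-- A test function supported strictly inside the cone touches a multiple of `M` from below. -/
lemma IsConeHarmonic.exists_testOp_nonpos {M : Ed (n + 1) → ℝ} (hM : IsConeHarmonic p β Θ M)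
    (hp0 : 0 < p)
    (hp : p < 1) (hβ : 0 < β) (hβp : β < 2 * p) (hΘ0 : 0 < Θ) (hΘ : Θ < π / 2) 
    (hτ : 0 < τ) (hτT : τ < tan Θ) :
    ∃ z : Ed n, ‖z‖ < τ ∧ testOp p β τ z ≤ 0 := by
  have hMpos : ∀ w ∈ closedBall (0 : Ed n) τ, 0 < M (pt w 1) := fun w hw =>
    hM.pos _ ((mem_cone_iff hΘ0 hΘ w 1).2 ⟨one_pos, by
      rw [mem_closedBall_zero_iff] at hw; linarith⟩)
  obtain ⟨z, hz, hmax⟩ := (isCompact_closedBall (0 : Ed n) τ).exists_isMaxOn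
    (nonempty_closedBall.2 hτ.le)
    (f := fun w => bump p τ w / M (pt w 1))
    ((continuous_bump hp0).continuousOn.div (hM.continuous.comp continuous_pt_one).continuousOn
      fun w hw => (hMpos w hw).ne')
  set c := bump p τ z / M (pt z 1) with hc
  have hle : ∀ w ∈ closedBall (0 : Ed n) τ, bump p τ w ≤ c * M (pt w 1) := fun w hw => by
    rw [← div_le_iff₀ (hMpos w hw)]; exact hmax hw
  have hcpos : 0 < c := by
    have h0 : (0 : Ed n) ∈ closedBall (0 : Ed n) τ := mem_closedBall_self hτ.le
    have := hle 0 h0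
    have hb : 0 < bump p τ (0 : Ed n) := bump_pos (by simpa using hτ)
    exact pos_of_mul_pos_left (hb.trans_le this) (hMpos 0 h0).le
  have hzτ : ‖z‖ < τ := by
    by_contra h
    rw [hc, bump_eq_zero hp0 hτ (not_lt.1 h), zero_div] at hcpos
    exact hcpos.false
  have heq : testFn p β τ (pt z 1) = c * M (pt z 1) := by
    rw [testFn_pt_one, hc, div_mul_cancel₀ _ (hMpos z hz).ne']
  have hall : ∀ y, testFn p β τ y ≤ c * M y := by
    intro y
    rcases le_or_gt (y (Fin.last n)) 0 with hs | hs
    · rw [testFn_eq_zero hs]; exact mul_nonneg hcpos.le (hM.nonneg y)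
    · rw [← pt_hor y, testFn_pt hs, homogeneous_pt hM.homogeneous hs, mul_left_comm]
      refine mul_le_mul_of_nonneg_left ?_ (by positivity)
      rcases le_or_gt ‖(y (Fin.last n))⁻¹ • hor y‖ τ with h | h
      · exact hle _ (by simpa using h)
      · rw [bump_eq_zero hp0 hτ h.le]; exact mul_nonneg hcpos.le (hM.nonneg _)
  have hM0 : M 0 = 0 := hM.eq_zero 0 (by simp [cone, lastCoord_eq])
  obtain ⟨CM, hCM, hgr⟩ := exists_growth_of_homogeneous hM.continuous hM.homogeneous hM0
  refine ⟨z, hzτ, ?_⟩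
  refine integral_secondDiff_nonpos_of_le (c := c) (measurable_testFn hp0)
    (by positivity : 0 ≤ τ ^ (2 * p)) hβ hβp (by linarith) (abs_testFn_le hp0 hτ hβ)
    (contDiffAt_testFn hzτ) hM.continuous.measurable hCM hgr (hM.harmonic _ ?_) fun y => ?_
  · exact (mem_cone_iff hΘ0 hΘ z 1).2 ⟨one_pos, by linarith⟩
  · rw [heq, mul_sub]; linarith [hall y]

/-- A multiple of a test function positive on the cone touches `M` from above. -/
lemma IsConeHarmonic.exists_testOp_nonneg {M : Ed (n + 1) → ℝ} (hM : IsConeHarmonic p β Θ M)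
    (hp0 : 0 < p)
    (hp : p < 1) (hβ : 0 < β) (hβp : β < 2 * p) (hΘ0 : 0 < Θ) (hΘ : Θ < π / 2) 
    (hTτ : tan Θ < τ) :
    ∃ z : Ed n, ‖z‖ < τ ∧ 0 ≤ testOp p β τ z := by
  have hT : 0 < tan Θ := tan_pos_of_pos_of_lt_pi_div_two hΘ0 hΘ
  have hτ : 0 < τ := hT.trans hTτ
  have hbpos : ∀ w ∈ closedBall (0 : Ed n) (tan Θ), 0 < bump p τ w := fun w hw =>
    bump_pos (by rw [mem_closedBall_zero_iff] at hw; linarith)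
  obtain ⟨z, hz, hmax⟩ := (isCompact_closedBall (0 : Ed n) (tan Θ)).exists_isMaxOn
    (nonempty_closedBall.2 hT.le)
    (f := fun w => M (pt w 1) / bump p τ w)
    ((hM.continuous.comp continuous_pt_one).continuousOn.div (continuous_bump hp0).continuousOn
      fun w hw => (hbpos w hw).ne')
  set k := M (pt z 1) / bump p τ z with hk
  have hle : ∀ w ∈ closedBall (0 : Ed n) (tan Θ), M (pt w 1) ≤ k * bump p τ w := fun w hw => by
    rw [← div_le_iff₀ (hbpos w hw)]; exact hmax hw
  have hkpos : 0 < k := by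
    have h0 : (0 : Ed n) ∈ closedBall (0 : Ed n) (tan Θ) := mem_closedBall_self hT.le
    have := hle 0 h0
    have hb : 0 < M (pt (0 : Ed n) 1) :=
      hM.pos _ ((mem_cone_iff hΘ0 hΘ 0 1).2 ⟨one_pos, by simpa using hT⟩)
    exact pos_of_mul_pos_left (hb.trans_le this) (hbpos 0 h0).le
  have hzc : pt z 1 ∈ cone (n + 1) Θ := by
    by_contra h
    rw [hk, hM.eq_zero _ h, zero_div] at hkpos
    exact hkpos.false
  have hzT : ‖z‖ < tan Θ := by simpa using ((mem_cone_iff hΘ0 hΘ z 1).1 hzc).2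
  have hzτ : ‖z‖ < τ := hzT.trans hTτ
  have heq : k * testFn p β τ (pt z 1) = M (pt z 1) := by
    rw [testFn_pt_one, hk, div_mul_cancel₀ _ (hbpos z hz).ne']
  have hall : ∀ y, M y ≤ k * testFn p β τ y := by
    intro y
    by_cases hy : y ∈ cone (n + 1) Θ
    · rw [← pt_hor y] at hy ⊢
      obtain ⟨hs, hw⟩ := (mem_cone_iff hΘ0 hΘ _ _).1 hy
      rw [testFn_pt hs, homogeneous_pt hM.homogeneous hs, mul_left_comm]
      refine mul_le_mul_of_nonneg_left (hle _ ?_) (by positivity)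
      rw [mem_closedBall_zero_iff, norm_smul, norm_inv, norm_of_nonneg hs.le,
        inv_mul_le_iff₀ hs]
      exact hw.le
    · rw [hM.eq_zero y hy]; exact mul_nonneg hkpos.le (testFn_nonneg y)
  have hM0 : M 0 = 0 := hM.eq_zero 0 (by simp [cone, lastCoord_eq])
  obtain ⟨CM, hCM, hgr⟩ := exists_growth_of_homogeneous hM.continuous hM.homogeneous hM0
  refine ⟨z, hzτ, ?_⟩
  have key := integral_secondDiff_nonpos_of_le (f := fun y => -testFn p β τ y) (c := -k⁻¹)
    (measurable_testFn hp0).neg (by positivity : 0 ≤ τ ^ (2 * p)) hβ hβp (by linarith)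
    (fun y => by rw [abs_neg]; exact abs_testFn_le hp0 hτ hβ y)
    (contDiffAt_testFn hzτ).neg hM.continuous.measurable hCM hgr (hM.harmonic _ hzc) fun y => by
      have h1 := hall y
      have h2 : k⁻¹ * M y ≤ testFn p β τ y := by rwa [inv_mul_le_iff₀ hkpos]
      have h3 : k⁻¹ * M (pt z 1) = testFn p β τ (pt z 1) := by
        rw [← heq, inv_mul_cancel_left₀ hkpos.ne']
      linarith
  have e : ∀ h, secondDiff (fun y => -testFn p β τ y) (pt z 1) h =
      -secondDiff (testFn p β τ) (pt z 1) h := fun h => by simp only [secondDiff]; ring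
  simp only [e, neg_mul, integral_neg, neg_nonpos] at key
  exact key

end ConeHarmonic

section Constants

variable {n : ℕ} {p τ α Θ : ℝ}

lemma integral_radial_bump (hn : 1 ≤ n) (hp : 0 < p) :
    ∫ y in Ioi (0 : ℝ), y ^ (n - 1) • (max (1 - y ^ 2) 0) ^ p =
      1 / 2 * eulerBeta ((n : ℝ) / 2) (1 + p) := by
  have hn0 : (0 : ℝ) < n := by exact_mod_cast hn
  have hb := beta_integral_Ioo (a := (n : ℝ) / 2) (b := 1 + p) (by positivity) (by positivity)
  have h := integral_comp_rpow_Ioi_of_pos (p := 2) (g := fun x : ℝ =>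
    x ^ ((n : ℝ) / 2 - 1) * (max (1 - x) 0) ^ p) two_pos
  have e1 : ∫ y in Ioi (0 : ℝ), y ^ ((n : ℝ) / 2 - 1) * (max (1 - y) 0) ^ p =
      ∫ y in Ioo (0 : ℝ) 1, y ^ ((n : ℝ) / 2 - 1) * (1 - y) ^ (1 + p - 1) := by
    rw [← integral_indicator measurableSet_Ioi, ← integral_indicator measurableSet_Ioo]
    congr 1
    ext y
    by_cases hy : y ∈ Ioo (0 : ℝ) 1
    · rw [indicator_of_mem hy, indicator_of_mem (show y ∈ Ioi (0 : ℝ) from hy.1),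
        max_eq_left (by linarith [hy.2]), add_sub_cancel_left]
    · rw [indicator_of_notMem hy]
      by_cases h0 : y ∈ Ioi (0 : ℝ)
      · have : 1 ≤ y := by
          by_contra h'
          exact hy ⟨h0, not_le.1 h'⟩
        rw [indicator_of_mem h0, max_eq_right (by linarith), zero_rpow hp.ne', mul_zero]
      · rw [indicator_of_notMem h0]
  have e2 : ∀ y ∈ Ioi (0 : ℝ), (2 * y ^ ((2 : ℝ) - 1)) • ((y ^ (2 : ℝ)) ^ ((n : ℝ) / 2 - 1) *
      (max (1 - y ^ (2 : ℝ)) 0) ^ p) = 2 * (y ^ (n - 1) • (max (1 - y ^ 2) 0) ^ p) := by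
    intro y hy
    have hy' : (0 : ℝ) < y := hy
    have : y ^ (n - 1) = y ^ ((2 : ℝ) - 1) * (y ^ (2 : ℝ)) ^ ((n : ℝ) / 2 - 1) := by
      rw [← rpow_mul hy'.le, ← rpow_add hy', ← rpow_natCast, Nat.cast_sub hn]
      congr 1
      push_cast
      ring
    rw [smul_eq_mul, smul_eq_mul, this, rpow_two]
    ring
  rw [setIntegral_congr_fun measurableSet_Ioi e2, integral_const_mul, e1, hb.2] at h
  linarith

lemma integral_radial_wt (hn : 1 ≤ n) (hp : 0 < p) :
    ∫ y in Ioi (0 : ℝ), y ^ (n - 1) • (y ^ (2 * p) * (1 + y ^ 2) ^ (-((n : ℝ) + 1 + 2 * p) / 2)) =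
      1 / 2 * eulerBeta (((n : ℝ) + 2 * p) / 2) (1 / 2) := by
  have hn0 : (0 : ℝ) < n := by exact_mod_cast hn
  have hb := beta_integral_Ioi (a := ((n : ℝ) + 2 * p) / 2) (b := 1 / 2) (by positivity)
    (by positivity)
  have h := integral_comp_rpow_Ioi_of_pos (p := 2) (g := fun x : ℝ =>
    x ^ (((n : ℝ) + 2 * p) / 2 - 1) * (1 + x) ^ (-(((n : ℝ) + 2 * p) / 2 + 1 / 2))) two_pos
  have e2 : ∀ y ∈ Ioi (0 : ℝ), (2 * y ^ ((2 : ℝ) - 1)) • ((y ^ (2 : ℝ)) ^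
      (((n : ℝ) + 2 * p) / 2 - 1) * (1 + y ^ (2 : ℝ)) ^ (-(((n : ℝ) + 2 * p) / 2 + 1 / 2))) =
      2 * (y ^ (n - 1) • (y ^ (2 * p) * (1 + y ^ 2) ^ (-((n : ℝ) + 1 + 2 * p) / 2))) := by
    intro y hy
    have hy' : (0 : ℝ) < y := hy
    have : y ^ (n - 1) * y ^ (2 * p) =
        y ^ ((2 : ℝ) - 1) * (y ^ (2 : ℝ)) ^ (((n : ℝ) + 2 * p) / 2 - 1) := by
      rw [← rpow_mul hy'.le, ← rpow_add hy', ← rpow_natCast, ← rpow_add hy', Nat.cast_sub hn]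
      congr 1
      push_cast
      ring
    rw [smul_eq_mul, smul_eq_mul, ← mul_assoc (y ^ (n - 1)), this, rpow_two,
      show -(((n : ℝ) + 2 * p) / 2 + 1 / 2) = -((n : ℝ) + 1 + 2 * p) / 2 by ring]
    ring
  rw [setIntegral_congr_fun measurableSet_Ioi e2, integral_const_mul, hb.2] at h
  linarith

lemma diffConst_pos_and_ratio (hn : 1 ≤ n) (hp0 : 0 < p) (hp : p < 1) :
    0 < diffConst n p ∧ massConst n p = Bconst (n + 1) (2 * p) * diffConst n p := by
  have hn0 : (0 : ℝ) < n := by exact_mod_cast hn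
  have : Nonempty (Fin n) := ⟨⟨0, hn⟩⟩
  have hsin : 0 < sin (π * p) := sin_pos_of_pos_of_lt_pi (by positivity) (by nlinarith [pi_pos])
  set V : ℝ := (volume : Measure (Ed n)).real (ball 0 1) with hV
  have hV0 : 0 < V := ENNReal.toReal_pos (measure_ball_pos _ _ one_pos).ne' measure_ball_lt_top.ne
  have m1 : massConst n p = n * V * (1 / 2 * eulerBeta ((n : ℝ) / 2) (1 + p)) := by
    have := integral_fun_norm_addHaar (volume : Measure (Ed n))
      (fun y : ℝ => (max ((1 : ℝ) ^ 2 - y ^ 2) 0) ^ p)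
    rw [one_pow, finrank_euclideanSpace_fin, integral_radial_bump hn hp0, nsmul_eq_mul,
      smul_eq_mul] at this
    rw [massConst]
    simp only [bump, one_pow]
    rw [this]
    ring
  have m2 : ∫ ζ : Ed n, ‖ζ‖ ^ (2 * p) * wt p ζ =
      n * V * (1 / 2 * eulerBeta (((n : ℝ) + 2 * p) / 2) (1 / 2)) := by
    have := integral_fun_norm_addHaar (volume : Measure (Ed n))
      (fun y : ℝ => y ^ (2 * p) * (1 + y ^ 2) ^ (-((n : ℝ) + 1 + 2 * p) / 2))
    rw [finrank_euclideanSpace_fin, integral_radial_wt hn hp0, nsmul_eq_mul, smul_eq_mul] at this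
    simp only [wt]
    rw [this]
    ring
  have hB2 : 0 < eulerBeta (((n : ℝ) + 2 * p) / 2) (1 / 2) :=
    eulerBeta_pos (by positivity) (by positivity)
  refine ⟨by rw [diffConst, m2]; positivity, ?_⟩
  rw [diffConst, m1, m2, Bconst]
  have g1 : 0 < Real.Gamma (((n : ℝ) + 2 * p) / 2) := Gamma_pos_of_pos (by positivity)
  have g2 : 0 < Real.Gamma (((n : ℝ) + 2 * p) / 2 + 1 / 2) := Gamma_pos_of_pos (by positivity)
  have g3 : 0 < Real.Gamma ((n : ℝ) / 2 + (1 + p)) := Gamma_pos_of_pos (by positivity)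
  have e1 : (((n + 1 : ℕ) : ℝ) + 2 * p) / 2 = ((n : ℝ) + 2 * p) / 2 + 1 / 2 := by push_cast; ring
  have e2 : (((n + 1 : ℕ) : ℝ) - 1 + 2 * p) / 2 = ((n : ℝ) + 2 * p) / 2 := by push_cast; ring
  have e3 : (((n + 1 : ℕ) : ℝ) - 1) / 2 = (n : ℝ) / 2 := by push_cast; ring
  have e4 : π * (2 * p) / 2 = π * p := by ring
  have e5 : π ^ ((3 : ℝ) / 2) = π * √π := by
    rw [sqrt_eq_rpow, ← rpow_one_add' pi_pos.le (by norm_num)]; norm_num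
  have hsq : 0 < √π := sqrt_pos.2 pi_pos
  rw [e1, e2, e3, e4, e5, show 2 * p / 2 = p by ring]
  unfold eulerBeta
  rw [add_comm (1 + p) ((n : ℝ) / 2), Real.Gamma_one_half_eq]
  generalize sin (π * p) = S at *
  field_simp

lemma exists_errSize_le (hp0 : 0 < p) (hp : p < 1) :
    ∃ C > 0, ∀ Θ, 0 < Θ → Θ ≤ 1 / 4 → Θ ≤ C * omegaFn (2 * p) Θ ∧
      ∀ τ, Θ / 2 ≤ τ → τ ≤ 2 * Θ → errSize p τ ≤ C * omegaFn (2 * p) Θ := by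
  have h4 : ∀ τ Θ : ℝ, 0 < τ → 0 < Θ → τ ≤ 2 * Θ → τ ^ (2 * p) ≤ 4 * Θ ^ (2 * p) := by
    intro τ Θ hτ hΘ h
    calc τ ^ (2 * p) ≤ (2 * Θ) ^ (2 * p) := by gcongr
      _ = 2 ^ (2 * p) * Θ ^ (2 * p) := mul_rpow two_pos.le hΘ.le
      _ ≤ 2 ^ (2 : ℝ) * Θ ^ (2 * p) := by
        gcongr
        · norm_num
        · linarith
      _ = _ := by norm_num
  rcases lt_trichotomy (2 * p) 1 with h1 | h1 | h1
  · have hq : 0 < 1 - 2 * p := by linarith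
    refine ⟨6 + 4 / (1 - 2 * p), by positivity, fun Θ hΘ hΘ4 => ?_⟩
    have hle : Θ ≤ Θ ^ (2 * p) := by
      conv_lhs => rw [← rpow_one Θ]
      exact rpow_le_rpow_of_exponent_ge hΘ (by linarith) h1.le
    have ho : omegaFn (2 * p) Θ = Θ ^ (2 * p) := if_pos h1
    have hpos : 0 < Θ ^ (2 * p) := by positivity
    rw [ho]
    have hx : 0 ≤ 4 / (1 - 2 * p) * Θ ^ (2 * p) := by positivity
    refine ⟨by nlinarith, fun τ hτ1 hτ2 => ?_⟩
    have hτ : 0 < τ := by linarith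
    have hi : ∫ ρ in (2 : ℝ)..τ⁻¹, ρ ^ (2 * p - 2) ≤ 1 / (1 - 2 * p) := by
      refine (integral_rpow_le (by linarith) two_pos ?_).trans ?_
      · rw [le_inv_comm₀ two_pos hτ]; linarith
      · rw [show -(2 * p - 2 + 1) = 1 - 2 * p by ring]
        gcongr
        exact rpow_le_one_of_one_le_of_nonpos (by norm_num) (by linarith)
    have hm : τ ^ (2 * p) * ∫ ρ in (2 : ℝ)..τ⁻¹, ρ ^ (2 * p - 2) ≤
        4 * Θ ^ (2 * p) * (1 / (1 - 2 * p)) := by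
      have := h4 τ Θ hτ hΘ hτ2
      calc _ ≤ τ ^ (2 * p) * (1 / (1 - 2 * p)) := by gcongr
        _ ≤ _ := by gcongr
    have e : 4 * Θ ^ (2 * p) * (1 / (1 - 2 * p)) = 4 / (1 - 2 * p) * Θ ^ (2 * p) := by ring
    unfold errSize
    linarith [h4 τ Θ hτ hΘ hτ2]
  · refine ⟨8, by norm_num, fun Θ hΘ hΘ4 => ?_⟩
    have ho : omegaFn (2 * p) Θ = Θ * |log Θ| := by rw [omegaFn, if_neg h1.not_lt, if_pos h1]
    have hlog : log Θ ≤ -1 := by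
      rw [log_le_iff_le_exp hΘ, exp_neg, le_inv_comm₀ hΘ (exp_pos 1)]
      have : (4 : ℝ) ≤ Θ⁻¹ := by rw [le_inv_comm₀ (by norm_num) hΘ]; linarith
      linarith [exp_one_lt_d9]
    rw [ho, abs_of_nonpos (by linarith)]
    have hle : Θ ≤ Θ * -log Θ := by nlinarith
    refine ⟨by linarith, fun τ hτ1 hτ2 => ?_⟩
    have hτ : 0 < τ := by linarith
    have hi : ∫ ρ in (2 : ℝ)..τ⁻¹, ρ ^ (2 * p - 2) ≤ -log Θ := by
      have e : ∀ ρ : ℝ, ρ ^ (2 * p - 2) = ρ⁻¹ := fun ρ => by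
        rw [h1, show (1 : ℝ) - 2 = -1 by norm_num, rpow_neg_one]
      simp only [e]
      rw [integral_inv_of_pos two_pos (inv_pos.2 hτ), ← log_inv]
      refine log_le_log (by positivity) ?_
      rw [inv_eq_one_div, inv_eq_one_div, div_div, one_div_le_one_div (by positivity) hΘ]
      linarith
    have hm : τ ^ (2 * p) * ∫ ρ in (2 : ℝ)..τ⁻¹, ρ ^ (2 * p - 2) ≤ 2 * Θ * -log Θ := by
      rw [h1, rpow_one] at *
      have : 0 ≤ -log Θ := by linarith
      calc _ ≤ τ * -log Θ := by gcongr
        _ ≤ _ := by gcongr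
    have hk : τ ^ (2 * p) = τ := by rw [h1, rpow_one]
    unfold errSize
    rw [hk] at hm ⊢
    linarith
  · have hq : 0 < 2 * p - 1 := by linarith
    refine ⟨4 + 2 / (2 * p - 1), by positivity, fun Θ hΘ hΘ4 => ?_⟩
    have ho : omegaFn (2 * p) Θ = Θ := by rw [omegaFn, if_neg h1.not_gt, if_neg h1.ne']
    rw [ho]
    have hx : 0 ≤ 2 / (2 * p - 1) * Θ := by positivity
    refine ⟨by nlinarith, fun τ hτ1 hτ2 => ?_⟩
    have hτ : 0 < τ := by linarith
    have hle : τ ^ (2 * p) ≤ τ := by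
      conv_rhs => rw [← rpow_one τ]
      exact rpow_le_rpow_of_exponent_ge hτ (by linarith) h1.le
    have hi : ∫ ρ in (2 : ℝ)..τ⁻¹, ρ ^ (2 * p - 2) ≤ τ⁻¹ ^ (2 * p - 1) / (2 * p - 1) := by
      rw [integral_rpow (Or.inl (by linarith)), show 2 * p - 2 + 1 = 2 * p - 1 by ring]
      gcongr
      have : (0 : ℝ) ≤ 2 ^ (2 * p - 1) := by positivity
      linarith
    have hm : τ ^ (2 * p) * ∫ ρ in (2 : ℝ)..τ⁻¹, ρ ^ (2 * p - 2) ≤ 2 / (2 * p - 1) * Θ := by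
      have e : τ ^ (2 * p) * τ⁻¹ ^ (2 * p - 1) = τ := by
        rw [inv_rpow hτ.le, ← rpow_neg hτ.le, ← rpow_add hτ]
        ring_nf
        exact rpow_one τ
      calc _ ≤ τ ^ (2 * p) * (τ⁻¹ ^ (2 * p - 1) / (2 * p - 1)) := by gcongr
        _ = τ / (2 * p - 1) := by rw [← mul_div_assoc, e]
        _ ≤ 2 * Θ / (2 * p - 1) := by gcongr
        _ = _ := by ring
    unfold errSize
    linarith

lemma tendsto_omegaFn (hα : 0 < α) : Tendsto (omegaFn α) (𝓝[>] 0) (𝓝 0) := by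
  unfold omegaFn
  split_ifs
  · have : ContinuousAt (fun x : ℝ => x ^ α) 0 := continuousAt_rpow_const 0 α (Or.inr hα.le)
    simpa [ContinuousAt, zero_rpow hα.ne'] using this.tendsto.mono_left nhdsWithin_le_nhds
  · have h := (tendsto_log_mul_rpow_nhdsGT_zero one_pos).abs
    simp only [abs_zero, rpow_one] at h
    refine h.congr' ?_
    filter_upwards [self_mem_nhdsWithin] with x hx
    rw [abs_mul, abs_of_pos (show 0 < x from hx), mul_comm]
  · exact nhdsWithin_le_nhds

lemma omegaFn_nonneg (hΘ : 0 ≤ Θ) : 0 ≤ omegaFn α Θ := by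
  unfold omegaFn
  split_ifs <;> positivity

end Constants

section PowerLaw

variable {n : ℕ} {p τ α Θ : ℝ}

lemma tan_lt_mul_one_add (h0 : 0 < Θ) (h1 : Θ ≤ 1 / 4) : tan Θ < Θ * (1 + Θ) := by
  have hc := one_sub_sq_div_two_le_cos (x := Θ)
  have hs := sin_lt h0
  have hcos : 0 < cos Θ := by nlinarith
  rw [tan_eq_sin_div_cos, div_lt_iff₀ hcos]
  have : 0 ≤ Θ * (1 + Θ) := by positivity
  have h2 : Θ ≤ Θ * (1 + Θ) * (1 - Θ ^ 2 / 2) := by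
    have : Θ * (1 + Θ) * (1 - Θ ^ 2 / 2) - Θ = Θ ^ 2 * (1 - Θ / 2 - Θ ^ 2 / 2) := by ring
    nlinarith [mul_nonneg (sq_nonneg Θ) (show 0 ≤ 1 - Θ / 2 - Θ ^ 2 / 2 by nlinarith)]
  nlinarith

lemma continuous_lastCoord (d : ℕ) : Continuous (lastCoord d) := by
  unfold lastCoord
  split_ifs <;> fun_prop

lemma lastCoord_smul (d : ℕ) (r : ℝ) (x : Ed d) : lastCoord d (r • x) = r * lastCoord d x := by
  unfold lastCoord
  split_ifs <;> simp

lemma isOpen_cone (d : ℕ) (Θ : ℝ) : IsOpen (cone d Θ) :=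
  isOpen_lt (by fun_prop) (continuous_lastCoord d)

lemma zero_notMem_cone (d : ℕ) (Θ : ℝ) : (0 : Ed d) ∉ cone d Θ := by
  have h : lastCoord d (0 : Ed d) = 0 := by simpa using lastCoord_smul d 0 (0 : Ed d)
  simp [cone, h]

lemma smul_mem_cone {d : ℕ} {x : Ed d} {r : ℝ} (hr : 0 < r) (hx : x ∈ cone d Θ) :
    r • x ∈ cone d Θ := by
  have hx' : ‖x‖ * cos Θ < lastCoord d x := hx
  change ‖r • x‖ * cos Θ < lastCoord d (r • x)
  rw [lastCoord_smul, norm_smul, norm_of_nonneg hr.le, mul_assoc]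
  gcongr

lemma pos_of_le_sphere {d : ℕ} {β κ q : ℝ} {M : Ed d → ℝ} (hκ : 0 < κ)
    (hhom : ∀ r : ℝ, 0 < r → ∀ x : Ed d, x ≠ 0 → M (r • x) = r ^ β * M x)
    (hM : ∀ θ ∈ unitSphere d, κ⁻¹ * infDist θ (cone d Θ)ᶜ ^ q ≤ M θ)
    {x : Ed d} (hx : x ∈ cone d Θ) : 0 < M x := by
  have hx0 : x ≠ 0 := fun h => zero_notMem_cone d Θ (h ▸ hx)
  have hnx : 0 < ‖x‖ := norm_pos_iff.2 hx0
  have hθ : ‖x‖⁻¹ • x ∈ cone d Θ := smul_mem_cone (inv_pos.2 hnx) hx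
  have hθ1 : ‖x‖⁻¹ • x ∈ unitSphere d := by
    rw [unitSphere, mem_sphere_zero_iff_norm, norm_smul, norm_inv, norm_norm,
      inv_mul_cancel₀ hnx.ne']
  have hd : 0 < infDist (‖x‖⁻¹ • x) (cone d Θ)ᶜ :=
    ((isOpen_cone d Θ).isClosed_compl.notMem_iff_infDist_pos ⟨0, zero_notMem_cone d Θ⟩).1
      (fun h => h hθ)
  have hpos : 0 < M (‖x‖⁻¹ • x) := lt_of_lt_of_le (by positivity) (hM _ hθ1)
  rw [hhom _ (inv_pos.2 hnx) x hx0] at hpos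
  exact (mul_pos_iff_of_pos_left (by positivity)).1 hpos

lemma abs_div_sub_le {c X δ s : ℝ} (hc : 0 < c) (hX : 0 ≤ X) (hs : 0 ≤ s) (hs1 : s ≤ 1)
    (hsc : s ≤ c / 2) (hδ : 0 < δ) (h1 : δ * (c - s) ≤ X * (1 + s))
    (h2 : X * (1 - s) ≤ δ * (c + s)) : |X / c - δ| ≤ s * ((1 + 4 / c) / c) * X := by
  have h3 : δ ≤ 4 / c * X := by
    rw [div_mul_eq_mul_div, le_div_iff₀ hc]
    nlinarith [mul_le_mul_of_nonneg_left hsc hδ.le, mul_le_mul_of_nonneg_left hs1 hX]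
  have h4 := mul_le_mul_of_nonneg_left h3 hs
  have e : X / c - δ = (X - δ * c) / c := by field_simp
  rw [e, abs_div, abs_of_pos hc, div_le_iff₀ hc,
    show s * ((1 + 4 / c) / c) * X * c = s * X + s * (4 / c * X) by field_simp, abs_le]
  constructor <;> nlinarith

lemma rpow_mul_one_add_le (hΘ : 0 < Θ) (hΘ1 : Θ ≤ 1) {m : ℝ} {N : ℕ} (hm : m ≤ N) :
    (Θ * (1 + Θ)) ^ m ≤ Θ ^ m * (1 + 2 ^ N * Θ) := by
  rw [mul_rpow hΘ.le (by positivity)]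
  gcongr
  calc (1 + Θ) ^ m ≤ (1 + Θ) ^ (N : ℝ) := rpow_le_rpow_of_exponent_le (by linarith) hm
    _ = (1 + Θ) ^ N := rpow_natCast _ _
    _ ≤ _ := one_add_pow_le hΘ.le hΘ1 N

lemma le_rpow_mul_one_sub (hΘ : 0 < Θ) (hΘ1 : Θ < 1) {m : ℝ} {N : ℕ} (hm : m ≤ N) :
    Θ ^ m * (1 - N * Θ) ≤ (Θ * (1 - Θ)) ^ m := by
  rw [mul_rpow hΘ.le (by linarith)]
  gcongr
  calc 1 - N * Θ ≤ (1 - Θ) ^ N := by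
        have := one_add_mul_le_pow (a := -Θ) (by linarith) N
        rw [← sub_eq_add_neg] at this
        linarith
    _ = (1 - Θ) ^ (N : ℝ) := (rpow_natCast _ _).symm
    _ ≤ _ := rpow_le_rpow_of_exponent_ge (by linarith) (by linarith) hm

theorem exists_power_law (hn : 1 ≤ n) (hp0 : 0 < p) (hp : p < 1) :
    ∃ C > 0, ∃ Θ₀ ∈ Ioo (0 : ℝ) π, ∀ Θ ∈ Ioo (0 : ℝ) Θ₀, ∀ β ∈ Ioo (0 : ℝ) (2 * p),
      ∀ M : Ed (n + 1) → ℝ, IsConeHarmonic p β Θ M →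
        |β - 2 * p + Bconst (n + 1) (2 * p) * Θ ^ ((n : ℝ) + 2 * p)| ≤
          C * Θ ^ ((n : ℝ) + 2 * p) * omegaFn (2 * p) Θ := by
  obtain ⟨C, hC, hbd⟩ := exists_testOp_bounds hn hp0 hp
  obtain ⟨C₂, hC₂, herr⟩ := exists_errSize_le hp0 hp
  obtain ⟨hc, hratio⟩ := diffConst_pos_and_ratio hn hp0 hp
  set c := diffConst n p
  set D := massConst n p
  have hD : 0 ≤ D := massConst_nonneg
  set K : ℝ := (2 * C + (n + 2 : ℕ) + 2 ^ (n + 2)) * C₂ with hKdef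
  have hK : 0 < K := by positivity
  have htend := (tendsto_omegaFn (α := 2 * p) (by linarith)).const_mul K
  rw [mul_zero] at htend
  have hev : ∀ᶠ Θ in 𝓝[>] (0 : ℝ), K * omegaFn (2 * p) Θ < min 1 (c / 2) ∧
      Θ < min (1 / 4) (1 / (2 * C)) :=
    (htend.eventually_lt_const (by positivity)).and
      (nhdsWithin_le_nhds (eventually_lt_nhds (by positivity)))
  obtain ⟨Θ₀, hΘ₀, hev⟩ := mem_nhdsGT_iff_exists_Ioo_subset.1 hev
  refine ⟨K * ((1 + 4 / c) / c) * (D + 1), by positivity, min Θ₀ 1,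
    ⟨lt_min hΘ₀ one_pos, (min_le_right _ _).trans_lt (by linarith [pi_gt_three])⟩,
    fun Θ hΘ β hβ M hM => ?_⟩
  obtain ⟨hs, hΘb⟩ := hev ⟨hΘ.1, hΘ.2.trans_le (min_le_left _ _)⟩
  rw [lt_min_iff] at hs hΘb
  obtain ⟨hΘ0, -⟩ := hΘ
  obtain ⟨hs1, hsc⟩ := hs
  obtain ⟨hΘ4, hΘC⟩ := hΘb
  have hΘC' : 2 * (C * Θ) ≤ 1 := by
    rw [lt_div_iff₀ (by positivity)] at hΘC
    linarith
  have hπ : Θ < π / 2 := by linarith [pi_gt_three]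
  have hω := omegaFn_nonneg (α := 2 * p) hΘ0.le
  obtain ⟨hΘω, herr⟩ := herr Θ hΘ0 hΘ4.le
  set ω := omegaFn (2 * p) Θ
  set m : ℝ := (n : ℝ) + 2 * p with hm
  have hmN : m ≤ (n + 2 : ℕ) := by push_cast; linarith
  set δ := 2 * p - β with hδ
  have hδ0 : 0 < δ := by linarith [hβ.2]
  have hβδ : β = 2 * p - δ := by ring
  have hX : 0 ≤ D * Θ ^ m := by positivity
  have hC₂ω : 0 ≤ C₂ * ω := by positivity
  have hKω : K * ω = 2 * C * (C₂ * ω) + (n + 2 : ℕ) * (C₂ * ω) + 2 ^ (n + 2) * (C₂ * ω) := by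
    rw [hKdef]; ring
  have hNω : 0 ≤ ((n + 2 : ℕ) : ℝ) * (C₂ * ω) := by positivity
  have hPω : 0 ≤ (2 : ℝ) ^ (n + 2) * (C₂ * ω) := by positivity
  have hCω : 0 ≤ C * (C₂ * ω) := by positivity
  have hsq : Θ * Θ ≤ 1 / 4 * Θ := by gcongr
  have hsq0 : 0 < Θ * Θ := mul_pos hΘ0 hΘ0
  have hCsq := mul_le_mul_of_nonneg_left hsq hC.le
  have hCsq0 : 0 < C * (Θ * Θ) := mul_pos hC hsq0
  have hCΘ : 0 < C * Θ := mul_pos hC hΘ0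
  have houter : δ * (c - K * ω) ≤ D * Θ ^ m * (1 + K * ω) := by
    have hτ0 : 0 < Θ * (1 + Θ) := by positivity
    obtain ⟨z, hz, hz0⟩ := hM.exists_testOp_nonneg hp0 hp hβ.1 hβ.2 hΘ0 hπ
      (tan_lt_mul_one_add hΘ0 hΘ4.le)
    have hb := (hbd δ hδ0 (by linarith [hβ.1]) _ hτ0 (by linarith) (by linarith) z hz).1
    rw [← hβδ] at hb
    have hE := mul_le_mul_of_nonneg_left (herr (Θ * (1 + Θ)) (by linarith) (by linarith)) hC.le
    have h1 : c - K * ω ≤ D * (Θ * (1 + Θ)) ^ m / δ := by linarith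
    rw [le_div_iff₀ hδ0] at h1
    have h2 := mul_le_mul_of_nonneg_left (rpow_mul_one_add_le hΘ0 (by linarith) hmN) hD
    have h3 : (2 : ℝ) ^ (n + 2) * Θ ≤ K * ω := by
      have := mul_le_mul_of_nonneg_left hΘω (show (0 : ℝ) ≤ 2 ^ (n + 2) by positivity)
      linarith
    have h4 := mul_le_mul_of_nonneg_left h3 hX
    linarith
  have hinner : D * Θ ^ m * (1 - K * ω) ≤ δ * (c + K * ω) := by
    have hτ0 : 0 < Θ * (1 - Θ) := by linarith
    obtain ⟨z, hz, hz0⟩ := hM.exists_testOp_nonpos hp0 hp hβ.1 hβ.2 hΘ0 hπ hτ0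
      (lt_of_le_of_lt (by linarith) (lt_tan hΘ0 hπ))
    have hb := (hbd δ hδ0 (by linarith [hβ.1]) _ hτ0 (by linarith) (by linarith) z hz).2
    rw [← hβδ] at hb
    have hE := mul_le_mul_of_nonneg_left (herr (Θ * (1 - Θ)) (by linarith) (by linarith)) hC.le
    have h1 : (1 - C * (Θ * (1 - Θ))) * (D * (Θ * (1 - Θ)) ^ m) / δ ≤ c + K * ω := by linarith
    rw [div_le_iff₀ hδ0] at h1
    have h2 := mul_le_mul_of_nonneg_left (le_rpow_mul_one_sub hΘ0 (by linarith) hmN) hD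
    have h3 : 1 - C * Θ ≤ 1 - C * (Θ * (1 - Θ)) := by linarith
    have h5 : (1 - C * Θ) * (D * (Θ ^ m * (1 - (n + 2 : ℕ) * Θ))) ≤
        (1 - C * (Θ * (1 - Θ))) * (D * (Θ * (1 - Θ)) ^ m) :=
      (mul_le_mul_of_nonneg_left h2 (by linarith)).trans
        (mul_le_mul_of_nonneg_right h3 (by positivity))
    have h6 : 1 - K * ω ≤ (1 - C * Θ) * (1 - (n + 2 : ℕ) * Θ) := by
      have a1 := mul_le_mul_of_nonneg_left hΘω hC.le
      have a2 := mul_le_mul_of_nonneg_left hΘω (show (0 : ℝ) ≤ (n + 2 : ℕ) by positivity)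
      have a3 : 0 ≤ C * Θ * ((n + 2 : ℕ) * Θ) := by positivity
      linarith
    have h7 := mul_le_mul_of_nonneg_left h6 hX
    linarith
  have hfin := abs_div_sub_le hc hX (by positivity) hs1.le hsc.le hδ0 houter hinner
  have hBe : β - 2 * p + Bconst (n + 1) (2 * p) * Θ ^ m = D * Θ ^ m / c - δ := by
    rw [hratio, hδ]
    field_simp
    ring
  rw [hBe]
  refine hfin.trans ?_
  have : 0 ≤ K * ω * ((1 + 4 / c) / c) * Θ ^ m := by positivity
  linarith

end PowerLaw

end NarrowCone

/-- power law for the homogeneity degree of the Martin kernel in narrow cones. -/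
theorem martin_kernel_power_law (d : ℕ) (hd : 2 ≤ d) (α : ℝ) (hα : 0 < α) (hα2 : α < 2) :
    ∃ C : ℝ, 0 < C ∧ ∃ Θ₀ ∈ Set.Ioo (0 : ℝ) π, ∀ Θ ∈ Set.Ioo (0 : ℝ) Θ₀,
      ∀ β ∈ Set.Ioo (0 : ℝ) α, ∀ κ : ℝ, 1 ≤ κ →
        ∀ M : Ed d → ℝ, Continuous M → (∀ x, 0 ≤ M x) →
          (∀ x, x ∉ cone d Θ → M x = 0) →
          ContDiffOn ℝ 2 M (cone d Θ) →
          (∀ r : ℝ, 0 < r → ∀ x : Ed d, x ≠ 0 → M (r • x) = r ^ β * M x) →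
          (∀ x ∈ cone d Θ, fracLapAt d α M x 0) →
          (∀ θ ∈ unitSphere d,
            κ⁻¹ * Metric.infDist θ (cone d Θ)ᶜ ^ (α / 2) ≤ M θ ∧
              M θ ≤ κ * Metric.infDist θ (cone d Θ)ᶜ ^ (α / 2)) →
          |β - α + Bconst d α * Θ ^ ((d : ℝ) - 1 + α)| ≤
            C * Θ ^ ((d : ℝ) - 1 + α) * omegaFn α Θ := by
  obtain ⟨n, rfl⟩ : ∃ n, d = n + 1 := ⟨d - 1, by omega⟩
  obtain ⟨p, rfl⟩ : ∃ p, α = 2 * p := ⟨α / 2, by ring⟩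
  obtain ⟨C, hC, Θ₀, hΘ₀, h⟩ :=
    NarrowCone.exists_power_law (n := n) (p := p) (by omega) (by linarith) (by linarith)
  refine ⟨C, hC, Θ₀, hΘ₀, fun Θ hΘ β hβ κ hκ M hcont _ hzero _ hhom hharm hsphere => ?_⟩
  have e : (((n + 1 : ℕ) : ℝ) - 1 + 2 * p) = (n : ℝ) + 2 * p := by push_cast; ring
  rw [e]
  exact h Θ hΘ β hβ M
    { continuous := hcont
      eq_zero := hzero
      pos := fun x hx => NarrowCone.pos_of_le_sphere (by linarith) hhom
        (fun θ hθ => (hsphere θ hθ).1) hx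
      homogeneous := hhom
      harmonic := hharm }
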